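/- The Riemann hypothesis fails if and only if there exist positive integers k, l, m, n satisfying all of: (i) n ≥ 600; (ii) for every y < n, (y + 1) divides m; (iii) m > 0 and for every y < m, either y = 0 or there exists x < n with (x + 1) not dividing y (so that m = lcm(1, …, n)); (iv) explog(m − 1, l); (v) explog(n − 1, k); (vi) (l − n)² > 4·n·k⁴. -/

import Mathlib

/-- The Riemann hypothesis: every nontrivial zero of ζ (a zero with real part strictly
between 0 and 1) has real part 1/2. -/
def RH : Prop := ∀ s : ℂ, riemannZeta s = 0 → 0 < s.re → s.re < 1 → s.re = 1 / 2

/-- explog(a, b) holds iff there is a positive integer x with x > b + 1 and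
(1 + 1/x)^(x·b) ≤ a + 1 < 4·(1 + 1/x)^(x·b), the powers taken in ℝ. -/
def explog (a b : ℕ) : Prop :=
  ∃ x : ℕ, b + 1 < x ∧ (1 + 1 / (x : ℝ)) ^ (x * b) ≤ (a : ℝ) + 1 ∧
    (a : ℝ) + 1 < 4 * (1 + 1 / (x : ℝ)) ^ (x * b)

/-!
The least common multiple of `1, …, n` is `exp (ψ n)`, and `explog` pins down a logarithm up to an
additive `log 4`. Hence condition (vi) says that `|ψ n - n|` exceeds `2 √n log² n` up to these
roundings, and the theorem amounts to two facts about `ψ`.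

If `|ψ n - n| ≤ 1 + 2 √n log² n` for all large `n`, the Mellin transform of the error term continues
`ζ'/ζ`, hence `ξ'/ξ`, holomorphically to `Re s > 1/2`; an entire function satisfying `ξ' = K ξ` with
`K` holomorphic cannot vanish there, and the functional equation does the rest.

Conversely, under the Riemann hypothesis `Re (ξ'/ξ)` is nonnegative on `Re s > 1/2`. This gives a
Poisson representation with a positive boundary density on each line `Re s = b > 1/2`, and from it a
smoothed explicit formula. Positivity replaces counting zeros: averages of the density against
dyadic Poisson kernels are values of `Re (ξ'/ξ)` at real points, which are bounded by means of
`ζ'/ζ ≤ 0` for `s > 1`. Summing over the dyadic scales, and comparing `ψ` with increments of its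
smoothed version, yields `|ψ x - x| < √x log² x` for all `x ≥ 600`.
-/

open Complex Filter Topology MeasureTheory ComplexConjugate

/-! ### The digamma function and the trivial zeros -/

lemma isOpen_re_pos : IsOpen {s : ℂ | 0 < s.re} :=
  isOpen_lt continuous_const continuous_re

lemma add_natCast_ne_zero_of_re_pos {s : ℂ} (hs : 0 < s.re) (n : ℕ) : s + n ≠ 0 :=
  ne_zero_of_re_pos (by rw [add_re, natCast_re]; positivity)

lemma natCast_add_one_le_norm_add {s : ℂ} (hs : 0 ≤ s.re) (n : ℕ) :
    (n : ℝ) + 1 ≤ ‖s + (n + 1)‖ := by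
  refine le_trans ?_ (re_le_norm _)
  simpa using hs

lemma differentiableAt_Gamma_of_re_pos {s : ℂ} (hs : 0 < s.re) : DifferentiableAt ℂ Gamma s :=
  differentiableAt_Gamma s fun m h ↦ add_natCast_ne_zero_of_re_pos hs m (by rw [h, neg_add_cancel])

lemma differentiableAt_digamma_of_re_pos {s : ℂ} (hs : 0 < s.re) :
    DifferentiableAt ℂ digamma s := by
  have hΓ : DifferentiableOn ℂ Gamma {z | 0 < z.re} := fun z hz ↦
    (differentiableAt_Gamma_of_re_pos hz).differentiableWithinAt
  have hmem := isOpen_re_pos.mem_nhds hs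
  exact ((hΓ.deriv isOpen_re_pos).differentiableAt hmem).div (hΓ.differentiableAt hmem)
    (Gamma_ne_zero_of_re_pos hs)

lemma summable_one_div_natCast_add_one_rpow {p : ℝ} (hp : 1 < p) :
    Summable fun n : ℕ ↦ 1 / ((n : ℝ) + 1) ^ p := by
  simpa using (summable_nat_add_iff (f := fun n : ℕ ↦ 1 / (n : ℝ) ^ p) 1).2
    (Real.summable_one_div_nat_rpow.2 hp)

lemma summable_one_div_natCast_add_one_sq : Summable fun n : ℕ ↦ 1 / ((n : ℝ) + 1) ^ 2 := by
  simpa using summable_one_div_natCast_add_one_rpow one_lt_two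

/-- The logarithm of the `n`-th factor `(1 + s / (n + 1))⁻¹ * exp (s / (n + 1))` in the Weierstrass
product of `Gamma (s + 1) * exp (γ * s)`. -/
noncomputable def logWeierstrassFactor (n : ℕ) (s : ℂ) : ℂ :=
  s / (n + 1) - log (1 + s / (n + 1))

lemma one_add_div_mem_slitPlane {s : ℂ} (hs : 0 < s.re) (n : ℕ) :
    1 + s / (n + 1) ∈ slitPlane := by
  left
  have hre : (1 + s / (n + 1)).re = 1 + s.re / (n + 1) := by
    rw [add_re, one_re]
    exact_mod_cast congrArg (1 + ·) (div_ofReal_re s (n + 1))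
  rw [hre]
  positivity

lemma hasDerivAt_logWeierstrassFactor {s : ℂ} (hs : 0 < s.re) (n : ℕ) :
    HasDerivAt (logWeierstrassFactor n) (1 / (n + 1) - 1 / (s + (n + 1))) s := by
  have hn : (n : ℂ) + 1 ≠ 0 := n.cast_add_one_ne_zero
  have hsl := one_add_div_mem_slitPlane hs n
  have hlin : HasDerivAt (fun z : ℂ ↦ z / ((n : ℂ) + 1)) (1 / ((n : ℂ) + 1)) s :=
    (hasDerivAt_id s).div_const _
  refine (hlin.sub ((hlin.const_add 1).clog hsl)).congr_deriv ?_
  rw [one_add_div hn, div_div_div_cancel_right₀ hn, add_comm _ s]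

lemma one_div_sub_one_div_add {s : ℂ} (hs : 0 < s.re) (n : ℕ) :
    (1 : ℂ) / (n + 1) - 1 / (s + (n + 1)) = s / ((n + 1) * (s + (n + 1))) := by
  have hn : (n : ℂ) + 1 ≠ 0 := n.cast_add_one_ne_zero
  have hsn : s + (n + 1) ≠ 0 := by exact_mod_cast add_natCast_ne_zero_of_re_pos hs (n + 1)
  rw [div_sub_div _ _ hn hsn]
  ring

lemma norm_one_div_sub_one_div_add_le {s : ℂ} (hs : 0 < s.re) {R : ℝ} (hR : ‖s‖ ≤ R) (n : ℕ) :
    ‖(1 : ℂ) / (n + 1) - 1 / (s + (n + 1))‖ ≤ R * (1 / ((n : ℝ) + 1) ^ 2) := by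
  have hnorm : ‖(n : ℂ) + 1‖ = n + 1 := by exact_mod_cast norm_natCast (n + 1)
  have hR0 : 0 ≤ R := (norm_nonneg s).trans hR
  rw [one_div_sub_one_div_add hs, norm_div, norm_mul, hnorm, mul_one_div, sq]
  gcongr
  exact natCast_add_one_le_norm_add hs.le n

lemma summable_one_div_sub_one_div_add {s : ℂ} (hs : 0 < s.re) :
    Summable fun n : ℕ ↦ (1 : ℂ) / (n + 1) - 1 / (s + (n + 1)) :=
  (summable_one_div_natCast_add_one_sq.mul_left ‖s‖).of_norm_bounded
    (norm_one_div_sub_one_div_add_le hs le_rfl)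

lemma summable_logWeierstrassFactor (s : ℂ) : Summable fun n ↦ logWeierstrassFactor n s := by
  refine (summable_one_div_natCast_add_one_sq.mul_left (‖s‖ ^ 2)).of_norm_bounded_eventually_nat ?_
  filter_upwards [eventually_ge_atTop ⌈2 * ‖s‖⌉₊] with n hn
  have hn1 : (0 : ℝ) < n + 1 := by positivity
  have hnorm : ‖s / (n + 1)‖ = ‖s‖ / (n + 1) := by
    rw [norm_div]
    exact_mod_cast congrArg (‖s‖ / ·) (norm_natCast (n + 1))
  have hhalf : ‖s / (n + 1)‖ ≤ 1 / 2 := by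
    rw [hnorm, div_le_iff₀ hn1]
    linarith [Nat.ceil_le.1 hn]
  rw [logWeierstrassFactor, norm_sub_rev]
  calc _ ≤ ‖s / (n + 1)‖ ^ 2 * (1 - ‖s / (n + 1)‖)⁻¹ / 2 :=
        norm_log_one_add_sub_self_le (by linarith)
    _ ≤ ‖s / (n + 1)‖ ^ 2 * (1 - 1 / 2)⁻¹ / 2 := by gcongr
    _ = ‖s‖ ^ 2 * (1 / ((n : ℝ) + 1) ^ 2) := by rw [hnorm, div_pow]; ring

lemma hasDerivAt_tsum_logWeierstrassFactor {s : ℂ} (hs : 0 < s.re) :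
    HasDerivAt (fun z ↦ ∑' n, logWeierstrassFactor n z)
      (∑' n : ℕ, (1 / ((n : ℂ) + 1) - 1 / (s + (n + 1)))) s := by
  have hmem : s ∈ {z : ℂ | 0 < z.re} ∩ Metric.ball 0 (‖s‖ + 1) := ⟨hs, by simp⟩
  refine hasDerivAt_tsum_of_isPreconnected (summable_one_div_natCast_add_one_sq.mul_left (‖s‖ + 1))
    (isOpen_re_pos.inter Metric.isOpen_ball)
    ((convex_halfSpace_re_gt 0).inter (convex_ball 0 _)).isPreconnected
    (fun n z hz ↦ hasDerivAt_logWeierstrassFactor hz.1 n)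
    (fun n z hz ↦ norm_one_div_sub_one_div_add_le hz.1 ?_ n) hmem
    (summable_logWeierstrassFactor s) hmem
  exact (mem_ball_zero_iff.1 hz.2).le

lemma prod_add_natCast_eq (s : ℂ) (N : ℕ) :
    ∏ j ∈ Finset.range (N + 1), (s + j) =
      s * N.factorial * ∏ n ∈ Finset.range N, (1 + s / ((n : ℂ) + 1)) := by
  induction N with
  | zero => simp
  | succ N ih =>
    have hN : (N : ℂ) + 1 ≠ 0 := N.cast_add_one_ne_zero
    rw [Finset.prod_range_succ, ih, Finset.prod_range_succ _ N, Nat.factorial_succ]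
    push_cast
    field_simp
    ring

lemma exp_sum_logWeierstrassFactor {s : ℂ} (hs : 0 < s.re) {N : ℕ} (hN : N ≠ 0) :
    exp (∑ n ∈ Finset.range N, logWeierstrassFactor n s) =
      s * GammaSeq s N * exp (s * ((harmonic N - Real.log N : ℝ) : ℂ)) := by
  have hs0 := ne_zero_of_re_pos hs
  have hN0 : (N : ℂ) ≠ 0 := Nat.cast_ne_zero.2 hN
  have hfact : (N.factorial : ℂ) ≠ 0 := Nat.cast_ne_zero.2 N.factorial_ne_zero
  have hlogs : exp (∑ n ∈ Finset.range N, log (1 + s / ((n : ℂ) + 1))) =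
      ∏ n ∈ Finset.range N, (1 + s / ((n : ℂ) + 1)) := by
    rw [exp_sum]
    exact Finset.prod_congr rfl fun n _ ↦
      exp_log (slitPlane_ne_zero (one_add_div_mem_slitPlane hs n))
  have hharm : ∑ n ∈ Finset.range N, s / ((n : ℂ) + 1) = s * (harmonic N : ℝ) := by
    simp [harmonic, Finset.mul_sum, div_eq_mul_inv]
  have hexp : exp (s * ((harmonic N - Real.log N : ℝ) : ℂ)) * (N : ℂ) ^ s =
      exp (s * (harmonic N : ℝ)) := by
    rw [cpow_def_of_ne_zero hN0, ← exp_add, ofReal_sub, ← natCast_log]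
    ring_nf
  simp only [logWeierstrassFactor]
  rw [Finset.sum_sub_distrib, exp_sub, hlogs, hharm, GammaSeq, prod_add_natCast_eq, ← hexp]
  field_simp

lemma exp_tsum_logWeierstrassFactor {s : ℂ} (hs : 0 < s.re) :
    exp (∑' n, logWeierstrassFactor n s) =
      s * Gamma s * exp (s * Real.eulerMascheroniConstant) := by
  have hγ := (continuous_ofReal.tendsto _).comp Real.tendsto_harmonic_sub_log
  refine tendsto_nhds_unique (summable_logWeierstrassFactor s).hasSum.tendsto_sum_nat.cexp
    ((((GammaSeq_tendsto_Gamma s).const_mul s).mul (hγ.const_mul s).cexp).congr' ?_)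
  filter_upwards [eventually_ne_atTop 0] with N hN
  exact (exp_sum_logWeierstrassFactor hs hN).symm

lemma digamma_eq_tsum {s : ℂ} (hs : 0 < s.re) :
    digamma s = -Real.eulerMascheroniConstant - 1 / s +
      ∑' n : ℕ, (1 / ((n : ℂ) + 1) - 1 / (s + (n + 1))) := by
  have hs0 := ne_zero_of_re_pos hs
  have hΓ := Gamma_ne_zero_of_re_pos hs
  have hlhs : HasDerivAt (fun z ↦ z * Gamma z * exp (z * Real.eulerMascheroniConstant))
      (exp (∑' n, logWeierstrassFactor n s) *
        ∑' n : ℕ, (1 / ((n : ℂ) + 1) - 1 / (s + (n + 1)))) s := by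
    refine (hasDerivAt_tsum_logWeierstrassFactor hs).cexp.congr_of_eventuallyEq ?_
    filter_upwards [isOpen_re_pos.mem_nhds hs] with z hz
    exact (exp_tsum_logWeierstrassFactor hz).symm
  have hrhs := ((hasDerivAt_id s).mul (differentiableAt_Gamma_of_re_pos hs).hasDerivAt).mul
    ((hasDerivAt_id s).mul_const (Real.eulerMascheroniConstant : ℂ)).cexp
  have heq := hlhs.unique hrhs
  rw [exp_tsum_logWeierstrassFactor hs] at heq
  simp only [id_eq, one_mul, Pi.mul_apply] at heq
  have hcancel := mul_left_cancel₀ (exp_ne_zero (s * Real.eulerMascheroniConstant))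
    (a := exp (s * Real.eulerMascheroniConstant)) (b := s * Gamma s *
      ∑' n : ℕ, (1 / ((n : ℂ) + 1) - 1 / (s + (n + 1))))
    (c := Gamma s + s * deriv Gamma s + s * Gamma s * Real.eulerMascheroniConstant)
    (by linear_combination heq)
  rw [digamma_def, logDeriv_apply]
  generalize ∑' n : ℕ, (1 / ((n : ℂ) + 1) - 1 / (s + (n + 1))) = S at hcancel ⊢
  field_simp
  linear_combination -hcancel

/-- The term `1 / (2 * (n + 1)) - 1 / (s + 2 * (n + 1))` that cancels the trivial zero
`-2 * (n + 1)` of `ζ` in `ξ' / ξ`, written as half a term of the series of `digamma (s / 2)`. -/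
noncomputable def trivialZeroTerm (n : ℕ) (s : ℂ) : ℂ :=
  (1 / ((n : ℂ) + 1) - 1 / (s / 2 + (n + 1))) / 2

/-- The sum over the trivial zeros of `ζ` in the partial fraction expansion of `ξ' / ξ`. -/
noncomputable def trivialZeroSum (s : ℂ) : ℂ := ∑' n, trivialZeroTerm n s

lemma re_half_pos {s : ℂ} (hs : 0 < s.re) : 0 < (s / 2).re := by
  simpa using hs

lemma summable_trivialZeroTerm {s : ℂ} (hs : 0 < s.re) : Summable fun n ↦ trivialZeroTerm n s :=
  (summable_one_div_sub_one_div_add (re_half_pos hs)).div_const 2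

lemma trivialZeroSum_eq {s : ℂ} (hs : 0 < s.re) :
    trivialZeroSum s = digamma (s / 2) / 2 + Real.eulerMascheroniConstant / 2 + 1 / s := by
  have hs0 := ne_zero_of_re_pos hs
  simp only [trivialZeroSum, trivialZeroTerm]
  rw [tsum_div_const, digamma_eq_tsum (re_half_pos hs)]
  generalize ∑' n : ℕ, (1 / ((n : ℂ) + 1) - 1 / (s / 2 + (n + 1))) = S
  field_simp
  ring

lemma differentiableAt_trivialZeroSum {s : ℂ} (hs : 0 < s.re) :
    DifferentiableAt ℂ trivialZeroSum s := by
  have hs0 := ne_zero_of_re_pos hs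
  have hdigamma : DifferentiableAt ℂ (fun z : ℂ ↦ digamma (z / 2)) s :=
    (differentiableAt_digamma_of_re_pos (re_half_pos hs)).comp s (by fun_prop)
  refine DifferentiableAt.congr_of_eventuallyEq (((hdigamma.div_const 2).add_const
    (Real.eulerMascheroniConstant / 2 : ℂ)).add
      ((differentiableAt_const 1).div differentiableAt_id hs0)) ?_
  filter_upwards [isOpen_re_pos.mem_nhds hs] with z hz using trivialZeroSum_eq hz

lemma trivialZeroTerm_eq_div {s : ℂ} (hs : 0 < s.re) (n : ℕ) :
    trivialZeroTerm n s = s / (2 * (n + 1) * (s + 2 * (n + 1))) := by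
  rw [trivialZeroTerm, one_div_sub_one_div_add (re_half_pos hs), div_div, div_div]
  congr 1
  ring

lemma norm_trivialZeroTerm_le {s : ℂ} (hs : 0 < s.re) (n : ℕ) :
    ‖trivialZeroTerm n s‖ ≤ √‖s‖ * (1 / ((n : ℝ) + 1) ^ (3 / 2 : ℝ)) := by
  have hs0 : 0 < ‖s‖ := norm_pos_iff.2 (ne_zero_of_re_pos hs)
  obtain ⟨m, hm⟩ : ∃ m : ℝ, m = n + 1 := ⟨_, rfl⟩
  have hm0 : 0 < m := by rw [hm]; positivity
  have hmc : (n : ℂ) + 1 = m := by rw [hm]; push_cast; rfl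
  have hdenom : √‖s‖ * √m ≤ ‖s + 2 * (m : ℂ)‖ := by
    have hnormSq : ‖s + 2 * (m : ℂ)‖ ^ 2 = ‖s‖ ^ 2 + 4 * m * s.re + 4 * m ^ 2 := by
      rw [← normSq_eq_norm_sq, ← normSq_eq_norm_sq, normSq_apply, normSq_apply]
      simp
      ring
    rw [← Real.sqrt_mul hs0.le]
    refine Real.sqrt_le_iff.2 ⟨norm_nonneg _, ?_⟩
    nlinarith [sq_nonneg (‖s‖ - m), mul_pos hm0 hs]
  have hpow : m ^ (3 / 2 : ℝ) = m * √m := by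
    rw [Real.sqrt_eq_rpow, ← Real.rpow_one_add' hm0.le (by norm_num)]
    norm_num
  rw [trivialZeroTerm_eq_div hs, hmc, ← hm, hpow, norm_div, norm_mul, norm_mul, norm_real,
    Real.norm_of_nonneg hm0.le, norm_ofNat]
  calc ‖s‖ / (2 * m * ‖s + 2 * (m : ℂ)‖) ≤ ‖s‖ / (m * (√‖s‖ * √m)) := by
        gcongr
        linarith
    _ = √‖s‖ * (1 / (m * √m)) := by
        nth_rewrite 1 [← Real.mul_self_sqrt hs0.le]
        field_simp

lemma exists_norm_trivialZeroSum_le :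
    ∃ C : ℝ, 0 ≤ C ∧ ∀ s : ℂ, 0 < s.re → ‖trivialZeroSum s‖ ≤ C * √‖s‖ := by
  refine ⟨∑' n : ℕ, 1 / ((n : ℝ) + 1) ^ (3 / 2 : ℝ), tsum_nonneg fun n ↦ by positivity,
    fun s hs ↦ ?_⟩
  rw [mul_comm, ← tsum_mul_left]
  exact tsum_of_norm_bounded
    ((summable_one_div_natCast_add_one_rpow (by norm_num)).mul_left _).hasSum
    (norm_trivialZeroTerm_le hs)

lemma re_trivialZeroTerm_nonneg {s : ℂ} (hs : 0 < s.re) (n : ℕ) :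
    0 ≤ (trivialZeroTerm n s).re := by
  have hinv : (1 / (s / 2 + (n + 1))).re ≤ 1 / ((n : ℝ) + 1) := by
    refine (re_le_norm _).trans ?_
    rw [norm_div, norm_one]
    gcongr
    exact natCast_add_one_le_norm_add (re_half_pos hs).le n
  have hreal : (1 / ((n : ℂ) + 1)).re = 1 / ((n : ℝ) + 1) := by
    rw [← ofReal_re (1 / ((n : ℝ) + 1))]
    push_cast
    rfl
  rw [trivialZeroTerm, div_ofNat_re, sub_re, hreal]
  linarith

lemma re_trivialZeroSum_nonneg {s : ℂ} (hs : 0 < s.re) : 0 ≤ (trivialZeroSum s).re := by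
  rw [trivialZeroSum, re_tsum (summable_trivialZeroTerm hs)]
  exact tsum_nonneg (re_trivialZeroTerm_nonneg hs)

lemma trivialZeroSum_two_mul_natCast_add_one (m : ℕ) :
    trivialZeroSum (2 * ((m : ℂ) + 1)) = harmonic (m + 1) / 2 := by
  have hm : (m : ℂ) + 1 ≠ 0 := m.cast_add_one_ne_zero
  have hfact : (m.factorial : ℂ) ≠ 0 := Nat.cast_ne_zero.2 m.factorial_ne_zero
  have hpos : 0 < (2 * ((m : ℂ) + 1)).re := by
    simp only [mul_re, re_ofNat, add_re, natCast_re, one_re, im_ofNat, zero_mul, sub_zero]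
    positivity
  rw [trivialZeroSum_eq hpos, mul_div_cancel_left₀ _ two_ne_zero, digamma_def, logDeriv_apply,
    deriv_Gamma_nat, Gamma_nat_eq_factorial, harmonic_succ]
  push_cast
  field_simp
  ring

/-! ### The entire function ξ and its logarithmic derivative -/

/-- The entire function `s (s - 1) Λ(s)`, twice Riemann's `ξ`, written with the entire part `Λ₀` of
the completed zeta function so that no value is junk. -/
noncomputable def xi (s : ℂ) : ℂ := s * (s - 1) * completedRiemannZeta₀ s + 1

lemma differentiable_xi : Differentiable ℂ xi := by
  have := differentiable_completedZeta₀
  unfold xi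
  fun_prop

lemma xi_one_sub (s : ℂ) : xi (1 - s) = xi s := by
  rw [xi, xi, completedRiemannZeta₀_one_sub]
  ring

lemma xi_one : xi 1 = 1 := by simp [xi]

lemma xi_eq_mul_Gammaℝ_mul_riemannZeta {s : ℂ} (hs : 0 < s.re) (hs1 : s ≠ 1) :
    xi s = s * (s - 1) * (Gammaℝ s * riemannZeta s) := by
  have hs0 := ne_zero_of_re_pos hs
  have hs1' : 1 - s ≠ 0 := sub_ne_zero.2 hs1.symm
  rw [riemannZeta_def_of_ne_zero hs0, mul_div_cancel₀ _ (Gammaℝ_ne_zero_of_re_pos hs),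
    completedRiemannZeta_eq, xi]
  field_simp
  ring

lemma xi_ne_zero_of_riemannZeta_ne_zero {s : ℂ} (hs : 0 < s.re) (hζ : riemannZeta s ≠ 0) :
    xi s ≠ 0 := by
  by_cases hs1 : s = 1
  · rw [hs1, xi_one]
    exact one_ne_zero
  · rw [xi_eq_mul_Gammaℝ_mul_riemannZeta hs hs1]
    exact mul_ne_zero (mul_ne_zero (ne_zero_of_re_pos hs) (sub_ne_zero.2 hs1))
      (mul_ne_zero (Gammaℝ_ne_zero_of_re_pos hs) hζ)

lemma xi_ne_zero_of_one_lt_re {s : ℂ} (hs : 1 < s.re) : xi s ≠ 0 :=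
  xi_ne_zero_of_riemannZeta_ne_zero (by linarith) (riemannZeta_ne_zero_of_one_le_re hs.le)

lemma xi_ne_zero_of_RH (h : RH) {s : ℂ} (hs : 1 / 2 < s.re) : xi s ≠ 0 := by
  refine xi_ne_zero_of_riemannZeta_ne_zero (by linarith) fun hζ ↦ ?_
  rcases le_or_gt 1 s.re with h1 | h1
  · exact riemannZeta_ne_zero_of_one_le_re h1 hζ
  · linarith [h s hζ (by linarith) h1]

lemma Gammaℝ_conj (s : ℂ) : Gammaℝ (conj s) = conj (Gammaℝ s) := by
  have hneg : -conj s / 2 = conj (-s / 2) := by simp [map_ofNat]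
  have hhalf : conj s / 2 = conj (s / 2) := by simp [map_ofNat]
  have harg : arg Real.pi ≠ Real.pi := by
    rw [arg_ofReal_of_nonneg Real.pi_pos.le]
    exact Real.pi_pos.ne
  rw [Gammaℝ_def, Gammaℝ_def, map_mul, hneg, hhalf, Gamma_conj, cpow_conj _ _ harg, conj_ofReal]

lemma xi_conj (s : ℂ) : xi (conj s) = conj (xi s) := by
  have xi_conj_of_re_pos {z : ℂ} (hz : 0 < z.re) : xi (conj z) = conj (xi z) := by
    by_cases hz1 : z = 1
    · rw [hz1, map_one, xi_one, map_one]
    have hz1' : conj z ≠ 1 := fun h ↦ hz1 (by simpa using congrArg conj h)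
    rw [xi_eq_mul_Gammaℝ_mul_riemannZeta hz hz1,
      xi_eq_mul_Gammaℝ_mul_riemannZeta (by simpa using hz) hz1', Gammaℝ_conj, riemannZeta_conj]
    simp only [map_mul, map_sub, map_one]
  rcases lt_or_ge 0 s.re with hs | hs
  · exact xi_conj_of_re_pos hs
  · have := xi_conj_of_re_pos (z := 1 - s) (by rw [sub_re, one_re]; linarith)
    rwa [map_sub, map_one, xi_one_sub, xi_one_sub] at this

lemma hasDerivAt_xi {s : ℂ} (hs : xi s ≠ 0) : HasDerivAt xi (logDeriv xi s * xi s) s := by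
  rw [logDeriv_apply, div_mul_cancel₀ _ hs]
  exact (differentiable_xi s).hasDerivAt

lemma hasDerivAt_pi_cpow_neg_half (s : ℂ) :
    HasDerivAt (fun z : ℂ ↦ (Real.pi : ℂ) ^ (-z / 2))
      ((Real.pi : ℂ) ^ (-s / 2) * log Real.pi * (-1 / 2)) s :=
  (((hasDerivAt_id s).neg).div_const 2).const_cpow (Or.inl (ofReal_ne_zero.2 Real.pi_ne_zero))

lemma differentiableAt_Gamma_half {s : ℂ} (hs : 0 < s.re) :
    DifferentiableAt ℂ (fun z : ℂ ↦ Gamma (z / 2)) s :=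
  DifferentiableAt.comp s (differentiableAt_Gamma_of_re_pos (re_half_pos hs)) (by fun_prop)

lemma differentiableAt_Gammaℝ {s : ℂ} (hs : 0 < s.re) : DifferentiableAt ℂ Gammaℝ s :=
  (hasDerivAt_pi_cpow_neg_half s).differentiableAt.mul (differentiableAt_Gamma_half hs)

lemma logDeriv_Gammaℝ {s : ℂ} (hs : 0 < s.re) :
    logDeriv Gammaℝ s = -Real.log Real.pi / 2 + digamma (s / 2) / 2 := by
  have hpi : (Real.pi : ℂ) ^ (-s / 2) ≠ 0 :=
    cpow_ne_zero_iff.2 (Or.inl (ofReal_ne_zero.2 Real.pi_ne_zero))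
  have hlogPi : logDeriv (fun z : ℂ ↦ (Real.pi : ℂ) ^ (-z / 2)) s = -Real.log Real.pi / 2 := by
    rw [logDeriv_apply, (hasDerivAt_pi_cpow_neg_half s).deriv, ofReal_log Real.pi_pos.le]
    field_simp
  have hlogGamma : logDeriv (fun z : ℂ ↦ Gamma (z / 2)) s = digamma (s / 2) / 2 := by
    have := logDeriv_comp (f := Gamma) (g := fun z : ℂ ↦ z / 2)
      (differentiableAt_Gamma_of_re_pos (re_half_pos hs)) (by fun_prop)
    rw [Function.comp_def] at this
    rw [this, deriv_div_const, deriv_id'', digamma_def, mul_one_div]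
  change logDeriv (fun z ↦ (Real.pi : ℂ) ^ (-z / 2) * Gamma (z / 2)) s = _
  rw [logDeriv_mul (g := fun z ↦ Gamma (z / 2)) s hpi (Gamma_ne_zero_of_re_pos (re_half_pos hs))
    (hasDerivAt_pi_cpow_neg_half s).differentiableAt (differentiableAt_Gamma_half hs),
    hlogPi, hlogGamma]

/-- The constant term of `ξ'/ξ` in its expansion over the pole and the trivial zeros of `ζ`. -/
noncomputable def xiLogDerivConst : ℝ := -(Real.eulerMascheroniConstant + Real.log Real.pi) / 2

lemma logDeriv_xi_eq {s : ℂ} (hs : 1 < s.re) :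
    logDeriv xi s =
      1 / (s - 1) + xiLogDerivConst + trivialZeroSum s + deriv riemannZeta s / riemannZeta s := by
  have hpos : 0 < s.re := by linarith
  have hs0 := ne_zero_of_re_pos hpos
  have hs1 : s ≠ 1 := ne_of_apply_ne re hs.ne'
  have hs1' : s - 1 ≠ 0 := sub_ne_zero.2 hs1
  have hΓ0 := Gammaℝ_ne_zero_of_re_pos hpos
  have hζ0 := riemannZeta_ne_zero_of_one_le_re hs.le
  have hΓ := differentiableAt_Gammaℝ hpos
  have hζ := differentiableAt_riemannZeta hs1
  have hxi : xi =ᶠ[𝓝 s] fun z ↦ (z * (z - 1)) * (Gammaℝ z * riemannZeta z) := by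
    filter_upwards [(isOpen_lt continuous_const continuous_re).mem_nhds hs] with z (hz : 1 < z.re)
    exact xi_eq_mul_Gammaℝ_mul_riemannZeta (by linarith) (ne_of_apply_ne re hz.ne')
  have hsub : logDeriv (fun z : ℂ ↦ z - 1) s = 1 / (s - 1) := by simp [logDeriv_apply]
  rw [(logDeriv_congr_nhds hxi).eq_of_nhds, logDeriv_mul (f := fun z ↦ z * (z - 1))
      (g := fun z ↦ Gammaℝ z * riemannZeta z) s (mul_ne_zero hs0 hs1') (mul_ne_zero hΓ0 hζ0)
      (by fun_prop) (hΓ.mul hζ),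
    logDeriv_mul s hs0 hs1' differentiableAt_fun_id (by fun_prop), logDeriv_mul s hΓ0 hζ0 hΓ hζ,
    logDeriv_id', hsub, logDeriv_Gammaℝ hpos, trivialZeroSum_eq hpos, logDeriv_apply,
    xiLogDerivConst]
  push_cast
  ring

/-! ### Growth of ξ -/

lemma norm_LSeries_le_tsum_norm_term {f : ℕ → ℂ} {s z : ℂ} (hf : LSeriesSummable f s)
    (hz : s.re ≤ z.re) : ‖LSeries f z‖ ≤ ∑' n, ‖LSeries.term f s n‖ :=
  tsum_of_norm_bounded hf.norm.hasSum (LSeries.norm_term_le_of_re_le_re f hz)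

lemma exists_norm_deriv_riemannZeta_div_le {a : ℝ} (ha : 1 < a) :
    ∃ K : ℝ, 0 ≤ K ∧ ∀ s : ℂ, a ≤ s.re → ‖deriv riemannZeta s / riemannZeta s‖ ≤ K := by
  have hsum := ArithmeticFunction.LSeriesSummable_vonMangoldt (s := (a : ℂ)) (by simpa using ha)
  refine ⟨_, (norm_nonneg _).trans (norm_LSeries_le_tsum_norm_term hsum le_rfl), fun s hs ↦ ?_⟩
  rw [← norm_neg, ← neg_div,
    ← ArithmeticFunction.LSeries_vonMangoldt_eq_deriv_riemannZeta_div (ha.trans_le hs)]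
  exact norm_LSeries_le_tsum_norm_term hsum (by simpa using hs)

lemma exists_norm_logDeriv_xi_le :
    ∃ C : ℝ, 0 ≤ C ∧ ∀ s : ℂ, 2 ≤ s.re → ‖logDeriv xi s‖ ≤ C * √(1 + ‖s‖) := by
  obtain ⟨K, hK0, hK⟩ := exists_norm_deriv_riemannZeta_div_le one_lt_two
  obtain ⟨C, hC0, hC⟩ := exists_norm_trivialZeroSum_le
  refine ⟨1 + |xiLogDerivConst| + K + C, by positivity, fun s hs ↦ ?_⟩
  have hsqrt : 1 ≤ √(1 + ‖s‖) := Real.one_le_sqrt.2 (by linarith [norm_nonneg s])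
  have hpole : ‖1 / (s - 1)‖ ≤ 1 := by
    have : 1 ≤ ‖s - 1‖ := by
      have := re_le_norm (s - 1)
      rw [sub_re, one_re] at this
      linarith
    rw [norm_div, norm_one]
    exact div_le_one_of_le₀ this (norm_nonneg _)
  rw [logDeriv_xi_eq (by linarith)]
  calc ‖1 / (s - 1) + xiLogDerivConst + trivialZeroSum s + deriv riemannZeta s / riemannZeta s‖
      ≤ ‖1 / (s - 1)‖ + ‖(xiLogDerivConst : ℂ)‖ + ‖trivialZeroSum s‖
          + ‖deriv riemannZeta s / riemannZeta s‖ := norm_add₄_le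
    _ ≤ 1 + |xiLogDerivConst| + C * √(1 + ‖s‖) + K := by
        gcongr
        · rw [norm_real, Real.norm_eq_abs]
        · refine (hC s (by linarith)).trans ?_
          gcongr
          linarith
        · exact hK s hs
    _ = (1 + |xiLogDerivConst| + K) * 1 + C * √(1 + ‖s‖) := by ring
    _ ≤ (1 + |xiLogDerivConst| + K) * √(1 + ‖s‖) + C * √(1 + ‖s‖) := by gcongr
    _ = (1 + |xiLogDerivConst| + K + C) * √(1 + ‖s‖) := by ring

lemma norm_le_mul_exp_of_norm_deriv_le {f : ℂ → ℂ} {p q : ℂ} {K : ℝ}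
    (hf : ∀ z ∈ segment ℝ p q, DifferentiableAt ℂ f z)
    (hK : ∀ z ∈ segment ℝ p q, ‖deriv f z‖ ≤ K * ‖f z‖) :
    ‖f q‖ ≤ ‖f p‖ * Real.exp (K * ‖q - p‖) := by
  have hmem (t : ℝ) (ht : t ∈ Set.Icc (0 : ℝ) 1) : AffineMap.lineMap p q t ∈ segment ℝ p q := by
    rw [segment_eq_image_lineMap]
    exact Set.mem_image_of_mem _ ht
  have hderiv (t : ℝ) (ht : t ∈ Set.Icc (0 : ℝ) 1) :
      HasDerivAt (fun t : ℝ ↦ f (AffineMap.lineMap p q t))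
        (deriv f (AffineMap.lineMap p q t) * (q - p)) t :=
    (hf _ (hmem t ht)).hasDerivAt.comp t AffineMap.hasDerivAt_lineMap
  have hgronwall := norm_le_gronwallBound_of_norm_deriv_right_le
    (δ := ‖f p‖) (K := K * ‖q - p‖) (ε := 0)
    (fun t ht ↦ (hderiv t ht).continuousAt.continuousWithinAt)
    (fun t ht ↦ (hderiv t (Set.Ico_subset_Icc_self ht)).hasDerivWithinAt)
    (by rw [AffineMap.lineMap_apply_zero])
    (fun t ht ↦ by
      rw [norm_mul, add_zero, mul_right_comm]
      exact mul_le_mul_of_nonneg_right (hK _ (hmem t (Set.Ico_subset_Icc_self ht)))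
        (norm_nonneg _))
    1 (Set.right_mem_Icc.2 zero_le_one)
  rwa [gronwallBound_ε0, AffineMap.lineMap_apply_one, sub_zero, mul_one] at hgronwall

/-- The weight `(1 + ‖s‖)^(3/2)` whose exponential controls the growth of `ξ`. -/
noncomputable def growthWeight (s : ℂ) : ℝ := (1 + ‖s‖) ^ (3 / 2 : ℝ)

lemma growthWeight_eq (s : ℂ) : growthWeight s = (1 + ‖s‖) * √(1 + ‖s‖) := by
  rw [growthWeight, Real.sqrt_eq_rpow, ← Real.rpow_one_add' (by positivity) (by norm_num)]
  norm_num

lemma one_add_norm_le_growthWeight (s : ℂ) : 1 + ‖s‖ ≤ growthWeight s :=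
  Real.self_le_rpow_of_one_le (by linarith [norm_nonneg s]) (by norm_num)

lemma one_le_growthWeight (s : ℂ) : 1 ≤ growthWeight s :=
  le_trans (by linarith [norm_nonneg s]) (one_add_norm_le_growthWeight s)

lemma growthWeight_le_mul {c : ℝ} (hc : 0 ≤ c) {s w : ℂ} (h : 1 + ‖w‖ ≤ c * (1 + ‖s‖)) :
    growthWeight w ≤ c ^ (3 / 2 : ℝ) * growthWeight s := by
  rw [growthWeight, growthWeight, ← Real.mul_rpow hc (by positivity)]
  gcongr

lemma exists_norm_xi_le_mul_exp :
    ∃ C : ℝ, 0 ≤ C ∧ ∀ p q s : ℂ, 2 ≤ p.re → 2 ≤ q.re → ‖p‖ ≤ ‖s‖ → ‖q‖ ≤ ‖s‖ →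
      ‖xi q‖ ≤ ‖xi p‖ * Real.exp (C * growthWeight s) := by
  obtain ⟨C, hC0, hC⟩ := exists_norm_logDeriv_xi_le
  refine ⟨2 * C, by positivity, fun p q s hp hq hps hqs ↦ ?_⟩
  have hconv : Convex ℝ ({z : ℂ | 2 ≤ z.re} ∩ Metric.closedBall 0 ‖s‖) :=
    (convex_halfSpace_re_ge 2).inter (convex_closedBall 0 ‖s‖)
  have hseg (z : ℂ) (hz : z ∈ segment ℝ p q) :
      ‖deriv xi z‖ ≤ C * √(1 + ‖s‖) * ‖xi z‖ := by
    obtain ⟨hzre : 2 ≤ z.re, hzs⟩ := hconv.segment_subset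
      ⟨hp, mem_closedBall_zero_iff.2 hps⟩ ⟨hq, mem_closedBall_zero_iff.2 hqs⟩ hz
    rw [mem_closedBall_zero_iff] at hzs
    rw [(hasDerivAt_xi (xi_ne_zero_of_one_lt_re (by linarith))).deriv, norm_mul]
    gcongr
    exact (hC z hzre).trans (by gcongr)
  refine (norm_le_mul_exp_of_norm_deriv_le (fun z _ ↦ differentiable_xi z) hseg).trans ?_
  have hdist : ‖q - p‖ ≤ 2 * (1 + ‖s‖) := (norm_sub_le _ _).trans (by linarith)
  refine mul_le_mul_of_nonneg_left (Real.exp_le_exp.2 ?_) (norm_nonneg _)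
  calc C * √(1 + ‖s‖) * ‖q - p‖ ≤ C * √(1 + ‖s‖) * (2 * (1 + ‖s‖)) := by gcongr
    _ = 2 * C * growthWeight s := by
        rw [growthWeight_eq]
        ring

lemma exists_norm_xi_le_exp_and_exp_le_norm_xi :
    ∃ C : ℝ, 0 ≤ C ∧ ∀ s : ℂ, 2 ≤ s.re →
      ‖xi s‖ ≤ Real.exp (C * growthWeight s) ∧ Real.exp (-(C * growthWeight s)) ≤ ‖xi s‖ := by
  obtain ⟨C, hC0, hC⟩ := exists_norm_xi_le_mul_exp
  have hxi2 : 0 < ‖xi 2‖ := norm_pos_iff.2 (xi_ne_zero_of_one_lt_re (by simp))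
  refine ⟨|Real.log ‖xi 2‖| + C, by positivity, fun s hs ↦ ?_⟩
  have hs2 : ‖(2 : ℂ)‖ ≤ ‖s‖ := by
    rw [norm_ofNat]
    exact hs.trans (re_le_norm s)
  have hweight : |Real.log ‖xi 2‖| ≤ |Real.log ‖xi 2‖| * growthWeight s :=
    le_mul_of_one_le_right (abs_nonneg _) (one_le_growthWeight s)
  constructor
  · refine (hC 2 s s (by simp) hs hs2 le_rfl).trans ?_
    rw [← Real.exp_log hxi2, ← Real.exp_add, Real.exp_log hxi2]
    gcongr
    linarith [le_abs_self (Real.log ‖xi 2‖)]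
  · have hbound := hC s 2 s hs (by simp) le_rfl hs2
    rw [← div_le_iff₀ (Real.exp_pos _)] at hbound
    refine le_trans ?_ hbound
    rw [← Real.exp_log hxi2, ← Real.exp_sub, Real.exp_log hxi2]
    gcongr
    linarith [neg_abs_le (Real.log ‖xi 2‖)]

lemma rpow_le_rpow_add_rpow {t a b x : ℝ} (ht : 0 < t) (ha : a ≤ x) (hb : x ≤ b) :
    t ^ x ≤ t ^ a + t ^ b := by
  rcases le_total t 1 with h | h
  · exact (Real.rpow_le_rpow_of_exponent_ge ht h ha).trans
      (le_add_of_nonneg_right (Real.rpow_nonneg ht.le b))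
  · exact (Real.rpow_le_rpow_of_exponent_le h hb).trans
      (le_add_of_nonneg_left (Real.rpow_nonneg ht.le a))

lemma exists_norm_mellin_le {E : Type*} [NormedAddCommGroup E] [NormedSpace ℂ E] {f : ℝ → E}
    {a b : ℝ} (ha : MellinConvergent f a) (hb : MellinConvergent f b) :
    ∃ B : ℝ, 0 ≤ B ∧ ∀ s : ℂ, a ≤ s.re → s.re ≤ b → ‖mellin f s‖ ≤ B := by
  refine ⟨(∫ t in Set.Ioi (0 : ℝ), ‖(t : ℂ) ^ ((a : ℂ) - 1) • f t‖) +
      ∫ t in Set.Ioi (0 : ℝ), ‖(t : ℂ) ^ ((b : ℂ) - 1) • f t‖,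
    add_nonneg (integral_nonneg fun _ ↦ norm_nonneg _) (integral_nonneg fun _ ↦ norm_nonneg _),
    fun s has hsb ↦ ?_⟩
  rw [mellin, ← integral_add ha.norm hb.norm]
  refine norm_integral_le_of_norm_le (ha.norm.add hb.norm) ?_
  filter_upwards [ae_restrict_mem measurableSet_Ioi] with t (ht : 0 < t)
  simp only [norm_smul, norm_cpow_eq_rpow_re_of_pos ht, sub_re, ofReal_re, one_re, ← add_mul]
  gcongr
  exact rpow_le_rpow_add_rpow ht (by linarith) (by linarith)

lemma exists_norm_completedRiemannZeta₀_le (a b : ℝ) :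
    ∃ B : ℝ, 0 ≤ B ∧ ∀ s : ℂ, a ≤ s.re → s.re ≤ b → ‖completedRiemannZeta₀ s‖ ≤ B := by
  have hconv (s : ℂ) : MellinConvergent (HurwitzZeta.hurwitzEvenFEPair 0).f_modif s :=
    ((HurwitzZeta.hurwitzEvenFEPair 0).isStrongFEPair_toStrongFEPair.hasMellin s).1
  obtain ⟨B, hB0, hB⟩ := exists_norm_mellin_le (hconv (a / 2 : ℝ)) (hconv (b / 2 : ℝ))
  refine ⟨B, hB0, fun s has hsb ↦ ?_⟩
  have hmellin : completedRiemannZeta₀ s =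
    mellin (HurwitzZeta.hurwitzEvenFEPair 0).f_modif (s / 2) / 2 := rfl
  have := hB (s / 2) (by rw [div_ofNat_re]; linarith) (by rw [div_ofNat_re]; linarith)
  rw [hmellin, norm_div, norm_ofNat]
  linarith [norm_nonneg (mellin (HurwitzZeta.hurwitzEvenFEPair 0).f_modif (s / 2))]

lemma exists_norm_xi_le_exp (a : ℝ) :
    ∃ C : ℝ, 0 ≤ C ∧ ∀ s : ℂ, a ≤ s.re → ‖xi s‖ ≤ Real.exp (C * growthWeight s) := by
  obtain ⟨C, hC0, hC⟩ := exists_norm_xi_le_exp_and_exp_le_norm_xi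
  obtain ⟨B, hB0, hB⟩ := exists_norm_completedRiemannZeta₀_le a 2
  refine ⟨C + B + 2, by positivity, fun s hs ↦ ?_⟩
  have hweight := one_add_norm_le_growthWeight s
  have hn := norm_nonneg s
  rcases le_total s.re 2 with h | h
  · have hfactor : ‖s - 1‖ ≤ 1 + ‖s‖ := (norm_sub_le _ _).trans (by rw [norm_one, add_comm])
    calc ‖xi s‖ ≤ ‖s‖ * ‖s - 1‖ * ‖completedRiemannZeta₀ s‖ + 1 := by
          refine (norm_add_le _ _).trans ?_
          rw [norm_mul, norm_mul, norm_one]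
      _ ≤ (1 + ‖s‖) * (1 + ‖s‖) * B + 1 := by
          gcongr
          · linarith
          · exact hB s hs h
      _ ≤ (‖s‖ + 1) ^ 2 * (B + 1) := by nlinarith
      _ ≤ Real.exp ‖s‖ ^ 2 * Real.exp B := by
          gcongr
          · exact Real.add_one_le_exp ‖s‖
          · exact Real.add_one_le_exp B
      _ = Real.exp (2 * ‖s‖ + B) := by
          rw [← Real.exp_nat_mul, ← Real.exp_add, Nat.cast_ofNat]
      _ ≤ Real.exp ((C + B + 2) * growthWeight s) := by
          gcongr
          nlinarith
  · refine (hC s h).1.trans ?_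
    gcongr
    · linarith [one_le_growthWeight s]
    · linarith

/-! ### Positivity of Re ξ'/ξ under the Riemann hypothesis -/

lemma exists_primitive_logDeriv {c : ℂ} {R : ℝ} (hR : 0 < R) {f : ℂ → ℂ}
    (hf : DifferentiableOn ℂ f (Metric.ball c R)) (hf0 : ∀ z ∈ Metric.ball c R, f z ≠ 0) :
    ∃ L : ℂ → ℂ, DifferentiableOn ℂ L (Metric.ball c R) ∧ L c = 0 ∧
      ∀ z ∈ Metric.ball c R, f z = f c * exp (L z) := by
  have hderiv (z : ℂ) (hz : z ∈ Metric.ball c R) : HasDerivAt f (deriv f z) z :=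
    (hf.differentiableAt (Metric.isOpen_ball.mem_nhds hz)).hasDerivAt
  obtain ⟨L, hLc, hL⟩ := ((hf.deriv Metric.isOpen_ball).div hf hf0).isExactOn_ball.with_val_at c 0
  refine ⟨L, fun z hz ↦ (hL z hz).differentiableAt.differentiableWithinAt, hLc, fun z hz ↦ ?_⟩
  have hquot (w : ℂ) (hw : w ∈ Metric.ball c R) :
      HasDerivAt (fun w ↦ f w * exp (-L w)) 0 w := by
    refine ((hderiv w hw).mul (hL w hw).neg.cexp).congr_deriv ?_
    rw [Pi.div_apply]
    field_simp [hf0 w hw]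
    ring
  have hconst := Metric.isOpen_ball.is_const_of_deriv_eq_zero (convex_ball c R).isPreconnected
    (fun w hw ↦ (hquot w hw).differentiableAt.differentiableWithinAt)
    (fun w hw ↦ (hquot w hw).deriv) hz (Metric.mem_ball_self hR)
  rw [hLc, neg_zero, exp_zero, mul_one] at hconst
  rw [← hconst, mul_assoc, ← exp_add, neg_add_cancel, exp_zero, mul_one]

lemma norm_le_of_forall_re_le {f : ℂ → ℂ} {c z : ℂ} {R M : ℝ} (hM : 0 < M)
    (hf : DifferentiableOn ℂ f (Metric.ball c R)) (hre : ∀ w ∈ Metric.ball c R, (f w).re ≤ M)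
    (hz : z ∈ Metric.ball c R) :
    ‖f z‖ ≤ 2 * M * dist z c / (R - dist z c) + ‖f c‖ * (R + dist z c) / (R - dist z c) := by
  have hR : 0 < R := Metric.pos_of_mem_ball hz
  have hmem {w : ℂ} (hw : w ∈ Metric.ball 0 R) : c + w ∈ Metric.ball c R := by
    rwa [Metric.mem_ball, dist_self_add_left, ← mem_ball_zero_iff]
  have hbc := borelCaratheodory (f := fun w ↦ f (c + w)) hM
    (hf.comp (by fun_prop) fun w hw ↦ hmem hw) (fun w hw ↦ hre _ (hmem hw)) hR
    (z := z - c) (by rwa [mem_ball_zero_iff, ← dist_eq_norm])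
  rwa [add_sub_cancel, add_zero, ← dist_eq_norm] at hbc

lemma norm_mul_exp_neg_le_norm {f : ℂ → ℂ} {c z : ℂ} {R M : ℝ} (hM : 0 < M)
    (hf : DifferentiableOn ℂ f (Metric.ball c R)) (hf0 : ∀ w ∈ Metric.ball c R, f w ≠ 0)
    (hfM : ∀ w ∈ Metric.ball c R, ‖f w‖ ≤ ‖f c‖ * Real.exp M) (hz : z ∈ Metric.ball c R) :
    ‖f c‖ * Real.exp (-(2 * M * dist z c / (R - dist z c))) ≤ ‖f z‖ := by
  have hR : 0 < R := Metric.pos_of_mem_ball hz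
  obtain ⟨L, hL, hLc, hfL⟩ := exists_primitive_logDeriv hR hf hf0
  have hfc : 0 < ‖f c‖ := norm_pos_iff.2 (hf0 c (Metric.mem_ball_self hR))
  have hLM (w : ℂ) (hw : w ∈ Metric.ball c R) : (L w).re ≤ M := by
    have := hfM w hw
    rwa [hfL w hw, norm_mul, norm_exp, mul_le_mul_iff_right₀ hfc, Real.exp_le_exp] at this
  have hLz := norm_le_of_forall_re_le hM hL hLM hz
  rw [hLc, norm_zero, zero_mul, zero_div, add_zero] at hLz
  rw [hfL z hz, norm_mul, norm_exp]
  gcongr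
  exact (abs_le.1 ((abs_re_le_norm _).trans hLz)).1

/-- The center, at height `s.im`, of the open disc of radius `2` tangent to the critical line. -/
noncomputable def discCenter (s : ℂ) : ℂ := ⟨5 / 2, s.im⟩

lemma half_lt_re_of_mem_ball_discCenter {s w : ℂ} (hw : w ∈ Metric.ball (discCenter s) 2) :
    1 / 2 < w.re := by
  rw [Metric.mem_ball, dist_eq_norm] at hw
  have hre := (abs_lt.1 ((abs_re_le_norm (w - discCenter s)).trans_lt hw)).1
  rw [sub_re, discCenter] at hre
  linarith

lemma dist_discCenter {s : ℂ} (hs : s.re ≤ 5 / 2) : dist s (discCenter s) = 5 / 2 - s.re := by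
  rw [dist_of_im_eq (by rfl), discCenter, Real.dist_eq, abs_sub_comm, abs_of_nonneg (by linarith)]

lemma mem_ball_discCenter {s : ℂ} (hs : 1 / 2 < s.re) (hs' : s.re ≤ 5 / 2) :
    s ∈ Metric.ball (discCenter s) 2 := by
  rw [Metric.mem_ball, dist_discCenter hs']
  linarith

lemma norm_le_norm_add_four {s w : ℂ} (hs : 1 / 2 < s.re) (hs' : s.re ≤ 5 / 2)
    (hw : w ∈ Metric.ball (discCenter s) 2) : ‖w‖ ≤ ‖s‖ + 4 := by
  have hdist := (dist_triangle_right w s (discCenter s)).trans_lt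
    (add_lt_add hw (mem_ball_discCenter hs hs'))
  rw [dist_eq_norm] at hdist
  linarith [norm_sub_norm_le w s]

lemma growthWeight_le_of_mem_ball_discCenter {s w : ℂ} (hs : 1 / 2 < s.re) (hs' : s.re ≤ 5 / 2)
    (hw : w ∈ Metric.ball (discCenter s) 2) :
    growthWeight w ≤ 5 ^ (3 / 2 : ℝ) * growthWeight s :=
  growthWeight_le_mul (by norm_num)
    (by linarith [norm_le_norm_add_four hs hs' hw, norm_nonneg s])

lemma exists_exp_le_norm_xi_of_RH (h : RH) {a : ℝ} (ha : 0 < a) :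
    ∃ C : ℝ, 0 ≤ C ∧ ∀ s : ℂ, 1 / 2 + a ≤ s.re → Real.exp (-(C * growthWeight s)) ≤ ‖xi s‖ := by
  obtain ⟨C₁, hC₁0, hC₁⟩ := exists_norm_xi_le_exp_and_exp_le_norm_xi
  obtain ⟨C₂, hC₂0, hC₂⟩ := exists_norm_xi_le_exp (1 / 2)
  set c : ℝ := 5 ^ (3 / 2 : ℝ)
  have hc : 1 ≤ c := Real.one_le_rpow (by norm_num) (by norm_num)
  refine ⟨c * C₁ + 4 * (c * (C₁ + C₂ + 1)) / a, by positivity, fun s hs ↦ ?_⟩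
  have hweight := one_le_growthWeight s
  rcases le_total (5 / 2) s.re with hs' | hs'
  · refine le_trans ?_ (hC₁ s (by linarith)).2
    gcongr
    nlinarith [show 0 ≤ 4 * (c * (C₁ + C₂ + 1)) / a by positivity]
  have hcenter : Real.exp (-(C₁ * (c * growthWeight s))) ≤ ‖xi (discCenter s)‖ := by
    refine le_trans ?_ (hC₁ (discCenter s) (by norm_num [discCenter])).2
    gcongr
    exact growthWeight_le_of_mem_ball_discCenter (by linarith) hs' (Metric.mem_ball_self two_pos)
  set M := c * (C₁ + C₂ + 1) * growthWeight s with hM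
  have hdist := dist_discCenter hs'
  have hlower := norm_mul_exp_neg_le_norm (M := M) (by positivity)
    differentiable_xi.differentiableOn
    (fun w hw ↦ xi_ne_zero_of_RH h (half_lt_re_of_mem_ball_discCenter hw)) (fun w hw ↦ ?_)
    (mem_ball_discCenter (by linarith) hs')
  · refine le_trans ?_ hlower
    have hfrac : 2 * M * dist s (discCenter s) / (2 - dist s (discCenter s)) ≤ 4 * M / a := by
      refine div_le_div₀ (by positivity) ?_ ha (by linarith)
      nlinarith [show 0 < M by positivity]
    calc Real.exp (-((c * C₁ + 4 * (c * (C₁ + C₂ + 1)) / a) * growthWeight s))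
        = Real.exp (-(C₁ * (c * growthWeight s))) * Real.exp (-(4 * M / a)) := by
          rw [← Real.exp_add, hM]
          ring_nf
      _ ≤ _ := by gcongr
  · calc ‖xi w‖ ≤ Real.exp (C₂ * growthWeight w) :=
          hC₂ w (half_lt_re_of_mem_ball_discCenter hw).le
      _ ≤ Real.exp (-(C₁ * (c * growthWeight s)) + M) := by
          gcongr
          nlinarith [growthWeight_le_of_mem_ball_discCenter (by linarith) hs' hw]
      _ ≤ ‖xi (discCenter s)‖ * Real.exp M := by
          rw [Real.exp_add]
          gcongr

lemma hasDerivAt_norm_sq_add_ofReal {f : ℂ → ℂ} {s : ℂ} {t : ℝ}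
    (hf : DifferentiableAt ℂ f (s + t)) (hf0 : f (s + t) ≠ 0) :
    HasDerivAt (fun u : ℝ ↦ ‖f (s + u)‖ ^ 2)
      (2 * ((logDeriv f (s + t)).re * ‖f (s + t)‖ ^ 2)) t := by
  have hadd : HasDerivAt (fun u : ℝ ↦ s + (u : ℂ)) 1 t := (hasDerivAt_id t).ofReal_comp.const_add s
  refine (hf.hasDerivAt.comp t hadd).norm_sq.congr_deriv ?_
  have hderiv : deriv f (s + t) = logDeriv f (s + t) * f (s + t) := by
    rw [logDeriv_apply, div_mul_cancel₀ _ hf0]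
  rw [mul_one, hderiv, Function.comp_apply, Complex.inner, mul_assoc, mul_conj, normSq_eq_norm_sq,
    re_mul_ofReal]

lemma norm_le_norm_mul_exp_of_neg_le_re_logDeriv {f : ℂ → ℂ} {s : ℂ} {K r : ℝ} (hr : 0 ≤ r)
    (hf : ∀ t : ℝ, 0 ≤ t → DifferentiableAt ℂ f (s + t)) (hf0 : ∀ t : ℝ, 0 ≤ t → f (s + t) ≠ 0)
    (hK : ∀ t : ℝ, 0 ≤ t → -K ≤ (logDeriv f (s + t)).re) :
    ‖f s‖ ≤ ‖f (s + r)‖ * Real.exp (K * r) := by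
  have hexp (t : ℝ) : HasDerivAt (fun u : ℝ ↦ Real.exp (2 * K * u))
      (Real.exp (2 * K * t) * (2 * K)) t := by
    simpa using ((hasDerivAt_id t).const_mul (2 * K)).exp
  have hderiv (t : ℝ) (ht : 0 ≤ t) :=
    (hasDerivAt_norm_sq_add_ofReal (hf t ht) (hf0 t ht)).mul (hexp t)
  have hmono : MonotoneOn (fun u : ℝ ↦ ‖f (s + u)‖ ^ 2 * Real.exp (2 * K * u)) (Set.Ici 0) := by
    refine monotoneOn_of_deriv_nonneg (convex_Ici 0)
      (fun t ht ↦ (hderiv t ht).continuousAt.continuousWithinAt)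
      (fun t ht ↦ (hderiv t (interior_subset ht)).differentiableAt.differentiableWithinAt)
      fun t ht ↦ ?_
    have hK' : 0 ≤ (logDeriv f (s + t)).re + K := by linarith [hK t (interior_subset ht)]
    calc 0 ≤ 2 * ((logDeriv f (s + t)).re + K) * (‖f (s + t)‖ ^ 2 * Real.exp (2 * K * t)) := by
          positivity
      _ = _ := by
          refine Eq.trans ?_ (hderiv t (interior_subset ht)).deriv.symm
          ring
  have hle := hmono Set.self_mem_Ici hr hr
  simp only [ofReal_zero, add_zero, mul_zero, Real.exp_zero, mul_one] at hle
  refine le_of_sq_le_sq (hle.trans_eq ?_) (by positivity)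
  rw [mul_pow, ← Real.exp_nat_mul]
  push_cast
  ring_nf

lemma exists_neg_le_re_logDeriv_xi :
    ∃ K : ℝ, ∀ s : ℂ, 2 ≤ s.re → -K ≤ (logDeriv xi s).re := by
  obtain ⟨K, -, hK⟩ := exists_norm_deriv_riemannZeta_div_le one_lt_two
  refine ⟨K - xiLogDerivConst, fun s hs ↦ ?_⟩
  have hζ := (abs_le.1 ((abs_re_le_norm _).trans (hK s hs))).1
  have hsum := re_trivialZeroSum_nonneg (s := s) (by linarith)
  have hpole : 0 ≤ (1 / (s - 1)).re := by
    rw [one_div, inv_re, sub_re, one_re]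
    exact div_nonneg (by linarith) (normSq_nonneg _)
  rw [logDeriv_xi_eq (by linarith)]
  simp only [add_re, ofReal_re]
  linarith

lemma norm_xi_half_sub_eq (a t : ℝ) : ‖xi (1 / 2 + t * I - a)‖ = ‖xi (1 / 2 + t * I + a)‖ := by
  have hreflect : (1 / 2 + t * I - a : ℂ) = 1 - conj (1 / 2 + t * I + a) := by
    simp only [map_add, map_mul, map_div₀, map_one, map_ofNat, conj_ofReal, conj_I]
    ring
  rw [hreflect, xi_one_sub, xi_conj, norm_conj]

/-- The quotient of two horizontal translates of `ξ`, unimodular on the imaginary axis; bounding it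
by `1` on the right half-plane is how `Re ξ'/ξ ≥ 0` is obtained. -/
noncomputable def xiShiftRatio (a : ℝ) (z : ℂ) : ℂ := xi (1 / 2 + z - a) / xi (1 / 2 + z + a)

section XiShiftRatio

variable {a : ℝ}

lemma xi_half_add_ne_zero_of_RH (h : RH) (ha : 0 < a) {z : ℂ} (hz : 0 ≤ z.re) :
    xi (1 / 2 + z + a) ≠ 0 :=
  xi_ne_zero_of_RH h (by
    have hhalf : (1 / 2 : ℂ).re = 1 / 2 := by norm_num
    rw [add_re, add_re, hhalf, ofReal_re]
    linarith)

lemma diffContOnCl_xiShiftRatio (h : RH) (ha : 0 < a) :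
    DiffContOnCl ℂ (xiShiftRatio a) {z | 0 < z.re} := by
  refine DifferentiableOn.diffContOnCl fun z hz ↦ DifferentiableAt.differentiableWithinAt ?_
  rw [closure_setOfPred_lt_re] at hz
  have hsub := (differentiable_xi _).comp z (f := fun z ↦ 1 / 2 + z - (a : ℂ)) (by fun_prop)
  have hadd := (differentiable_xi _).comp z (f := fun z ↦ 1 / 2 + z + (a : ℂ)) (by fun_prop)
  exact hsub.div hadd (xi_half_add_ne_zero_of_RH h ha hz)

lemma norm_xiShiftRatio_mul_I (h : RH) (ha : 0 < a) (t : ℝ) : ‖xiShiftRatio a (t * I)‖ = 1 := by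
  have hne := norm_ne_zero_iff.2 (xi_half_add_ne_zero_of_RH h ha (z := t * I) (by simp))
  rw [xiShiftRatio, norm_div, norm_xi_half_sub_eq, div_self hne]

lemma growthWeight_half_add_le (ha : 0 ≤ a) {b : ℝ} (hb : |b| ≤ a) {z : ℂ} (hz : 1 ≤ ‖z‖) :
    growthWeight (1 / 2 + z + b) ≤ (3 + a) ^ (3 / 2 : ℝ) * ‖z‖ ^ (3 / 2 : ℝ) := by
  have hnorm : ‖1 / 2 + z + b‖ ≤ 1 / 2 + ‖z‖ + |b| := by
    refine norm_add₃_le.trans_eq ?_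
    rw [norm_real, Real.norm_eq_abs, norm_div, norm_one, norm_ofNat]
  rw [growthWeight, ← Real.mul_rpow (by positivity) (norm_nonneg z)]
  gcongr
  nlinarith

lemma isBigO_xiShiftRatio (h : RH) (ha : 0 < a) :
    ∃ c < (2 : ℝ), ∃ B, xiShiftRatio a =O[Bornology.cobounded ℂ ⊓ 𝓟 {z | 0 < z.re}]
      fun z ↦ Real.exp (B * ‖z‖ ^ c) := by
  obtain ⟨C₁, hC₁0, hC₁⟩ := exists_exp_le_norm_xi_of_RH h ha
  obtain ⟨C₂, hC₂0, hC₂⟩ := exists_norm_xi_le_exp (1 / 2 - a)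
  refine ⟨3 / 2, by norm_num, (C₁ + C₂) * (3 + a) ^ (3 / 2 : ℝ), .of_bound 1 ?_⟩
  have hlarge : ∀ᶠ z : ℂ in Bornology.cobounded ℂ, 1 ≤ ‖z‖ :=
    tendsto_norm_cobounded_atTop.eventually (eventually_ge_atTop 1)
  filter_upwards [hlarge.filter_mono inf_le_left, mem_inf_of_right (mem_principal_self _)]
    with z hz (hzre : 0 < z.re)
  have hhalf : (1 / 2 : ℂ).re = 1 / 2 := by norm_num
  have hden := hC₁ (1 / 2 + z + a) (by rw [add_re, add_re, hhalf, ofReal_re]; linarith)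
  have hnum := hC₂ (1 / 2 + z - a) (by rw [sub_re, add_re, hhalf, ofReal_re]; linarith)
  have hweightAdd := growthWeight_half_add_le ha.le (abs_of_pos ha).le hz
  have hweightSub := growthWeight_half_add_le ha.le (b := -a) (by rw [abs_neg, abs_of_pos ha]) hz
  rw [ofReal_neg, ← sub_eq_add_neg] at hweightSub
  rw [one_mul, Real.norm_of_nonneg (Real.exp_nonneg _), xiShiftRatio, norm_div,
    div_le_iff₀ (norm_pos_iff.2 (xi_half_add_ne_zero_of_RH h ha hzre.le))]
  refine hnum.trans (le_trans ?_ (mul_le_mul_of_nonneg_left hden (Real.exp_nonneg _)))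
  rw [← Real.exp_add, Real.exp_le_exp]
  nlinarith

lemma isBoundedUnder_norm_xiShiftRatio (h : RH) (ha : 0 < a) :
    IsBoundedUnder (· ≤ ·) atTop fun x : ℝ ↦ ‖xiShiftRatio a x‖ := by
  obtain ⟨K, hK⟩ := exists_neg_le_re_logDeriv_xi
  refine isBoundedUnder_of_eventually_le (a := Real.exp (K * (2 * a))) ?_
  filter_upwards [eventually_ge_atTop (2 + a)] with x hx
  have hre (t : ℝ) (ht : 0 ≤ t) : 2 ≤ (1 / 2 + (x : ℂ) - a + t).re := by
    norm_num
    linarith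
  have hle := norm_le_norm_mul_exp_of_neg_le_re_logDeriv (f := xi) (s := 1 / 2 + x - a)
    (by positivity : 0 ≤ 2 * a) (fun t _ ↦ differentiable_xi _)
    (fun t ht ↦ xi_ne_zero_of_one_lt_re (by linarith [hre t ht])) (fun t ht ↦ hK _ (hre t ht))
  have hshift : (1 / 2 + (x : ℂ) - a + (2 * a : ℝ)) = 1 / 2 + x + a := by
    push_cast
    ring
  rw [hshift] at hle
  rwa [xiShiftRatio, norm_div, div_le_iff₀' (norm_pos_iff.2
    (xi_half_add_ne_zero_of_RH h ha (z := x) (by rw [ofReal_re]; linarith)))]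

lemma norm_xi_sub_le_norm_xi_add (h : RH) (ha : 0 < a) {z : ℂ} (hz : 0 ≤ z.re) :
    ‖xi (1 / 2 + z - a)‖ ≤ ‖xi (1 / 2 + z + a)‖ := by
  have hle : ‖xiShiftRatio a z‖ ≤ 1 :=
    PhragmenLindelof.right_half_plane_of_bounded_on_real (diffContOnCl_xiShiftRatio h ha)
      (isBigO_xiShiftRatio h ha) (isBoundedUnder_norm_xiShiftRatio h ha)
      (fun t ↦ (norm_xiShiftRatio_mul_I h ha t).le) hz
  rwa [xiShiftRatio, norm_div,
    div_le_one (norm_pos_iff.2 (xi_half_add_ne_zero_of_RH h ha hz))] at hle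

end XiShiftRatio

lemma monotoneOn_norm_xi_of_RH (h : RH) {s : ℂ} (hs : 1 / 2 ≤ s.re) :
    MonotoneOn (fun t : ℝ ↦ ‖xi (s + t)‖) (Set.Ici 0) := by
  intro u (hu : 0 ≤ u) v _ huv
  rcases huv.eq_or_lt with rfl | huv
  · exact le_rfl
  have hmid : 0 ≤ (s - 1 / 2 + ((u + v) / 2 : ℝ)).re := by
    rw [add_re, sub_re, ofReal_re, one_div, inv_re, re_ofNat, normSq_ofNat]
    linarith
  have hle := norm_xi_sub_le_norm_xi_add h (half_pos (sub_pos.2 huv)) hmid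
  have hsub : 1 / 2 + (s - 1 / 2 + ((u + v) / 2 : ℝ)) - ((v - u) / 2 : ℝ) = s + u := by
    push_cast
    ring
  have hadd : 1 / 2 + (s - 1 / 2 + ((u + v) / 2 : ℝ)) + ((v - u) / 2 : ℝ) = s + v := by
    push_cast
    ring
  rwa [hsub, hadd] at hle

lemma re_logDeriv_xi_nonneg_of_RH (h : RH) {s : ℂ} (hs : 1 / 2 < s.re) :
    0 ≤ (logDeriv xi s).re := by
  have hne : xi (s + (0 : ℝ)) ≠ 0 := by
    rw [ofReal_zero, add_zero]
    exact xi_ne_zero_of_RH h hs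
  have hderiv := hasDerivAt_norm_sq_add_ofReal (differentiable_xi _) hne
  have hmono : MonotoneOn (fun t : ℝ ↦ ‖xi (s + t)‖ ^ 2) (Set.Ici 0) := fun u hu v hv huv ↦
    pow_le_pow_left₀ (norm_nonneg _) (monotoneOn_norm_xi_of_RH h hs.le hu hv huv) 2
  have hacc : AccPt (0 : ℝ) (𝓟 (Set.Ici 0)) := (uniqueDiffOn_Ici 0 0 Set.self_mem_Ici).accPt
  have hnonneg := hderiv.hasDerivWithinAt.nonneg_of_monotoneOn hacc hmono
  rw [ofReal_zero, add_zero] at hnonneg hne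
  have hpos : 0 < ‖xi s‖ ^ 2 := by positivity
  exact nonneg_of_mul_nonneg_left (by linarith) hpos

lemma differentiableAt_logDeriv_xi {s : ℂ} (hs : xi s ≠ 0) :
    DifferentiableAt ℂ (logDeriv xi) s :=
  (differentiable_xi.analyticAt s).deriv.differentiableAt.div (differentiable_xi s) hs

lemma logDeriv_xi_conj {s : ℂ} (hs : xi s ≠ 0) :
    logDeriv xi (conj s) = conj (logDeriv xi s) := by
  have hcomp : conj ∘ xi ∘ conj = xi := by
    funext z
    rw [Function.comp_apply, Function.comp_apply, xi_conj, conj_conj]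
  have hderiv := (hasDerivAt_xi hs).conj_conj
  rw [hcomp] at hderiv
  rw [logDeriv_apply, hderiv.deriv, xi_conj, map_mul,
    mul_div_cancel_right₀ _ ((map_ne_zero _).2 hs)]

lemma exists_norm_logDeriv_xi_le_of_RH (h : RH) {a : ℝ} (ha : 0 < a) :
    ∃ C : ℝ, 0 ≤ C ∧ ∀ s : ℂ, 1 / 2 + a ≤ s.re → ‖logDeriv xi s‖ ≤ C * √(1 + ‖s‖) := by
  obtain ⟨C, hC0, hC⟩ := exists_norm_logDeriv_xi_le
  refine ⟨C + (4 + 12 * C) / a, by positivity, fun s hs ↦ ?_⟩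
  have hsqrt : 1 ≤ √(1 + ‖s‖) := Real.one_le_sqrt.2 (by linarith [norm_nonneg s])
  rcases le_total (5 / 2) s.re with hs' | hs'
  · refine (hC s (by linarith)).trans ?_
    gcongr
    exact le_add_of_nonneg_right (by positivity)
  have hmem := mem_ball_discCenter (by linarith) hs'
  have hdist := dist_discCenter hs'
  have hbc := norm_le_of_forall_re_le (f := fun w ↦ -logDeriv xi w) one_pos
    (fun w hw ↦ (differentiableAt_logDeriv_xi (xi_ne_zero_of_RH h
      (half_lt_re_of_mem_ball_discCenter hw))).neg.differentiableWithinAt)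
    (fun w hw ↦ by
      rw [neg_re]
      linarith [re_logDeriv_xi_nonneg_of_RH h (half_lt_re_of_mem_ball_discCenter hw)]) hmem
  have hcenter : ‖logDeriv xi (discCenter s)‖ ≤ C * (3 * √(1 + ‖s‖)) := by
    refine (hC _ (by norm_num [discCenter])).trans ?_
    gcongr
    rw [Real.sqrt_le_left (by positivity), mul_pow, Real.sq_sqrt (by positivity)]
    linarith [norm_le_norm_add_four (by linarith) hs' (Metric.mem_ball_self two_pos), norm_nonneg s]
  rw [norm_neg, norm_neg, ← add_div] at hbc
  calc ‖logDeriv xi s‖ ≤ _ := hbc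
    _ ≤ (4 + 12 * C) * √(1 + ‖s‖) / a := by
        refine div_le_div₀ (by positivity) ?_ ha (by linarith)
        rw [hdist]
        nlinarith [norm_nonneg (logDeriv xi (discCenter s))]
    _ ≤ (C + (4 + 12 * C) / a) * √(1 + ‖s‖) := by
        rw [add_mul C, div_mul_eq_mul_div]
        exact le_add_of_nonneg_left (by positivity)

/-! ### The Poisson formula in the right half-plane -/

lemma sq_add_sq_eq_mul (z : ℂ) (t : ℝ) : z ^ 2 + (t : ℂ) ^ 2 = (z + t * I) * (z - t * I) := by
  linear_combination (t : ℂ) ^ 2 * I_sq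

lemma mul_one_add_abs_le_norm_add_mul_I {z : ℂ} (hz : 0 < z.re) (t : ℝ) :
    z.re / (1 + ‖z‖ + z.re) * (1 + |t|) ≤ ‖z + t * I‖ := by
  have hre : z.re ≤ ‖z + t * I‖ := by
    have hle := re_le_norm (z + t * I)
    rwa [add_re, re_ofReal_mul, I_re, mul_zero, add_zero] at hle
  have him : |t| - ‖z‖ ≤ ‖z + t * I‖ := by
    have hle := norm_sub_le (z + t * I) z
    rw [add_sub_cancel_left, norm_mul, norm_I, mul_one, norm_real, Real.norm_eq_abs] at hle
    linarith
  have := norm_nonneg z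
  rw [div_mul_eq_mul_div, div_le_iff₀ (by positivity)]
  nlinarith

lemma mul_one_add_abs_sq_le_norm_sq_add_sq {z : ℂ} (hz : 0 < z.re) (t : ℝ) :
    (z.re / (1 + ‖z‖ + z.re)) ^ 2 * (1 + |t|) ^ 2 ≤ ‖z ^ 2 + (t : ℂ) ^ 2‖ := by
  have hsub := mul_one_add_abs_le_norm_add_mul_I hz (-t)
  rw [abs_neg, ofReal_neg, neg_mul, ← sub_eq_add_neg] at hsub
  rw [sq_add_sq_eq_mul, norm_mul, ← mul_pow, sq]
  gcongr
  exact mul_one_add_abs_le_norm_add_mul_I hz t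

lemma sq_add_sq_ne_zero {z : ℂ} (hz : 0 < z.re) (t : ℝ) : z ^ 2 + (t : ℂ) ^ 2 ≠ 0 :=
  norm_pos_iff.1 (lt_of_lt_of_le (by positivity) (mul_one_add_abs_sq_le_norm_sq_add_sq hz t))

/-- The symmetrised Cauchy kernel of the right half-plane, `π` times its Poisson kernel when `z` is
real. -/
noncomputable def halfPlaneKernel (z : ℂ) (t : ℝ) : ℂ := z / (z ^ 2 + (t : ℂ) ^ 2)

lemma continuous_halfPlaneKernel {z : ℂ} (hz : 0 < z.re) : Continuous (halfPlaneKernel z) :=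
  continuous_const.div (by fun_prop) (sq_add_sq_ne_zero hz)

lemma halfPlaneKernel_neg (z : ℂ) (t : ℝ) : halfPlaneKernel z (-t) = halfPlaneKernel z t := by
  rw [halfPlaneKernel, ofReal_neg, neg_sq, halfPlaneKernel]

lemma integrable_mul_halfPlaneKernel {H : ℝ → ℂ} (hH : Continuous H) {C c : ℝ} (hc : c < 1)
    (hbound : ∀ t, ‖H t‖ ≤ C * (1 + |t|) ^ c) {z : ℂ} (hz : 0 < z.re) :
    Integrable fun t ↦ H t * halfPlaneKernel z t := by
  set κ := (z.re / (1 + ‖z‖ + z.re)) ^ 2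
  have hκ : 0 < κ := by positivity
  have hdecay : Integrable fun t : ℝ ↦ (1 + ‖t‖) ^ (-(2 - c)) :=
    integrable_one_add_norm (by rw [Module.finrank_self, Nat.cast_one]; linarith)
  refine (hdecay.const_mul (C * (‖z‖ / κ))).mono'
    (hH.mul (continuous_halfPlaneKernel hz)).aestronglyMeasurable (.of_forall fun t ↦ ?_)
  have hpow : (1 + |t|) ^ (-(2 - c)) = (1 + |t|) ^ c / (1 + |t|) ^ 2 := by
    rw [neg_sub, Real.rpow_sub (by positivity), Real.rpow_two]
  have hnonneg := (norm_nonneg _).trans (hbound t)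
  calc ‖H t * halfPlaneKernel z t‖
      ≤ C * (1 + |t|) ^ c * (‖z‖ / (κ * (1 + |t|) ^ 2)) := by
        rw [norm_mul, halfPlaneKernel, norm_div]
        gcongr
        exacts [hbound t, mul_one_add_abs_sq_le_norm_sq_add_sq hz t]
    _ = C * (‖z‖ / κ) * (1 + ‖t‖) ^ (-(2 - c)) := by
        rw [Real.norm_eq_abs, hpow]
        field_simp

lemma integrable_halfPlaneKernel {z : ℂ} (hz : 0 < z.re) : Integrable (halfPlaneKernel z) := by
  have hint := integrable_mul_halfPlaneKernel (H := fun _ ↦ 1) (C := 1) (c := 0) continuous_const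
    one_pos (fun t ↦ by rw [Real.rpow_zero, norm_one, mul_one]) hz
  simpa only [one_mul] using hint

lemma hasDerivAt_log_sub_log_div {z : ℂ} (hz : 0 < z.re) (t : ℝ) :
    HasDerivAt (fun t : ℝ ↦ (log (z + t * I) - log (z - t * I)) / (2 * I))
      (halfPlaneKernel z t) t := by
  have hadd : z + t * I ∈ slitPlane := .inl (by simpa using hz)
  have hsub : z - t * I ∈ slitPlane := .inl (by simpa using hz)
  have hlin : HasDerivAt (fun t : ℝ ↦ (t : ℂ) * I) I t := by
    simpa using (ofRealCLM.hasDerivAt (x := t)).mul_const I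
  refine ((((hlin.const_add z).clog_real hadd).sub
    ((hlin.const_sub z).clog_real hsub)).div_const (2 * I)).congr_deriv ?_
  have hadd0 := slitPlane_ne_zero hadd
  have hsub0 := slitPlane_ne_zero hsub
  rw [halfPlaneKernel, sq_add_sq_eq_mul, neg_div, sub_neg_eq_add, div_add_div _ _ hadd0 hsub0,
    div_div, div_eq_div_iff (by simp [hadd0, hsub0]) (mul_ne_zero hadd0 hsub0)]
  ring

lemma log_add_sub_log_sub_eq {z : ℂ} (hz : 0 < z.re) {R : ℝ} (hR : 0 < R) :
    log (z + R * I) - log (z - R * I) = log (z / R + I) - log (z / R - I) := by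
  have hre : (z / R).re ≠ 0 := by
    rw [div_ofReal_re]
    positivity
  have hadd : z / R + I ≠ 0 := fun h ↦ hre (by simpa using congrArg re h)
  have hsub : z / R - I ≠ 0 := fun h ↦ hre (by simpa using congrArg re h)
  have hR0 : (R : ℂ) ≠ 0 := ofReal_ne_zero.2 hR.ne'
  rw [show z + R * I = (R : ℂ) * (z / R + I) by field_simp,
    show z - R * I = (R : ℂ) * (z / R - I) by field_simp, log_ofReal_mul hR hadd,
    log_ofReal_mul hR hsub, add_sub_add_left_eq_sub]

lemma tendsto_log_add_sub_log_sub {z : ℂ} (hz : 0 < z.re) :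
    Tendsto (fun R : ℝ ↦ log (z + R * I) - log (z - R * I)) atTop (𝓝 (Real.pi * I)) := by
  have hzero : Tendsto (fun R : ℝ ↦ z / (R : ℂ)) atTop (𝓝 0) := by
    rw [tendsto_zero_iff_norm_tendsto_zero]
    simpa using tendsto_const_nhds.div_atTop tendsto_abs_atTop_atTop
  have hadd : Tendsto (fun R : ℝ ↦ log (z / R + I)) atTop (𝓝 (log I)) :=
    ((zero_add I) ▸ hzero.add_const I).clog (by simp [slitPlane])
  have hsub : Tendsto (fun R : ℝ ↦ log (z / R - I)) atTop (𝓝 (log (-I))) :=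
    ((zero_sub I) ▸ hzero.sub_const I).clog (by simp [slitPlane])
  have hlim : log I - log (-I) = Real.pi * I := by
    rw [log_I, log_neg_I]
    ring
  rw [← hlim]
  refine (hadd.sub hsub).congr' ?_
  filter_upwards [eventually_gt_atTop 0] with R hR using (log_add_sub_log_sub_eq hz hR).symm

lemma integral_halfPlaneKernel {z : ℂ} (hz : 0 < z.re) : ∫ t, halfPlaneKernel z t = Real.pi := by
  have hint := integrable_halfPlaneKernel hz
  have hfinite (R : ℝ) : ∫ t in -R..R, halfPlaneKernel z t =
      (log (z + R * I) - log (z - R * I)) / I := by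
    rw [intervalIntegral.integral_eq_sub_of_hasDerivAt
      (fun t _ ↦ hasDerivAt_log_sub_log_div hz t) hint.intervalIntegrable]
    push_cast
    rw [neg_mul, sub_neg_eq_add, ← sub_eq_add_neg]
    field_simp
    ring
  have hlim := intervalIntegral_tendsto_integral hint tendsto_neg_atTop_atBot tendsto_id
  simp only [id, hfinite] at hlim
  have hlog := (tendsto_log_add_sub_log_sub hz).div_const I
  rw [mul_div_cancel_right₀ _ I_ne_zero] at hlog
  exact tendsto_nhds_unique hlim hlog

lemma le_norm_and_norm_le_two_mul {ζ : ℂ} {R : ℝ} (hre : |ζ.re| ≤ R) (him : |ζ.im| ≤ R)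
    (h : |ζ.re| = R ∨ |ζ.im| = R) : R ≤ ‖ζ‖ ∧ ‖ζ‖ ≤ 2 * R := by
  refine ⟨?_, by linarith [norm_le_abs_re_add_abs_im ζ]⟩
  rcases h with h | h
  exacts [h ▸ abs_re_le_norm ζ, h ▸ abs_im_le_norm ζ]

lemma norm_integral_mul_I_le {f : ℂ → ℂ} (hf : DiffContOnCl ℂ f {ζ | 0 < ζ.re}) {R M : ℝ}
    (hR : 0 < R) (hM : ∀ ζ : ℂ, 0 ≤ ζ.re → R ≤ ‖ζ‖ → ‖ζ‖ ≤ 2 * R → ‖f ζ‖ ≤ M) :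
    ‖∫ y in -R..R, f (y * I)‖ ≤ 4 * R * M := by
  have hside {ζ : ℂ} (hζ : 0 ≤ ζ.re) (hre : |ζ.re| ≤ R) (him : |ζ.im| ≤ R)
      (h : |ζ.re| = R ∨ |ζ.im| = R) : ‖f ζ‖ ≤ M :=
    have hnorm := le_norm_and_norm_le_two_mul hre him h
    hM ζ hζ hnorm.1 hnorm.2
  have hrect := integral_boundary_rect_eq_zero_of_continuousOn_of_differentiableOn f ⟨0, -R⟩ ⟨R, R⟩
    (hf.continuousOn.mono fun ζ hζ ↦ by
      rw [closure_setOfPred_lt_re]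
      exact (Set.uIcc_of_le hR.le ▸ hζ.1).1)
    (hf.differentiableOn.mono fun ζ hζ ↦ (min_eq_left hR.le ▸ hζ.1.1 : 0 < ζ.re))
  simp only [ofReal_zero, zero_add] at hrect
  have hhor (y : ℝ) (hy : |y| = R) : ‖∫ x in (0 : ℝ)..R, f (x + y * I)‖ ≤ M * |R - 0| := by
    refine intervalIntegral.norm_integral_le_of_norm_le_const fun x hx ↦ ?_
    rw [Set.uIoc_of_le hR.le] at hx
    have hre : ((x : ℂ) + y * I).re = x := by simp
    have him : ((x : ℂ) + y * I).im = y := by simp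
    refine hside ?_ ?_ ?_ (.inr ?_) <;>
      simp only [hre, him, hy, abs_of_pos hx.1, hx.1.le, hx.2, le_refl]
  have hvert : ‖∫ y in -R..R, f (R + y * I)‖ ≤ M * |R - -R| := by
    refine intervalIntegral.norm_integral_le_of_norm_le_const fun y hy ↦ ?_
    rw [Set.uIoc_of_le (by linarith)] at hy
    have hre : ((R : ℂ) + y * I).re = R := by simp
    have him : ((R : ℂ) + y * I).im = y := by simp
    have hy' : |y| ≤ R := abs_le.2 ⟨hy.1.le, hy.2⟩
    refine hside ?_ ?_ ?_ (.inl ?_) <;> simp only [hre, him, hy', abs_of_pos hR, hR.le, le_refl]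
  have hbot := hhor (-R) (by rw [abs_neg, abs_of_pos hR])
  have htop := hhor R (abs_of_pos hR)
  rw [sub_zero, abs_of_pos hR] at hbot htop
  rw [abs_of_pos (by linarith)] at hvert
  have hI (w : ℂ) : ‖I • w‖ = ‖w‖ := by rw [norm_smul, norm_I, one_mul]
  rw [← hI, ← sub_eq_zero.1 hrect]
  refine (norm_add_le _ _).trans ?_
  rw [hI]
  linarith [norm_sub_le (∫ x in (0 : ℝ)..R, f (x + (-R : ℝ) * I))
    (∫ x in (0 : ℝ)..R, f (x + R * I))]

lemma integral_mul_I_eq_zero {f : ℂ → ℂ} (hf : DiffContOnCl ℂ f {ζ | 0 < ζ.re})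
    (hint : Integrable fun y : ℝ ↦ f (y * I)) {K c R₀ : ℝ} (hc : c < 1) (hbound : ∀ R, R₀ ≤ R →
      ∀ ζ : ℂ, 0 ≤ ζ.re → R ≤ ‖ζ‖ → ‖ζ‖ ≤ 2 * R → ‖f ζ‖ ≤ K * R ^ (c - 2)) :
    ∫ y : ℝ, f (y * I) = 0 := by
  refine tendsto_nhds_unique
    (intervalIntegral_tendsto_integral hint tendsto_neg_atTop_atBot tendsto_id) ?_
  have hlim : Tendsto (fun R : ℝ ↦ 4 * K * R ^ (-(1 - c))) atTop (𝓝 0) := by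
    simpa only [mul_zero] using (tendsto_rpow_neg_atTop (sub_pos.2 hc)).const_mul (4 * K)
  refine squeeze_zero_norm' ?_ hlim
  filter_upwards [eventually_ge_atTop R₀, eventually_gt_atTop 0] with R hR hR0
  refine (norm_integral_mul_I_le hf hR0 (hbound R hR)).trans_eq ?_
  rw [show -(1 - c) = c - 2 + 1 by ring, Real.rpow_add_one hR0.ne']
  ring

lemma diffContOnCl_dslope_mul_div {H : ℂ → ℂ} (hH : DiffContOnCl ℂ H {ζ | 0 < ζ.re}) {z : ℂ}
    (hz : 0 < z.re) : DiffContOnCl ℂ (fun ζ ↦ dslope H z ζ * (z / (ζ + z))) {ζ | 0 < ζ.re} := by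
  have hnhds : {ζ : ℂ | 0 < ζ.re} ∈ 𝓝 z := isOpen_re_pos.mem_nhds hz
  have hcl : closure {ζ : ℂ | 0 < ζ.re} ∈ 𝓝 z := mem_of_superset hnhds subset_closure
  have hdslope : DiffContOnCl ℂ (dslope H z) {ζ | 0 < ζ.re} :=
    ⟨(differentiableOn_dslope hnhds).2 hH.differentiableOn, (continuousOn_dslope hcl).2
      ⟨hH.continuousOn, hH.differentiableAt isOpen_re_pos hz⟩⟩
  have hdiv : DifferentiableOn ℂ (fun ζ ↦ z / (ζ + z)) (closure {ζ | 0 < ζ.re}) := by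
    rw [closure_setOfPred_lt_re]
    refine DifferentiableOn.div (by fun_prop) (by fun_prop) fun ζ (hζ : 0 ≤ ζ.re) h ↦ ?_
    have hre := congrArg re h
    rw [add_re, zero_re] at hre
    linarith
  exact hdslope.smul hdiv.diffContOnCl

lemma norm_dslope_mul_div_le {H : ℂ → ℂ} {C c : ℝ} (hc0 : 0 ≤ c) (hc : c < 1)
    (hbound : ∀ ζ : ℂ, 0 ≤ ζ.re → ‖H ζ‖ ≤ C * (1 + ‖ζ‖) ^ c) {z ζ : ℂ} (hz : 0 < z.re) {R : ℝ}
    (hR : 1 + 2 * ‖z‖ ≤ R) (hζ : 0 ≤ ζ.re) (hRζ : R ≤ ‖ζ‖) (hζR : ‖ζ‖ ≤ 2 * R) :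
    ‖dslope H z ζ * (z / (ζ + z))‖ ≤ 4 * ‖z‖ * (3 * C + ‖H z‖) * R ^ (c - 2) := by
  have hz0 : 0 < ‖z‖ := hz.trans_le (re_le_norm z)
  have hR0 : 0 < R := by linarith
  have hne : ζ ≠ z := by
    rintro rfl
    linarith
  have hsub : R / 2 ≤ ‖ζ - z‖ := by linarith [norm_sub_norm_le ζ z]
  have hadd : R / 2 ≤ ‖ζ + z‖ := by linarith [norm_sub_le_norm_add ζ z]
  have hC : 0 ≤ C := by
    have hle := (norm_nonneg _).trans (hbound 0 le_rfl)
    rwa [norm_zero, add_zero, Real.one_rpow, mul_one] at hle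
  have hpow : (1 + ‖ζ‖) ^ c ≤ 3 * R ^ c := by
    calc (1 + ‖ζ‖) ^ c ≤ (3 * R) ^ c := by
          gcongr
          linarith
      _ = 3 ^ c * R ^ c := Real.mul_rpow (by norm_num) (by linarith)
      _ ≤ 3 * R ^ c := by
          gcongr
          exact Real.rpow_le_self_of_one_le (x := 3) (by norm_num) hc.le
  have hnum : ‖H ζ - H z‖ ≤ (3 * C + ‖H z‖) * R ^ c := by
    have hone : 1 ≤ R ^ c := Real.one_le_rpow (by linarith) hc0
    refine (norm_sub_le _ _).trans ?_
    nlinarith [hbound ζ hζ, norm_nonneg (H z)]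
  rw [dslope_of_ne _ hne, slope_def_field, norm_mul, norm_div, norm_div,
    Real.rpow_sub (by linarith), Real.rpow_two]
  calc ‖H ζ - H z‖ / ‖ζ - z‖ * (‖z‖ / ‖ζ + z‖)
      ≤ (3 * C + ‖H z‖) * R ^ c / (R / 2) * (‖z‖ / (R / 2)) := by gcongr
    _ = 4 * ‖z‖ * (3 * C + ‖H z‖) * (R ^ c / R ^ 2) := by field_simp; ring

section Poisson

variable {H : ℂ → ℂ} {C c : ℝ} {z : ℂ}

lemma continuous_comp_mul_I (hH : DiffContOnCl ℂ H {ζ | 0 < ζ.re}) :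
    Continuous fun t : ℝ ↦ H (t * I) :=
  hH.continuousOn.comp_continuous (by fun_prop) fun t ↦ by
    rw [closure_setOfPred_lt_re]
    simp

lemma integrable_comp_mul_I_mul_halfPlaneKernel (hH : DiffContOnCl ℂ H {ζ | 0 < ζ.re})
    (hc : c < 1) (hbound : ∀ ζ : ℂ, 0 ≤ ζ.re → ‖H ζ‖ ≤ C * (1 + ‖ζ‖) ^ c) (hz : 0 < z.re) :
    Integrable fun t : ℝ ↦ H (t * I) * halfPlaneKernel z t :=
  integrable_mul_halfPlaneKernel (continuous_comp_mul_I hH) hc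
    (fun t ↦ by simpa using hbound (t * I) (by simp)) hz

lemma integral_comp_mul_I_mul_halfPlaneKernel (hH : DiffContOnCl ℂ H {ζ | 0 < ζ.re})
    (hc0 : 0 ≤ c) (hc : c < 1) (hbound : ∀ ζ : ℂ, 0 ≤ ζ.re → ‖H ζ‖ ≤ C * (1 + ‖ζ‖) ^ c)
    (hz : 0 < z.re) : ∫ t : ℝ, H (t * I) * halfPlaneKernel z t = Real.pi * H z := by
  have hintH := integrable_comp_mul_I_mul_halfPlaneKernel hH hc hbound hz
  have hintK := (integrable_halfPlaneKernel hz).const_mul (H z)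
  have hslope (t : ℝ) : dslope H z (t * I) * (z / (t * I + z)) =
      H z * halfPlaneKernel z t - H (t * I) * halfPlaneKernel z t := by
    have hne : t * I - z ≠ 0 := fun h ↦ hz.ne' (by simpa using congrArg re h)
    have hne' : t * I + z ≠ 0 := fun h ↦ hz.ne' (by simpa using congrArg re h)
    have hfactor : z ^ 2 + (t : ℂ) ^ 2 = -((t * I - z) * (t * I + z)) := by
      rw [sq_add_sq_eq_mul]
      ring
    rw [dslope_of_ne _ (sub_ne_zero.1 hne), slope_def_field, halfPlaneKernel, hfactor]
    field_simp
    ring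
  have hzero := integral_mul_I_eq_zero (diffContOnCl_dslope_mul_div hH hz)
    (by simp only [hslope]; exact hintK.sub hintH) hc
    fun R hR ζ ↦ norm_dslope_mul_div_le hc0 hc hbound hz hR
  simp only [hslope] at hzero
  rw [integral_sub hintK hintH, integral_const_mul, integral_halfPlaneKernel hz,
    sub_eq_zero] at hzero
  rw [← hzero, mul_comm]

lemma integral_re_comp_mul_I_mul_halfPlaneKernel (hH : DiffContOnCl ℂ H {ζ | 0 < ζ.re})
    (hc0 : 0 ≤ c) (hc : c < 1) (hbound : ∀ ζ : ℂ, 0 ≤ ζ.re → ‖H ζ‖ ≤ C * (1 + ‖ζ‖) ^ c)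
    (hconj : ∀ t : ℝ, H (-(t * I)) = conj (H (t * I))) (hz : 0 < z.re) :
    ∫ t : ℝ, ((H (t * I)).re : ℂ) * halfPlaneKernel z t = Real.pi * H z := by
  have hint := integrable_comp_mul_I_mul_halfPlaneKernel hH hc hbound hz
  have hneg (t : ℝ) : H ((-t : ℝ) * I) * halfPlaneKernel z (-t) =
      conj (H (t * I)) * halfPlaneKernel z t := by
    rw [ofReal_neg, neg_mul, hconj, halfPlaneKernel_neg]
  have hformula := integral_comp_mul_I_mul_halfPlaneKernel hH hc0 hc hbound hz
  have hformula' := hformula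
  rw [← integral_neg_eq_self] at hformula'
  have hint' := hint.comp_neg
  simp only [hneg] at hformula' hint'
  calc ∫ t : ℝ, ((H (t * I)).re : ℂ) * halfPlaneKernel z t
      = ∫ t : ℝ,
          (H (t * I) * halfPlaneKernel z t + conj (H (t * I)) * halfPlaneKernel z t) / 2 := by
        congr with t
        rw [← add_mul, add_conj]
        push_cast
        ring
    _ = Real.pi * H z := by
        rw [integral_div, integral_add hint hint', hformula, hformula']
        ring

end Poisson

/-! ### Laplace transforms -/

/-- The Laplace transform `∫₀^∞ f(u) e^{-su} du` converges absolutely and equals `m`; compare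
Mathlib's `HasMellin`. -/
def HasLaplace (f : ℝ → ℂ) (s m : ℂ) : Prop :=
  IntegrableOn (fun u : ℝ ↦ f u * exp (-(s * u))) (Set.Ioi 0) ∧
    ∫ u in Set.Ioi (0 : ℝ), f u * exp (-(s * u)) = m

lemma HasLaplace.add {f g : ℝ → ℂ} {s m m' : ℂ} (hf : HasLaplace f s m) (hg : HasLaplace g s m') :
    HasLaplace (fun u ↦ f u + g u) s (m + m') := by
  simp only [HasLaplace, add_mul]
  exact ⟨hf.1.add hg.1, by rw [integral_add hf.1 hg.1, hf.2, hg.2]⟩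

lemma HasLaplace.sub {f g : ℝ → ℂ} {s m m' : ℂ} (hf : HasLaplace f s m) (hg : HasLaplace g s m') :
    HasLaplace (fun u ↦ f u - g u) s (m - m') := by
  simp only [HasLaplace, sub_mul]
  exact ⟨hf.1.sub hg.1, by rw [integral_sub hf.1 hg.1, hf.2, hg.2]⟩

lemma HasLaplace.const_mul {f : ℝ → ℂ} {s m : ℂ} (c : ℂ) (hf : HasLaplace f s m) :
    HasLaplace (fun u ↦ c * f u) s (c * m) := by
  simp only [HasLaplace, mul_assoc]
  exact ⟨hf.1.const_mul c, by rw [integral_const_mul, hf.2]⟩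

lemma norm_exp_neg_mul_ofReal (s : ℂ) (u : ℝ) : ‖exp (-(s * u))‖ = Real.exp (-(s.re * u)) := by
  rw [norm_exp, neg_re, re_mul_ofReal]

lemma hasLaplace_exp {a s : ℂ} (h : a.re < s.re) :
    HasLaplace (fun u ↦ exp (a * u)) s (1 / (s - a)) := by
  have hre : (a - s).re < 0 := by rwa [sub_re, sub_neg]
  have hmul (u : ℝ) : exp (a * u) * exp (-(s * u)) = exp ((a - s) * u) := by
    rw [← exp_add]
    ring_nf
  simp only [HasLaplace, hmul]
  refine ⟨integrableOn_exp_mul_complex_Ioi hre 0, ?_⟩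
  rw [integral_exp_mul_complex_Ioi hre 0, ofReal_zero, mul_zero, exp_zero, ← neg_sub s a,
    neg_div_neg_eq]

lemma hasLaplace_one {s : ℂ} (hs : 0 < s.re) : HasLaplace (fun _ ↦ 1) s (1 / s) := by
  have h := hasLaplace_exp (a := 0) (s := s) hs
  simpa only [zero_mul, exp_zero, sub_zero] using h

lemma hasLaplace_ofReal {s : ℂ} (hs : 0 < s.re) : HasLaplace (fun u ↦ (u : ℂ)) s (1 / s ^ 2) := by
  have hs0 : s ≠ 0 := ne_zero_of_re_pos hs
  have hnorm {u : ℝ} (hu : 0 < u) :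
      ‖(u : ℂ) * exp (-(s * u))‖ = u ^ (1 : ℝ) * Real.exp (-s.re * u) := by
    rw [norm_mul, norm_exp_neg_mul_ofReal, norm_real, Real.norm_of_nonneg hu.le, Real.rpow_one,
      neg_mul]
  have hcont : Continuous fun u : ℝ ↦ (u : ℂ) * exp (-(s * u)) := by fun_prop
  have hint : IntegrableOn (fun u : ℝ ↦ (u : ℂ) * exp (-(s * u))) (Set.Ioi 0) := by
    refine (integrableOn_rpow_mul_exp_neg_mul_rpow (s := 1) (by norm_num) one_pos hs).mono'
      hcont.aestronglyMeasurable ((ae_restrict_iff' measurableSet_Ioi).2 (.of_forall fun u hu ↦ ?_))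
    rw [hnorm hu, Real.rpow_one]
  refine ⟨hint, ?_⟩
  have hderiv (u : ℝ) : HasDerivAt (fun u : ℝ ↦ -(u * exp (-(s * u)) / s + exp (-(s * u)) / s ^ 2))
      (u * exp (-(s * u))) u := by
    have hofReal : HasDerivAt (fun u : ℝ ↦ (u : ℂ)) 1 u := (hasDerivAt_id u).ofReal_comp
    have hexp : HasDerivAt (fun u : ℝ ↦ exp (-(s * u))) (exp (-(s * u)) * -(s * 1)) u :=
      (hofReal.const_mul s).neg.cexp
    refine (((hofReal.mul hexp).div_const s).add (hexp.div_const (s ^ 2))).neg.congr_deriv ?_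
    field_simp
    ring
  have hlim : Tendsto (fun u : ℝ ↦ (u : ℂ) * exp (-(s * u))) atTop (𝓝 0) := by
    refine tendsto_zero_iff_norm_tendsto_zero.2
      ((tendsto_rpow_mul_exp_neg_mul_atTop_nhds_zero 1 s.re hs).congr' ?_)
    filter_upwards [eventually_gt_atTop 0] with u hu using (hnorm hu).symm
  have hlim' : Tendsto (fun u : ℝ ↦ exp (-(s * u))) atTop (𝓝 0) := by
    refine tendsto_zero_iff_norm_tendsto_zero.2
      ((tendsto_rpow_mul_exp_neg_mul_atTop_nhds_zero 0 s.re hs).congr fun u ↦ ?_)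
    rw [norm_exp_neg_mul_ofReal, Real.rpow_zero, one_mul, neg_mul]
  rw [integral_Ioi_of_hasDerivAt_of_tendsto' (fun u _ ↦ hderiv u) hint
    ((hlim.div_const s).add (hlim'.div_const (s ^ 2))).neg]
  simp

lemma hasLaplace_exp_sub_one_sub {a s : ℂ} (ha : a ≠ 0) (has : a.re < s.re) (hs : 0 < s.re) :
    HasLaplace (fun u ↦ (exp (a * u) - 1 - a * u) / a ^ 2) s (1 / (s ^ 2 * (s - a))) := by
  have hs0 : s ≠ 0 := ne_zero_of_re_pos hs
  have hsa : s - a ≠ 0 := ne_zero_of_re_pos (by rwa [sub_re, sub_pos])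
  convert (((hasLaplace_exp has).sub (hasLaplace_one hs)).sub
    ((hasLaplace_ofReal hs).const_mul a)).const_mul (1 / a ^ 2) using 1
  · funext u
    ring
  · field_simp
    ring

lemma hasLaplace_max_sub {s : ℂ} (hs : 0 < s.re) {L : ℝ} (hL : 0 ≤ L) :
    HasLaplace (fun u ↦ (max (u - L) 0 : ℝ)) s (exp (-(s * L)) * (1 / s ^ 2)) := by
  obtain ⟨hint, hval⟩ := hasLaplace_ofReal hs
  rw [← integrable_indicator_iff measurableSet_Ioi] at hint
  rw [← integral_indicator measurableSet_Ioi] at hval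
  set F := Set.indicator (Set.Ioi 0) fun u : ℝ ↦ (u : ℂ) * exp (-(s * u)) with hF
  have hshift : Set.indicator (Set.Ioi 0) (fun u : ℝ ↦ ((max (u - L) 0 : ℝ) : ℂ) * exp (-(s * u))) =
      fun u ↦ exp (-(s * L)) * F (u - L) := by
    funext u
    rcases lt_or_ge 0 (u - L) with hu | hu
    · have hu0 : 0 < u := by linarith
      rw [hF, Set.indicator_of_mem (Set.mem_Ioi.2 hu0), Set.indicator_of_mem (Set.mem_Ioi.2 hu),
        max_eq_left hu.le, mul_left_comm, ← exp_add]
      push_cast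
      ring_nf
    · rw [hF, Set.indicator_of_notMem (Set.notMem_Ioi.2 hu), mul_zero, Set.indicator_apply_eq_zero]
      exact fun _ ↦ by rw [max_eq_right hu, ofReal_zero, zero_mul]
  rw [HasLaplace, ← integrable_indicator_iff measurableSet_Ioi,
    ← integral_indicator measurableSet_Ioi, hshift]
  refine ⟨(hint.comp_sub_right L).const_mul _, ?_⟩
  rw [integral_const_mul, integral_sub_right_eq_self, hval]

section Tsum

variable {f : ℕ → ℝ → ℝ} {w : ℕ → ℝ} {c : ℝ}

lemma continuousOn_tsum_of_abs_le_mul_exp (hf : ∀ n, ContinuousOn (f n) (Set.Ici 0))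
    (hw : Summable w) (hbound : ∀ n u, 0 ≤ u → |f n u| ≤ w n * Real.exp (c * u)) :
    ContinuousOn (fun u ↦ ∑' n, f n u) (Set.Ici 0) := by
  have hdamped : ContinuousOn (fun u ↦ ∑' n, f n u * Real.exp (-(c * u))) (Set.Ici 0) := by
    refine continuousOn_tsum (fun n ↦ (hf n).mul (by fun_prop)) hw fun n u hu ↦ ?_
    rw [Real.norm_eq_abs, abs_mul, Real.abs_exp, Real.exp_neg, ← div_eq_mul_inv,
      div_le_iff₀ (Real.exp_pos _)]
    exact hbound n u hu
  have hexp : ContinuousOn (fun u ↦ Real.exp (c * u)) (Set.Ici 0) := by fun_prop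
  refine (hdamped.mul hexp).congr fun u _ ↦ ?_
  simp only [Pi.mul_apply]
  rw [tsum_mul_right, mul_assoc, ← Real.exp_add, neg_add_cancel, Real.exp_zero, mul_one]

lemma norm_mul_exp_neg_le {x B : ℝ} {s : ℂ} {u : ℝ} (hx : |x| ≤ B * Real.exp (c * u)) :
    ‖(x : ℂ) * exp (-(s * u))‖ ≤ B * Real.exp ((c - s.re) * u) := by
  rw [norm_mul, norm_exp_neg_mul_ofReal, norm_real, Real.norm_eq_abs]
  refine (mul_le_mul_of_nonneg_right hx (Real.exp_nonneg _)).trans_eq ?_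
  rw [mul_assoc, ← Real.exp_add]
  ring_nf

lemma hasLaplace_tsum (hf : ∀ n, ContinuousOn (f n) (Set.Ici 0)) (hw : Summable w)
    (hbound : ∀ n u, 0 ≤ u → |f n u| ≤ w n * Real.exp (c * u)) {s : ℂ} {m : ℕ → ℂ} (hs : c < s.re)
    (hm : ∀ n, HasLaplace (fun u ↦ f n u) s (m n)) :
    HasLaplace (fun u ↦ (∑' n, f n u : ℝ)) s (∑' n, m n) := by
  have hexp : IntegrableOn (fun u : ℝ ↦ Real.exp ((c - s.re) * u)) (Set.Ioi 0) :=
    integrableOn_exp_mul_Ioi (sub_neg.2 hs) 0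
  have hnorm (n : ℕ) (u : ℝ) (hu : 0 < u) := norm_mul_exp_neg_le (s := s) (hbound n u hu.le)
  have hsummable : Summable fun n ↦ ∫ u in Set.Ioi (0 : ℝ), ‖(f n u : ℂ) * exp (-(s * u))‖ := by
    refine .of_nonneg_of_le (fun n ↦ integral_nonneg fun u ↦ norm_nonneg _) (fun n ↦ ?_)
      (hw.mul_right (∫ u in Set.Ioi (0 : ℝ), Real.exp ((c - s.re) * u)))
    rw [← integral_const_mul]
    exact setIntegral_mono_on (hm n).1.norm (hexp.const_mul _) measurableSet_Ioi (hnorm n)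
  have hterm (u : ℝ) : ((∑' n, f n u : ℝ) : ℂ) * exp (-(s * u)) =
      ∑' n, (f n u : ℂ) * exp (-(s * u)) := by rw [tsum_mul_right, ofReal_tsum]
  have hcont := (continuousOn_tsum_of_abs_le_mul_exp hf hw hbound).mono Set.Ioi_subset_Ici_self
  refine ⟨(hexp.const_mul (∑' n, w n)).mono' (ContinuousOn.aestronglyMeasurable
    ((continuous_ofReal.comp_continuousOn hcont).mul (by fun_prop)) measurableSet_Ioi) ?_, ?_⟩
  · refine (ae_restrict_iff' measurableSet_Ioi).2 (.of_forall fun u hu ↦ ?_)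
    rw [hterm, ← tsum_mul_right]
    exact tsum_of_norm_bounded (hw.mul_right _).hasSum fun n ↦ hnorm n u hu
  · simp only [hterm, ← fun n ↦ (hm n).2]
    exact (hasSum_integral_of_summable_integral_norm (fun n ↦ (hm n).1) hsummable).tsum_eq.symm

end Tsum

open FourierTransform in
lemma eq_zero_of_hasLaplace_zero {D : ℝ → ℂ} (hD : ContinuousOn D (Set.Ici 0)) (hD0 : D 0 = 0)
    {σ : ℝ} (h : ∀ s : ℂ, s.re = σ → HasLaplace D s 0) {u : ℝ} (hu : 0 ≤ u) : D u = 0 := by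
  set E : ℝ → ℂ := fun u ↦ D (max u 0) * exp (-(σ * u)) with hE
  have hcont : Continuous E :=
    (hD.comp_continuous (by fun_prop) fun u ↦ le_max_right u 0).mul (by fun_prop)
  have hindicator (G : ℝ → ℂ) : (fun u ↦ E u * G u) =
      Set.indicator (Set.Ioi 0) fun u : ℝ ↦ D u * exp (-(σ * u)) * G u := by
    funext u
    rcases lt_or_ge 0 u with hu | hu
    · rw [Set.indicator_of_mem (Set.mem_Ioi.2 hu)]
      simp only [hE, max_eq_left hu.le]
    · rw [Set.indicator_of_notMem (Set.notMem_Ioi.2 hu)]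
      simp only [hE, max_eq_right hu, hD0, zero_mul]
  have hint : Integrable E := by
    have hone := hindicator fun _ ↦ 1
    simp only [mul_one] at hone
    rw [show E = fun u ↦ E u from rfl, hone, integrable_indicator_iff measurableSet_Ioi]
    exact (h σ (ofReal_re σ)).1
  have hfourier : 𝓕 E = 0 := by
    funext w
    rw [Real.fourier_real_eq_integral_exp_smul]
    simp only [smul_eq_mul, mul_comm _ (E _)]
    rw [hindicator, integral_indicator measurableSet_Ioi, Pi.zero_apply,
      ← (h (σ + (2 * Real.pi * w : ℝ) * I) (by simp)).2]
    congr with v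
    rw [mul_assoc, ← exp_add]
    push_cast
    ring_nf
  have hinv := hcont.fourierInv_fourier_eq hint (hfourier ▸ integrable_zero _ _ _)
  have hEu : E u = 0 := by
    rw [← hinv, hfourier]
    simp [Real.fourierInv_eq']
  simp only [hE, max_eq_left hu] at hEu
  exact (mul_eq_zero.1 hEu).resolve_right (exp_ne_zero _)

section Integral

variable {f : ℝ → ℝ → ℝ} {w : ℝ → ℝ} {c : ℝ}

lemma continuousOn_integral_of_abs_le_mul_exp (hf : Continuous (Function.uncurry f))
    (hw : Integrable w) (hbound : ∀ t u, 0 ≤ u → |f t u| ≤ w t * Real.exp (c * u)) :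
    ContinuousOn (fun u ↦ ∫ t, f t u) (Set.Ici 0) := by
  have hdamped : ContinuousOn (fun u ↦ ∫ t, f t u * Real.exp (-(c * u))) (Set.Ici 0) := by
    refine continuousOn_of_dominated (fun u _ ↦ ?_) (fun u hu ↦ .of_forall fun t ↦ ?_) hw
      (.of_forall fun t ↦ ?_)
    · exact ((hf.comp (by fun_prop : Continuous fun t : ℝ ↦ (t, u))).mul
        continuous_const).aestronglyMeasurable
    · rw [Real.norm_eq_abs, abs_mul, Real.abs_exp, Real.exp_neg, ← div_eq_mul_inv,
        div_le_iff₀ (Real.exp_pos _)]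
      exact hbound t u hu
    · exact ((hf.comp (by fun_prop : Continuous fun u : ℝ ↦ (t, u))).mul
        (by fun_prop)).continuousOn
  have hexp : ContinuousOn (fun u ↦ Real.exp (c * u)) (Set.Ici 0) := by fun_prop
  refine (hdamped.mul hexp).congr fun u _ ↦ ?_
  simp only [Pi.mul_apply]
  rw [integral_mul_const, mul_assoc, ← Real.exp_add, neg_add_cancel, Real.exp_zero, mul_one]

lemma hasLaplace_integral (hf : Continuous (Function.uncurry f)) (hw : Integrable w)
    (hbound : ∀ t u, 0 ≤ u → |f t u| ≤ w t * Real.exp (c * u)) {s : ℂ} {m : ℝ → ℂ} (hs : c < s.re)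
    (hm : ∀ t, HasLaplace (fun u ↦ f t u) s (m t)) :
    HasLaplace (fun u ↦ (∫ t, f t u : ℝ)) s (∫ t, m t) := by
  have hexp : IntegrableOn (fun u : ℝ ↦ Real.exp ((c - s.re) * u)) (Set.Ioi 0) :=
    integrableOn_exp_mul_Ioi (sub_neg.2 hs) 0
  have hprod : (volume : Measure ℝ).prod (volume.restrict (Set.Ioi (0 : ℝ))) =
      (volume.prod volume).restrict (Set.univ ×ˢ Set.Ioi (0 : ℝ)) := by
    rw [← Measure.prod_restrict, Measure.restrict_univ]
  have hint : Integrable (Function.uncurry fun t u : ℝ ↦ (f t u : ℂ) * exp (-(s * u)))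
      ((volume : Measure ℝ).prod (volume.restrict (Set.Ioi (0 : ℝ)))) := by
    refine (hw.mul_prod hexp).mono' (Continuous.aestronglyMeasurable
      ((continuous_ofReal.comp hf).mul (by fun_prop))) ?_
    rw [hprod, ae_restrict_iff' (MeasurableSet.univ.prod measurableSet_Ioi)]
    exact .of_forall fun p hp ↦ norm_mul_exp_neg_le (hbound p.1 p.2 (le_of_lt hp.2))
  have hswap (u : ℝ) : ((∫ t, f t u : ℝ) : ℂ) * exp (-(s * u)) =
      ∫ t, (f t u : ℂ) * exp (-(s * u)) := by rw [integral_mul_const, integral_complex_ofReal]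
  simp only [HasLaplace, hswap]
  refine ⟨hint.integral_prod_right, ?_⟩
  rw [← integral_integral_swap hint]
  simp only [fun t ↦ (hm t).2]

end Integral

/-! ### The explicit formula -/

/-- The density `Re (ξ'/ξ)(b + it)` on the vertical line of abscissa `b`, which recovers `ξ'/ξ` to
the right of that line by the Poisson formula. -/
noncomputable def boundaryDensity (b t : ℝ) : ℝ := (logDeriv xi (b + t * I)).re

section BoundaryDensity

variable {b : ℝ}

lemma boundaryDensity_nonneg_of_RH (h : RH) (hb : 1 / 2 < b) (t : ℝ) : 0 ≤ boundaryDensity b t :=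
  re_logDeriv_xi_nonneg_of_RH h (by simpa using hb)

lemma diffContOnCl_logDeriv_xi_add_of_RH (h : RH) (hb : 1 / 2 < b) :
    DiffContOnCl ℂ (fun ζ ↦ logDeriv xi (b + ζ)) {ζ | 0 < ζ.re} := by
  refine DifferentiableOn.diffContOnCl fun ζ hζ ↦ DifferentiableAt.differentiableWithinAt ?_
  rw [closure_setOfPred_lt_re] at hζ
  have hre : 1 / 2 < ((b : ℂ) + ζ).re := by
    rw [add_re, ofReal_re]
    exact hb.trans_le (le_add_of_nonneg_right hζ)
  exact (differentiableAt_logDeriv_xi (xi_ne_zero_of_RH h hre)).comp ζ (by fun_prop)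

lemma continuous_boundaryDensity_of_RH (h : RH) (hb : 1 / 2 < b) :
    Continuous (boundaryDensity b) :=
  continuous_re.comp (continuous_comp_mul_I (diffContOnCl_logDeriv_xi_add_of_RH h hb))

lemma exists_norm_logDeriv_xi_add_le_of_RH (h : RH) (hb : 1 / 2 < b) :
    ∃ C : ℝ, ∀ ζ : ℂ, 0 ≤ ζ.re → ‖logDeriv xi (b + ζ)‖ ≤ C * (1 + ‖ζ‖) ^ (1 / 2 : ℝ) := by
  obtain ⟨C, hC0, hC⟩ := exists_norm_logDeriv_xi_le_of_RH h (sub_pos.2 hb)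
  refine ⟨C * √(1 + b), fun ζ hζ ↦ ?_⟩
  refine (hC _ (by rw [add_re, ofReal_re]; linarith)).trans ?_
  have hnorm : ‖(b : ℂ) + ζ‖ ≤ b + ‖ζ‖ := by
    simpa only [norm_real, Real.norm_of_nonneg (by linarith : 0 ≤ b)] using norm_add_le (b : ℂ) ζ
  rw [mul_assoc, ← Real.sqrt_eq_rpow, ← Real.sqrt_mul (by linarith)]
  gcongr
  nlinarith [norm_nonneg ζ]

lemma integrable_boundaryDensity_mul_halfPlaneKernel_of_RH (h : RH) (hb : 1 / 2 < b) {z : ℂ}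
    (hz : 0 < z.re) : Integrable fun t ↦ (boundaryDensity b t : ℂ) * halfPlaneKernel z t := by
  obtain ⟨C, hC⟩ := exists_norm_logDeriv_xi_add_le_of_RH h hb
  refine integrable_mul_halfPlaneKernel (C := C) (c := 1 / 2)
    (continuous_ofReal.comp (continuous_boundaryDensity_of_RH h hb)) (by norm_num) (fun t ↦ ?_) hz
  rw [Function.comp_apply]
  rw [norm_real]
  exact (abs_re_le_norm _).trans (by simpa using hC (t * I) (by simp))

lemma integral_boundaryDensity_mul_halfPlaneKernel_of_RH (h : RH) (hb : 1 / 2 < b) {z : ℂ}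
    (hz : 0 < z.re) :
    ∫ t, (boundaryDensity b t : ℂ) * halfPlaneKernel z t = Real.pi * logDeriv xi (b + z) := by
  obtain ⟨C, hC⟩ := exists_norm_logDeriv_xi_add_le_of_RH h hb
  refine integral_re_comp_mul_I_mul_halfPlaneKernel (diffContOnCl_logDeriv_xi_add_of_RH h hb)
    (by norm_num) (by norm_num) hC (fun t ↦ ?_) hz
  have hre : 1 / 2 < ((b : ℂ) + t * I).re := by simpa using hb
  rw [← logDeriv_xi_conj (xi_ne_zero_of_RH h hre), map_add, map_mul, conj_ofReal, conj_ofReal,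
    conj_I, mul_neg]

lemma ofReal_mul_halfPlaneKernel_ofReal (x z t : ℝ) :
    (x : ℂ) * halfPlaneKernel z t = (x * (z / (z ^ 2 + t ^ 2)) : ℝ) := by
  rw [halfPlaneKernel]
  push_cast
  rfl

lemma integrable_boundaryDensity_mul_div_of_RH (h : RH) (hb : 1 / 2 < b) {z : ℝ} (hz : 0 < z) :
    Integrable fun t ↦ boundaryDensity b t * (z / (z ^ 2 + t ^ 2)) := by
  have hint := integrable_boundaryDensity_mul_halfPlaneKernel_of_RH h hb (z := z) hz
  simp only [ofReal_mul_halfPlaneKernel_ofReal] at hint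
  exact hint.re

lemma integral_boundaryDensity_mul_div_of_RH (h : RH) (hb : 1 / 2 < b) {z : ℝ} (hz : 0 < z) :
    ∫ t, boundaryDensity b t * (z / (z ^ 2 + t ^ 2)) =
      Real.pi * (logDeriv xi (b + z : ℝ)).re := by
  have hformula := integral_boundaryDensity_mul_halfPlaneKernel_of_RH h hb (z := z) hz
  simp only [ofReal_mul_halfPlaneKernel_ofReal] at hformula
  rw [integral_complex_ofReal, ← ofReal_add] at hformula
  simpa only [ofReal_re, re_ofReal_mul] using congrArg re hformula

end BoundaryDensity

/-- The contribution `Re ((e^{au} - 1 - au) / a²)`, `a = b + it`, of the boundary point `a` to the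
explicit formula. -/
noncomputable def boundaryKernel (b t u : ℝ) : ℝ :=
  ((exp ((b + t * I) * u) - 1 - (b + t * I) * u) / (b + t * I) ^ 2).re

section BoundaryKernel

variable {b : ℝ}

lemma ofReal_add_ofReal_mul_I_ne_zero (hb : 0 < b) (t : ℝ) : (b + t * I : ℂ) ≠ 0 :=
  ne_zero_of_re_pos (by simpa using hb)

lemma norm_ofReal_add_ofReal_mul_I_sq (b t : ℝ) : ‖(b + t * I : ℂ)‖ ^ 2 = b ^ 2 + t ^ 2 := by
  rw [← normSq_eq_norm_sq, normSq_add_mul_I]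

lemma norm_exp_ofReal_add_mul (b t u : ℝ) :
    ‖exp ((b + t * I) * u)‖ = Real.exp (b * u) := by
  rw [norm_exp]
  simp

lemma continuous_uncurry_boundaryKernel (hb : 0 < b) :
    Continuous (Function.uncurry (boundaryKernel b)) :=
  continuous_re.comp (Continuous.div (by fun_prop) (by fun_prop)
    fun p ↦ pow_ne_zero 2 (ofReal_add_ofReal_mul_I_ne_zero hb p.1))

lemma boundaryKernel_eq (hb : 0 < b) (t u : ℝ) :
    boundaryKernel b t u = (exp ((b + t * I) * u) / (b + t * I) ^ 2).re -
      (1 / (b + t * I : ℂ) ^ 2).re - u * (b / (b ^ 2 + t ^ 2)) := by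
  have hne := ofReal_add_ofReal_mul_I_ne_zero hb t
  have hsplit : (exp ((b + t * I) * u) - 1 - (b + t * I) * u) / (b + t * I : ℂ) ^ 2 =
      exp ((b + t * I) * u) / (b + t * I) ^ 2 - 1 / (b + t * I : ℂ) ^ 2 -
        u * (b + t * I : ℂ)⁻¹ := by
    field_simp
  rw [boundaryKernel, hsplit, sub_re, sub_re, re_ofReal_mul, inv_re, normSq_add_mul_I]
  simp

lemma abs_boundaryKernel_le (hb : 0 < b) (t : ℝ) {u : ℝ} (hu : 0 ≤ u) :
    |boundaryKernel b t u| ≤ 2 * Real.exp (b * u) / (b ^ 2 + t ^ 2) := by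
  have hexp : |(exp ((b + t * I) * u) / (b + t * I) ^ 2).re| ≤
      Real.exp (b * u) / (b ^ 2 + t ^ 2) := by
    refine (abs_re_le_norm _).trans_eq ?_
    rw [norm_div, norm_pow, norm_ofReal_add_ofReal_mul_I_sq, norm_exp_ofReal_add_mul]
  have hone : |(1 / (b + t * I : ℂ) ^ 2).re| ≤ 1 / (b ^ 2 + t ^ 2) := by
    refine (abs_re_le_norm _).trans_eq ?_
    rw [norm_div, norm_pow, norm_ofReal_add_ofReal_mul_I_sq, norm_one]
  have hlinear : 0 ≤ u * (b / (b ^ 2 + t ^ 2)) := by positivity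
  rw [boundaryKernel_eq hb]
  calc _ ≤ Real.exp (b * u) / (b ^ 2 + t ^ 2) + 1 / (b ^ 2 + t ^ 2) +
        u * (b / (b ^ 2 + t ^ 2)) := by
        refine (abs_sub _ _).trans (add_le_add ((abs_sub _ _).trans (add_le_add hexp hone)) ?_)
        rw [abs_of_nonneg hlinear]
    _ = (Real.exp (b * u) + (b * u + 1)) / (b ^ 2 + t ^ 2) := by ring
    _ ≤ 2 * Real.exp (b * u) / (b ^ 2 + t ^ 2) := by
      gcongr
      linarith [Real.add_one_le_exp (b * u)]

lemma ofReal_boundaryKernel (b t u : ℝ) :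
    (boundaryKernel b t u : ℂ) = 1 / 2 *
      ((exp ((b + t * I) * u) - 1 - (b + t * I) * u) / (b + t * I) ^ 2 +
        (exp ((b + (-t : ℝ) * I) * u) - 1 - (b + (-t : ℝ) * I) * u) / (b + (-t : ℝ) * I) ^ 2) := by
  rw [boundaryKernel, re_eq_add_conj]
  simp only [map_div₀, map_sub, map_mul, map_add, map_pow, conj_ofReal, conj_I, map_one,
    ← exp_conj]
  push_cast
  ring_nf

lemma hasLaplace_boundaryKernel (hb : 0 < b) (t : ℝ) {s : ℂ} (hs : b < s.re) :
    HasLaplace (fun u ↦ boundaryKernel b t u) s (1 / s ^ 2 * halfPlaneKernel (s - b) t) := by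
  have hs0 : s ≠ 0 := ne_zero_of_re_pos (hb.trans hs)
  have hne (t : ℝ) : s - (b + t * I) ≠ 0 := ne_zero_of_re_pos (by simpa using hs)
  have hterm (t : ℝ) := hasLaplace_exp_sub_one_sub (ofReal_add_ofReal_mul_I_ne_zero hb t) (s := s)
    (by simpa using hs) (hb.trans hs)
  have hkernel : 1 / s ^ 2 * halfPlaneKernel (s - b) t = 1 / 2 *
      (1 / (s ^ 2 * (s - (b + t * I))) + 1 / (s ^ 2 * (s - (b + (-t : ℝ) * I)))) := by
    have hplus := hne t
    have hminus := hne (-t)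
    have hprod : (s - b) ^ 2 + (t : ℂ) ^ 2 = (s - (b + t * I)) * (s - (b + (-t : ℝ) * I)) := by
      push_cast
      linear_combination (t : ℂ) ^ 2 * I_sq
    have hmean : s - b = ((s - (b + t * I)) + (s - (b + (-t : ℝ) * I))) / 2 := by
      push_cast
      ring
    rw [halfPlaneKernel, hprod, hmean]
    generalize s - (b + t * I) = x at hplus ⊢
    generalize s - (b + (-t : ℝ) * I) = y at hminus ⊢
    field_simp
    ring
  rw [hkernel]
  simp only [ofReal_boundaryKernel]
  exact ((hterm t).add (hterm (-t))).const_mul (1 / 2)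

end BoundaryKernel

section BoundaryIntegral

variable {b : ℝ}

lemma abs_boundaryDensity_mul_boundaryKernel_le_of_RH (h : RH) (hb : 1 / 2 < b) (t : ℝ) {u : ℝ}
    (hu : 0 ≤ u) : |boundaryDensity b t * boundaryKernel b t u| ≤
      2 / b * (boundaryDensity b t * (b / (b ^ 2 + t ^ 2))) * Real.exp (b * u) := by
  have hb0 : 0 < b := by linarith
  have hg := boundaryDensity_nonneg_of_RH h hb t
  rw [abs_mul, abs_of_nonneg hg]
  refine (mul_le_mul_of_nonneg_left (abs_boundaryKernel_le hb0 t hu) hg).trans_eq ?_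
  field_simp

lemma continuous_uncurry_boundaryDensity_mul_boundaryKernel_of_RH (h : RH) (hb : 1 / 2 < b) :
    Continuous (Function.uncurry fun t u ↦ boundaryDensity b t * boundaryKernel b t u) :=
  ((continuous_boundaryDensity_of_RH h hb).comp continuous_fst).mul
    (continuous_uncurry_boundaryKernel (by linarith))

lemma integrable_boundaryDensity_mul_boundaryKernel_of_RH (h : RH) (hb : 1 / 2 < b) {u : ℝ}
    (hu : 0 ≤ u) : Integrable fun t ↦ boundaryDensity b t * boundaryKernel b t u :=
  (((integrable_boundaryDensity_mul_div_of_RH h hb (by linarith)).const_mul (2 / b)).mul_const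
      (Real.exp (b * u))).mono'
    ((continuous_uncurry_boundaryDensity_mul_boundaryKernel_of_RH h hb).comp
      (by fun_prop : Continuous fun t : ℝ ↦ (t, u))).aestronglyMeasurable
    (.of_forall fun t ↦ abs_boundaryDensity_mul_boundaryKernel_le_of_RH h hb t hu)

lemma continuousOn_integral_boundaryKernel_of_RH (h : RH) (hb : 1 / 2 < b) :
    ContinuousOn (fun u ↦ ∫ t, boundaryDensity b t * boundaryKernel b t u) (Set.Ici 0) :=
  continuousOn_integral_of_abs_le_mul_exp
    (continuous_uncurry_boundaryDensity_mul_boundaryKernel_of_RH h hb)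
    ((integrable_boundaryDensity_mul_div_of_RH h hb (by linarith)).const_mul (2 / b))
    fun t _ hu ↦ abs_boundaryDensity_mul_boundaryKernel_le_of_RH h hb t hu

lemma hasLaplace_integral_boundaryKernel_of_RH (h : RH) (hb : 1 / 2 < b) {s : ℂ} (hs : b < s.re) :
    HasLaplace (fun u ↦ (∫ t, boundaryDensity b t * boundaryKernel b t u : ℝ)) s
      (Real.pi * logDeriv xi s / s ^ 2) := by
  have hb0 : 0 < b := by linarith
  have hvalue : Real.pi * logDeriv xi s / s ^ 2 =
      ∫ t : ℝ, boundaryDensity b t * (1 / s ^ 2 * halfPlaneKernel (s - b) t) := by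
    have hpoisson := integral_boundaryDensity_mul_halfPlaneKernel_of_RH h hb (z := s - b)
      (by rwa [sub_re, ofReal_re, sub_pos])
    rw [add_sub_cancel] at hpoisson
    simp only [mul_left_comm (ofReal _) (1 / s ^ 2)]
    rw [integral_const_mul, hpoisson]
    ring
  rw [hvalue]
  refine hasLaplace_integral (continuous_uncurry_boundaryDensity_mul_boundaryKernel_of_RH h hb)
    ((integrable_boundaryDensity_mul_div_of_RH h hb hb0).const_mul (2 / b))
    (fun t _ hu ↦ abs_boundaryDensity_mul_boundaryKernel_le_of_RH h hb t hu) hs fun t ↦ ?_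
  simp only [ofReal_mul]
  exact (hasLaplace_boundaryKernel hb0 t hs).const_mul _

end BoundaryIntegral

section SmoothedPsi

open ArithmeticFunction (vonMangoldt)

/-- The integral `∫₀ᵘ ψ(e^v) dv`, written as a sum over prime powers. -/
noncomputable def smoothedPsi (u : ℝ) : ℝ := ∑' n : ℕ, vonMangoldt n * max (u - Real.log n) 0

lemma term_vonMangoldt (s : ℂ) (n : ℕ) :
    LSeries.term (fun n ↦ (vonMangoldt n : ℂ)) s n = vonMangoldt n * exp (-(s * Real.log n)) := by
  rcases eq_or_ne n 0 with rfl | hn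
  · simp
  · rw [LSeries.term_of_ne_zero hn, cpow_def_of_ne_zero (Nat.cast_ne_zero.2 hn), div_eq_mul_inv,
      ← exp_neg, natCast_log, mul_comm s]

lemma summable_vonMangoldt_mul_exp {c : ℝ} (hc : 1 < c) :
    Summable fun n : ℕ ↦ vonMangoldt n * Real.exp (-(c * Real.log n)) := by
  have hsum := (ArithmeticFunction.LSeriesSummable_vonMangoldt (s := c) (by simpa using hc)).norm
  refine hsum.congr fun n ↦ ?_
  rw [term_vonMangoldt, norm_mul, norm_exp_neg_mul_ofReal, norm_real, ofReal_re,
    Real.norm_of_nonneg ArithmeticFunction.vonMangoldt_nonneg]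

lemma abs_vonMangoldt_mul_max_le {c : ℝ} (hc : 1 ≤ c) (n : ℕ) (u : ℝ) :
    |vonMangoldt n * max (u - Real.log n) 0| ≤
      vonMangoldt n * Real.exp (-(c * Real.log n)) * Real.exp (c * u) := by
  have hΛ : 0 ≤ vonMangoldt n := ArithmeticFunction.vonMangoldt_nonneg
  rw [abs_of_nonneg (mul_nonneg hΛ (le_max_right _ _)), mul_assoc, ← Real.exp_add]
  refine mul_le_mul_of_nonneg_left (max_le ?_ (Real.exp_nonneg _)) hΛ
  rcases le_total 0 (u - Real.log n) with hu | hu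
  · have hexp := Real.add_one_le_exp (-(c * Real.log n) + c * u)
    nlinarith
  · exact hu.trans (Real.exp_nonneg _)

lemma summable_smoothedPsi (u : ℝ) :
    Summable fun n : ℕ ↦ vonMangoldt n * max (u - Real.log n) 0 :=
  .of_norm_bounded ((summable_vonMangoldt_mul_exp one_lt_two).mul_right _)
    fun n ↦ abs_vonMangoldt_mul_max_le one_le_two n u

lemma smoothedPsi_zero : smoothedPsi 0 = 0 := by
  have hterm (n : ℕ) : max (0 - Real.log n) 0 = 0 :=
    max_eq_right (by linarith [Real.log_natCast_nonneg n])
  simp only [smoothedPsi, hterm, mul_zero, tsum_zero]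

lemma continuousOn_smoothedPsi : ContinuousOn smoothedPsi (Set.Ici 0) :=
  continuousOn_tsum_of_abs_le_mul_exp (fun n ↦ by fun_prop)
    (summable_vonMangoldt_mul_exp one_lt_two) fun n u _ ↦ abs_vonMangoldt_mul_max_le one_le_two n u

lemma hasLaplace_smoothedPsi {s : ℂ} (hs : 1 < s.re) :
    HasLaplace (fun u ↦ smoothedPsi u) s (-(deriv riemannZeta s / riemannZeta s) / s ^ 2) := by
  obtain ⟨c, hc, hcs⟩ := exists_between hs
  have hvalue : -(deriv riemannZeta s / riemannZeta s) / s ^ 2 =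
      ∑' n : ℕ, vonMangoldt n * (exp (-(s * Real.log n)) * (1 / s ^ 2)) := by
    simp only [← mul_assoc, ← term_vonMangoldt]
    rw [tsum_mul_right, ← LSeries, ← neg_div,
      ← ArithmeticFunction.LSeries_vonMangoldt_eq_deriv_riemannZeta_div hs, mul_one_div]
  rw [hvalue]
  refine hasLaplace_tsum (fun n ↦ by fun_prop) (summable_vonMangoldt_mul_exp hc)
    (fun n u _ ↦ abs_vonMangoldt_mul_max_le hc.le n u) hcs fun n ↦ ?_
  simp only [ofReal_mul]
  exact (hasLaplace_max_sub (by linarith) (Real.log_natCast_nonneg n)).const_mul _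

end SmoothedPsi

/-- The function with Laplace transform `trivialZeroSum s / s ^ 2`. -/
noncomputable def trivialZeroCorrection (u : ℝ) : ℝ :=
  ∑' n : ℕ, (1 - Real.exp (-(2 * (n + 1)) * u)) / (4 * (n + 1) ^ 2)

section TrivialZeroCorrection

lemma trivialZeroCorrection_zero : trivialZeroCorrection 0 = 0 := by simp [trivialZeroCorrection]

lemma abs_trivialZeroCorrection_term_le (n : ℕ) {u : ℝ} (hu : 0 ≤ u) :
    |(1 - Real.exp (-(2 * (n + 1)) * u)) / (4 * ((n : ℝ) + 1) ^ 2)| ≤ 1 / ((n : ℝ) + 1) ^ 2 := by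
  have hexp : Real.exp (-(2 * ((n : ℝ) + 1)) * u) ≤ 1 := by
    rw [Real.exp_le_one_iff, neg_mul]
    exact neg_nonpos.2 (by positivity)
  have hpos := Real.exp_pos (-(2 * ((n : ℝ) + 1)) * u)
  have hsq : 0 < ((n : ℝ) + 1) ^ 2 := by positivity
  rw [abs_of_nonneg (div_nonneg (by linarith) (by positivity))]
  exact div_le_div₀ zero_le_one (by linarith) hsq (by linarith)

lemma abs_trivialZeroCorrection_term_le_mul_exp (n : ℕ) (u : ℝ) (hu : 0 ≤ u) :
    |(1 - Real.exp (-(2 * (n + 1)) * u)) / (4 * ((n : ℝ) + 1) ^ 2)| ≤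
      1 / ((n : ℝ) + 1) ^ 2 * Real.exp (0 * u) := by
  rw [zero_mul, Real.exp_zero, mul_one]
  exact abs_trivialZeroCorrection_term_le n hu

lemma summable_trivialZeroCorrection {u : ℝ} (hu : 0 ≤ u) :
    Summable fun n : ℕ ↦ (1 - Real.exp (-(2 * (n + 1)) * u)) / (4 * ((n : ℝ) + 1) ^ 2) :=
  .of_norm_bounded summable_one_div_natCast_add_one_sq
    fun n ↦ abs_trivialZeroCorrection_term_le n hu

lemma continuousOn_trivialZeroCorrection : ContinuousOn trivialZeroCorrection (Set.Ici 0) :=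
  continuousOn_tsum_of_abs_le_mul_exp (fun n ↦ by fun_prop) summable_one_div_natCast_add_one_sq
    abs_trivialZeroCorrection_term_le_mul_exp

lemma hasLaplace_trivialZeroCorrection {s : ℂ} (hs : 0 < s.re) :
    HasLaplace (fun u ↦ trivialZeroCorrection u) s (trivialZeroSum s / s ^ 2) := by
  rw [trivialZeroSum, ← tsum_div_const]
  refine hasLaplace_tsum (fun n ↦ by fun_prop) summable_one_div_natCast_add_one_sq
    abs_trivialZeroCorrection_term_le_mul_exp hs fun n ↦ ?_
  have hre : ((-(2 * ((n : ℝ) + 1)) : ℝ) : ℂ).re < s.re := by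
    rw [ofReal_re]
    linarith [n.cast_nonneg (α := ℝ)]
  have hs0 : s ≠ 0 := ne_zero_of_re_pos hs
  have hn : (n : ℂ) + 1 ≠ 0 := n.cast_add_one_ne_zero
  have hsn : s + 2 * ((n : ℂ) + 1) ≠ 0 := by
    have hne := ne_zero_of_re_pos (by rwa [sub_re, sub_pos] :
      0 < (s - ((-(2 * ((n : ℝ) + 1)) : ℝ) : ℂ)).re)
    push_cast at hne
    rwa [sub_neg_eq_add] at hne
  convert ((hasLaplace_one hs).sub (hasLaplace_exp hre)).const_mul (1 / (4 * ((n : ℂ) + 1) ^ 2))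
    using 1
  · funext u
    push_cast
    ring
  · rw [trivialZeroTerm_eq_div hs]
    push_cast
    rw [sub_neg_eq_add]
    field_simp
    ring

end TrivialZeroCorrection

lemma smoothedPsi_eq_of_RH (h : RH) {b : ℝ} (hb : 1 / 2 < b) {u : ℝ} (hu : 0 ≤ u) :
    smoothedPsi u = (Real.exp u - 1 - u) + xiLogDerivConst * u + trivialZeroCorrection u -
      1 / Real.pi * ∫ t, boundaryDensity b t * boundaryKernel b t u := by
  set D : ℝ → ℝ := fun u ↦ smoothedPsi u - (Real.exp u - 1 - u) - xiLogDerivConst * u -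
    trivialZeroCorrection u + 1 / Real.pi * ∫ t, boundaryDensity b t * boundaryKernel b t u with hD
  have hcont : ContinuousOn D (Set.Ici 0) :=
    (((continuousOn_smoothedPsi.sub (by fun_prop)).sub (by fun_prop)).sub
      continuousOn_trivialZeroCorrection).add
      (continuousOn_const.mul (continuousOn_integral_boundaryKernel_of_RH h hb))
  have hzero : D 0 = 0 := by
    simp [hD, smoothedPsi_zero, trivialZeroCorrection_zero, boundaryKernel]
  have hlaplace (s : ℂ) (hs : s.re = max b 1 + 1) : HasLaplace (fun u ↦ D u) s 0 := by
    have hbs : b < s.re := by linarith [le_max_left b 1]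
    have h1s : 1 < s.re := by linarith [le_max_right b 1]
    have h0s : 0 < s.re := zero_lt_one.trans h1s
    have hs0 : s ≠ 0 := ne_zero_of_re_pos h0s
    have hs1 : s - 1 ≠ 0 := ne_zero_of_re_pos (by simpa using h1s)
    have hpi : (Real.pi : ℂ) ≠ 0 := ofReal_ne_zero.2 Real.pi_ne_zero
    convert ((((hasLaplace_smoothedPsi h1s).sub (hasLaplace_exp_sub_one_sub one_ne_zero
      (by simpa using h1s) h0s)).sub ((hasLaplace_ofReal h0s).const_mul xiLogDerivConst)).sub
      (hasLaplace_trivialZeroCorrection h0s)).add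
      ((hasLaplace_integral_boundaryKernel_of_RH h hb hbs).const_mul (1 / Real.pi : ℂ)) using 1
    · funext u
      simp only [hD]
      push_cast
      simp
    · rw [logDeriv_xi_eq h1s]
      field_simp
      ring
  have hDu : D u = 0 := ofReal_eq_zero.1
    (eq_zero_of_hasLaplace_zero (continuous_ofReal.comp_continuousOn hcont) (by simp [hzero])
      hlaplace hu)
  simp only [hD] at hDu
  linarith

/-! ### The error term in the prime number theorem under the Riemann hypothesis -/

section SmoothedPsi

open ArithmeticFunction (vonMangoldt)

lemma hasSum_psi_exp (v : ℝ) :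
    HasSum (fun n : ℕ ↦ if Real.log n ≤ v then vonMangoldt n else 0)
      (Chebyshev.psi (Real.exp v)) := by
  have hmem {n : ℕ} (hn : 0 < n) : n ≤ ⌊Real.exp v⌋₊ ↔ Real.log n ≤ v := by
    rw [Nat.le_floor_iff (Real.exp_nonneg v), Real.log_le_iff_le_exp (Nat.cast_pos.2 hn)]
  have hsum : ∑ n ∈ Finset.Ioc 0 ⌊Real.exp v⌋₊, (if Real.log n ≤ v then vonMangoldt n else 0) =
      Chebyshev.psi (Real.exp v) :=
    Finset.sum_congr rfl fun n hn ↦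
      if_pos ((hmem (Finset.mem_Ioc.1 hn).1).1 (Finset.mem_Ioc.1 hn).2)
  rw [← hsum]
  refine hasSum_sum_of_ne_finset_zero fun n hn ↦ ?_
  rcases n.eq_zero_or_pos with rfl | hpos
  · simp
  · exact if_neg fun hlog ↦ hn (Finset.mem_Ioc.2 ⟨hpos, (hmem hpos).2 hlog⟩)

lemma mul_psi_exp_le_smoothedPsi_sub (u : ℝ) {δ : ℝ} (hδ : 0 ≤ δ) :
    δ * Chebyshev.psi (Real.exp u) ≤ smoothedPsi (u + δ) - smoothedPsi u := by
  refine hasSum_le (fun n ↦ ?_) ((hasSum_psi_exp u).mul_left δ)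
    ((summable_smoothedPsi (u + δ)).hasSum.sub (summable_smoothedPsi u).hasSum)
  rw [← mul_sub]
  split_ifs with hn
  · rw [max_eq_left (by linarith), max_eq_left (by linarith)]
    exact le_of_eq (by ring)
  · rw [mul_zero]
    exact mul_nonneg ArithmeticFunction.vonMangoldt_nonneg
      (sub_nonneg.2 (max_le_max (by linarith) le_rfl))

lemma smoothedPsi_sub_le_mul_psi_exp (u : ℝ) {δ : ℝ} (hδ : 0 ≤ δ) :
    smoothedPsi (u + δ) - smoothedPsi u ≤ δ * Chebyshev.psi (Real.exp (u + δ)) := by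
  refine hasSum_le (fun n ↦ ?_)
    ((summable_smoothedPsi (u + δ)).hasSum.sub (summable_smoothedPsi u).hasSum)
    ((hasSum_psi_exp (u + δ)).mul_left δ)
  rw [← mul_sub]
  split_ifs with hn
  · rw [mul_comm δ, max_eq_left (by linarith)]
    refine mul_le_mul_of_nonneg_left ?_ ArithmeticFunction.vonMangoldt_nonneg
    linarith [le_max_left (u - Real.log n) 0]
  · rw [max_eq_right (by linarith), max_eq_right (by linarith), sub_zero, mul_zero, mul_zero]

lemma re_deriv_riemannZeta_div_nonpos {x : ℝ} (hx : 1 < x) :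
    (deriv riemannZeta x / riemannZeta x).re ≤ 0 := by
  have hre : 1 < (x : ℂ).re := by simpa using hx
  have hsum := hasSum_re (ArithmeticFunction.LSeriesSummable_vonMangoldt hre).hasSum
  have hnonneg : 0 ≤ (LSeries (fun n ↦ (vonMangoldt n : ℂ)) x).re := by
    refine hsum.nonneg fun n ↦ ?_
    rw [term_vonMangoldt, ← ofReal_mul, ← ofReal_neg, ← ofReal_exp, ← ofReal_mul, ofReal_re]
    exact mul_nonneg ArithmeticFunction.vonMangoldt_nonneg (Real.exp_nonneg _)
  rw [ArithmeticFunction.LSeries_vonMangoldt_eq_deriv_riemannZeta_div hre, neg_div, neg_re]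
    at hnonneg
  linarith

end SmoothedPsi

lemma tsum_one_div_natCast_add_one_sq_le : ∑' n : ℕ, 1 / ((n : ℝ) + 1) ^ 2 ≤ 4 := by
  have hsum : HasSum (fun n : ℕ ↦ 1 / ((n : ℝ) + 1) ^ 2) (Real.pi ^ 2 / 6) := by
    simpa using (hasSum_nat_add_iff' 1).2 hasSum_zeta_two
  rw [hsum.tsum_eq]
  nlinarith [Real.pi_lt_four, Real.pi_pos]

lemma exp_neg_mul_sub_exp_neg_mul_add_le {m u δ : ℝ} (hm : 0 ≤ m) (hu : 1 ≤ u) (hδ : 0 ≤ δ) :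
    Real.exp (-m * u) - Real.exp (-m * (u + δ)) ≤ δ := by
  have hmu : Real.exp (-m * u) * m ≤ 1 := by
    calc Real.exp (-m * u) * m ≤ Real.exp (-m) * Real.exp m := by
          refine mul_le_mul (Real.exp_le_exp.2 (by nlinarith)) ?_ hm (Real.exp_nonneg _)
          linarith [Real.add_one_le_exp m]
      _ = 1 := by rw [← Real.exp_add, neg_add_cancel, Real.exp_zero]
  calc Real.exp (-m * u) - Real.exp (-m * (u + δ))
      = Real.exp (-m * u) * (1 - Real.exp (-m * δ)) := by rw [mul_add, Real.exp_add]; ring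
    _ ≤ Real.exp (-m * u) * (m * δ) := by
        refine mul_le_mul_of_nonneg_left ?_ (Real.exp_nonneg _)
        linarith [Real.add_one_le_exp (-m * δ)]
    _ = Real.exp (-m * u) * m * δ := by ring
    _ ≤ δ := mul_le_of_le_one_left hδ hmu

lemma trivialZeroCorrection_sub_mem_Icc {u δ : ℝ} (hu : 1 ≤ u) (hδ : 0 ≤ δ) :
    trivialZeroCorrection (u + δ) - trivialZeroCorrection u ∈ Set.Icc 0 δ := by
  have hsum := (summable_trivialZeroCorrection (u := u + δ) (by linarith)).hasSum.sub
    (summable_trivialZeroCorrection (u := u) (by linarith)).hasSum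
  constructor
  · refine hsum.nonneg fun n ↦ ?_
    rw [← sub_div]
    refine div_nonneg (sub_nonneg.2 (sub_le_sub_left (Real.exp_le_exp.2 ?_) _)) (by positivity)
    nlinarith [mul_nonneg n.cast_add_one_pos.le hδ]
  · have hle (n : ℕ) : (1 - Real.exp (-(2 * (n + 1)) * (u + δ))) / (4 * ((n : ℝ) + 1) ^ 2) -
        (1 - Real.exp (-(2 * (n + 1)) * u)) / (4 * ((n : ℝ) + 1) ^ 2) ≤
        δ / 4 * (1 / ((n : ℝ) + 1) ^ 2) := by
      rw [← sub_div, div_mul_div_comm, mul_one]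
      refine div_le_div_of_nonneg_right ?_ (by positivity)
      linarith [exp_neg_mul_sub_exp_neg_mul_add_le (m := 2 * ((n : ℝ) + 1)) (by positivity) hu hδ]
    have htotal := hasSum_le hle hsum (summable_one_div_natCast_add_one_sq.hasSum.mul_left (δ / 4))
    refine htotal.trans ?_
    linarith [mul_le_mul_of_nonneg_left tsum_one_div_natCast_add_one_sq_le
      (by positivity : 0 ≤ δ / 4)]

lemma xiLogDerivConst_mem_Icc : xiLogDerivConst ∈ Set.Icc (-2) (-1 / 2) := by
  have hγ := Real.one_half_lt_eulerMascheroniConstant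
  have hγ' := Real.eulerMascheroniConstant_lt_two_thirds
  have hlog := Real.log_le_sub_one_of_pos Real.pi_pos
  have hpi := Real.pi_lt_d2
  have hlog' : 1 / 2 ≤ Real.log Real.pi := by
    have hinv : Real.pi⁻¹ ≤ 2⁻¹ := inv_anti₀ two_pos Real.two_le_pi
    linarith [Real.one_sub_inv_le_log_of_pos Real.pi_pos]
  constructor <;> rw [xiLogDerivConst] <;> linarith

lemma re_logDeriv_xi_two_pow_le (j : ℕ) :
    (logDeriv xi ((2 ^ (j + 1) : ℝ) : ℂ)).re ≤ (1 / 2) ^ j + j / 2 := by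
  have hpow : (1 : ℝ) < 2 ^ (j + 1) := one_lt_pow₀ one_lt_two j.succ_ne_zero
  obtain ⟨m, hm⟩ : ∃ m, 2 ^ j = m + 1 := Nat.exists_eq_add_one.2 (by positivity)
  have hcast : ((2 ^ (j + 1) : ℝ) : ℂ) = 2 * ((m : ℂ) + 1) := by
    rw [← Nat.cast_add_one, ← hm, pow_succ']
    push_cast
    rfl
  have htrivial : (trivialZeroSum ((2 ^ (j + 1) : ℝ) : ℂ)).re ≤ 1 / 2 + j / 2 := by
    rw [hcast, trivialZeroSum_two_mul_natCast_add_one, ← hm]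
    have hharmonic := harmonic_le_one_add_log (2 ^ j)
    have hlog : Real.log ((2 ^ j : ℕ) : ℝ) ≤ j := by
      rw [Nat.cast_pow, Real.log_pow, Nat.cast_ofNat]
      exact mul_le_of_le_one_right j.cast_nonneg (by linarith [Real.log_two_lt_d9])
    rw [div_ofNat_re, ratCast_re]
    linarith
  have hpole : (1 / (((2 ^ (j + 1) : ℝ) : ℂ) - 1)).re ≤ (1 / 2) ^ j := by
    rw [← ofReal_one, ← ofReal_sub, ← ofReal_div, ofReal_re, one_div_pow]
    have hone : (1 : ℝ) ≤ 2 ^ j := one_le_pow₀ one_le_two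
    exact one_div_le_one_div_of_le (by positivity) (by rw [pow_succ]; linarith)
  rw [logDeriv_xi_eq (by simpa only [ofReal_re] using hpow), add_re, add_re, add_re, ofReal_re]
  linarith [re_deriv_riemannZeta_div_nonpos hpow, xiLogDerivConst_mem_Icc.2]

section DyadicKernel

/-- The distance from the line `Re s = b` to the point `2 ^ (j + 1)`. -/
noncomputable def dyadicDistance (b : ℝ) (j : ℕ) : ℝ := 2 ^ (j + 1) - b

/-- The Poisson kernel, up to the factor `1 / π`, of the half-plane `b < Re s` at the point
`2 ^ (j + 1)`; finite sums of these kernels majorize the increments of `boundaryKernel`. -/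
noncomputable def dyadicKernel (b : ℝ) (j : ℕ) (t : ℝ) : ℝ :=
  dyadicDistance b j / (dyadicDistance b j ^ 2 + t ^ 2)

variable {b t δ : ℝ} {N : ℕ}

lemma four_thirds_le_dyadicDistance (hb : b ≤ 2 / 3) (j : ℕ) : 4 / 3 ≤ dyadicDistance b j := by
  have hone : (1 : ℝ) ≤ 2 ^ j := one_le_pow₀ one_le_two
  rw [dyadicDistance, pow_succ]
  linarith

lemma dyadicDistance_zero (b : ℝ) : dyadicDistance b 0 = 2 - b := by norm_num [dyadicDistance]

lemma dyadicKernel_nonneg (hb : b ≤ 2 / 3) (j : ℕ) (t : ℝ) : 0 ≤ dyadicKernel b j t := by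
  have hz := four_thirds_le_dyadicDistance hb j
  exact div_nonneg (by linarith) (by positivity)

lemma abs_le_norm_ofReal_add_ofReal_mul_I (b t : ℝ) : |t| ≤ ‖(b + t * I : ℂ)‖ := by
  simpa using abs_im_le_norm (b + t * I : ℂ)

lemma le_dyadicKernel_mul_norm_iff (hb : b ≤ 2 / 3) (j : ℕ) (t : ℝ) :
    1.1 ≤ 4 * dyadicKernel b j t * ‖(b + t * I : ℂ)‖ ↔
      1.1 * (dyadicDistance b j ^ 2 + t ^ 2) ≤ 4 * dyadicDistance b j * ‖(b + t * I : ℂ)‖ := by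
  have hz := four_thirds_le_dyadicDistance hb j
  rw [dyadicKernel, ← mul_div_assoc, div_mul_eq_mul_div, le_div_iff₀ (by positivity)]

lemma le_dyadicKernel_zero_mul_norm (hb : 1 / 2 ≤ b) (hb' : b ≤ 2 / 3)
    (ht : |t| ≤ dyadicDistance b 0) : 1.1 ≤ 4 * dyadicKernel b 0 t * ‖(b + t * I : ℂ)‖ := by
  rw [le_dyadicKernel_mul_norm_iff hb']
  have hz : dyadicDistance b 0 ≤ 3 / 2 := by rw [dyadicDistance_zero]; linarith
  have hz0 : 0 ≤ dyadicDistance b 0 := by linarith [four_thirds_le_dyadicDistance hb' 0]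
  set z := dyadicDistance b 0
  have hsq : t ^ 2 ≤ z ^ 2 := sq_le_sq.2 (by rwa [abs_of_nonneg hz0])
  refine (sq_le_sq₀ (by positivity) (by positivity)).1 ?_
  rw [mul_pow _ ‖_‖, norm_ofReal_add_ofReal_mul_I_sq]
  have hzsq : z ^ 2 ≤ 9 / 4 := by nlinarith
  have hbsq : 1 / 4 ≤ b ^ 2 := by nlinarith
  calc (1.1 * (z ^ 2 + t ^ 2)) ^ 2
      = 1.21 * (z ^ 2 * z ^ 2 + 2 * z ^ 2 * t ^ 2 + t ^ 2 * t ^ 2) := by ring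
    _ ≤ 1.21 * (z ^ 2 * (9 / 4) + 2 * z ^ 2 * t ^ 2 + z ^ 2 * t ^ 2) := by gcongr
    _ ≤ 16 * z ^ 2 * (1 / 4 + t ^ 2) := by nlinarith [mul_nonneg (sq_nonneg z) (sq_nonneg t)]
    _ ≤ (4 * z) ^ 2 * (b ^ 2 + t ^ 2) := by
        rw [mul_pow]
        gcongr
        norm_num

lemma le_dyadicKernel_mul_norm_of_dyadicDistance_lt (hb : b ≤ 2 / 3) {j : ℕ}
    (hj : dyadicDistance b j < |t|) (hj' : |t| ≤ dyadicDistance b (j + 1)) :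
    1.1 ≤ 4 * dyadicKernel b j t * ‖(b + t * I : ℂ)‖ := by
  rw [le_dyadicKernel_mul_norm_iff hb, ← sq_abs t]
  have hz := four_thirds_le_dyadicDistance hb j
  have hsucc : dyadicDistance b (j + 1) = 2 * dyadicDistance b j + b := by
    rw [dyadicDistance, dyadicDistance, pow_succ _ (j + 1)]
    ring
  set z := dyadicDistance b j
  have ht : |t| ≤ 5 / 2 * z := by linarith
  calc 1.1 * (z ^ 2 + |t| ^ 2) ≤ 4 * z * |t| := by
        nlinarith [mul_nonneg (sub_nonneg.2 hj.le) (sub_nonneg.2 ht)]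
    _ ≤ 4 * z * ‖(b + t * I : ℂ)‖ := by
        gcongr
        exact abs_le_norm_ofReal_add_ofReal_mul_I b t

lemma exists_le_dyadicKernel_mul_norm (hb : 1 / 2 ≤ b) (hb' : b ≤ 2 / 3) {J : ℕ}
    (ht : |t| ≤ dyadicDistance b J) :
    ∃ j ≤ J, 1.1 ≤ 4 * dyadicKernel b j t * ‖(b + t * I : ℂ)‖ := by
  induction J with
  | zero => exact ⟨0, le_rfl, le_dyadicKernel_zero_mul_norm hb hb' ht⟩
  | succ J ih =>
    rcases le_or_gt |t| (dyadicDistance b J) with hJ | hJ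
    · obtain ⟨j, hj, hle⟩ := ih hJ
      exact ⟨j, by lia, hle⟩
    · exact ⟨J, J.le_succ, le_dyadicKernel_mul_norm_of_dyadicDistance_lt hb' hJ ht⟩

lemma norm_exp_sub_one_le_of_re_nonneg {z : ℂ} (hz : 0 ≤ z.re) :
    ‖exp z - 1‖ ≤ Real.exp z.re * ‖z‖ := by
  simpa using (convex_halfSpace_re_le z.re).norm_image_sub_le_of_norm_hasDerivWithin_le
    (fun w _ ↦ (hasDerivAt_exp w).hasDerivWithinAt)
    (fun w hw ↦ (norm_exp w).trans_le (Real.exp_le_exp.2 hw)) (x := 0) (y := z) hz (le_refl z.re)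

lemma pos_of_mul_two_pow_eq_two (hδ : δ * 2 ^ N = 2) : 0 < δ :=
  pos_of_mul_pos_left (by rw [hδ]; exact two_pos) (by positivity)

lemma le_one_eighth_of_mul_two_pow_eq_two (hN : 4 ≤ N) (hδ : δ * 2 ^ N = 2) : δ ≤ 1 / 8 := by
  have hpow : (2 : ℝ) ^ 4 ≤ 2 ^ N := pow_le_pow_right₀ one_le_two hN
  nlinarith [pos_of_mul_two_pow_eq_two hδ]

lemma norm_exp_sub_one_le_of_abs_le_dyadicDistance (hb : 1 / 2 ≤ b) (hb' : b ≤ 2 / 3)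
    (hδ : 0 ≤ δ) (hexp : Real.exp (b * δ) ≤ 1.1) {J : ℕ} (ht : |t| ≤ dyadicDistance b J) :
    ∃ j ≤ J, ‖exp ((b + t * I) * δ) - 1‖ ≤ 4 * δ * dyadicKernel b j t * (b ^ 2 + t ^ 2) := by
  obtain ⟨j, hj, hle⟩ := exists_le_dyadicKernel_mul_norm hb hb' ht
  have hre : ((b + t * I : ℂ) * δ).re = b * δ := by simp
  have hnorm := norm_exp_sub_one_le_of_re_nonneg (z := (b + t * I) * δ) (by rw [hre]; positivity)
  rw [hre, norm_mul, norm_real, Real.norm_of_nonneg hδ] at hnorm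
  refine ⟨j, hj, ?_⟩
  rw [← norm_ofReal_add_ofReal_mul_I_sq]
  set r := ‖(b + t * I : ℂ)‖
  calc ‖exp ((b + t * I) * δ) - 1‖ ≤ 1.1 * (r * δ) := by
        refine hnorm.trans ?_
        gcongr
    _ ≤ 4 * dyadicKernel b j t * r * (r * δ) := by gcongr
    _ = 4 * δ * dyadicKernel b j t * r ^ 2 := by ring

lemma norm_exp_sub_one_le_of_dyadicDistance_le_abs (hb : b ≤ 2 / 3)
    (hexp : Real.exp (b * δ) ≤ 1.1) {j : ℕ} (hδ : 11 / 6 ≤ δ * dyadicDistance b j)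
    (ht : dyadicDistance b j ≤ |t|) :
    ‖exp ((b + t * I) * δ) - 1‖ ≤ 4 * δ * dyadicKernel b j t * (b ^ 2 + t ^ 2) := by
  have hz := four_thirds_le_dyadicDistance hb j
  set z := dyadicDistance b j with hzdef
  have hsq : z ^ 2 ≤ t ^ 2 := sq_le_sq.2 (by rwa [abs_of_nonneg (by linarith)])
  calc ‖exp ((b + t * I) * δ) - 1‖ ≤ 2.1 := by
        refine (norm_sub_le _ _).trans ?_
        rw [norm_exp_ofReal_add_mul, norm_one]
        linarith
    _ ≤ 4 * (δ * z) * (1 / 2) := by linarith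
    _ ≤ 4 * (δ * z) * ((b ^ 2 + t ^ 2) / (z ^ 2 + t ^ 2)) := by
        refine mul_le_mul_of_nonneg_left ?_ (by linarith)
        rw [div_le_div_iff₀ two_pos (by positivity)]
        linarith [sq_nonneg b]
    _ = 4 * δ * dyadicKernel b j t * (b ^ 2 + t ^ 2) := by
        rw [dyadicKernel, ← hzdef]
        ring

lemma norm_exp_sub_one_le_sum_dyadicKernel (hb : 1 / 2 ≤ b) (hb' : b ≤ 2 / 3) (t : ℝ)
    (hN : 4 ≤ N) (hδ : δ * 2 ^ N = 2) :
    ‖exp ((b + t * I) * δ) - 1‖ ≤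
      4 * δ * (∑ j ∈ Finset.range N, dyadicKernel b j t) * (b ^ 2 + t ^ 2) := by
  have hδ0 := pos_of_mul_two_pow_eq_two hδ
  have hbδ : b * δ ≤ 1 / 12 := by nlinarith [le_one_eighth_of_mul_two_pow_eq_two hN hδ]
  have hexp : Real.exp (b * δ) ≤ 1.1 := by
    refine (Real.exp_le_exp.2 hbδ).trans ?_
    exact (Real.exp_bound_div_one_sub_of_interval (by norm_num) (by norm_num)).trans (by norm_num)
  suffices hsingle : ∃ j < N,
      ‖exp ((b + t * I) * δ) - 1‖ ≤ 4 * δ * dyadicKernel b j t * (b ^ 2 + t ^ 2) by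
    obtain ⟨j, hj, hle⟩ := hsingle
    refine hle.trans ?_
    gcongr
    exact Finset.single_le_sum (fun i _ ↦ dyadicKernel_nonneg hb' i t) (Finset.mem_range.2 hj)
  obtain ⟨J, rfl⟩ := Nat.exists_eq_add_one.2 (by lia : 0 < N)
  rcases le_total |t| (dyadicDistance b J) with ht | ht
  · obtain ⟨j, hj, hle⟩ := norm_exp_sub_one_le_of_abs_le_dyadicDistance hb hb' hδ0.le hexp ht
    exact ⟨j, by lia, hle⟩
  · refine ⟨J, J.lt_succ_self, norm_exp_sub_one_le_of_dyadicDistance_le_abs hb' hexp ?_ ht⟩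
    rw [dyadicDistance, mul_sub, hδ]
    linarith

lemma div_sq_add_sq_le_dyadicKernel_zero (hb : 1 / 2 ≤ b) (hb' : b ≤ 2 / 3) (t : ℝ) :
    b / (b ^ 2 + t ^ 2) ≤ 3 * dyadicKernel b 0 t := by
  have hz := four_thirds_le_dyadicDistance hb' 0
  have hz' : dyadicDistance b 0 ≤ 3 * b := by rw [dyadicDistance_zero]; linarith
  rw [dyadicKernel]
  set z := dyadicDistance b 0
  rw [← mul_div_assoc, div_le_div_iff₀ (by positivity) (by positivity)]
  nlinarith [mul_le_mul_of_nonneg_left hz' (by positivity : 0 ≤ b * z),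
    mul_nonneg (by linarith : 0 ≤ 3 * z - b) (sq_nonneg t)]

lemma abs_boundaryKernel_add_sub_le (hb : 1 / 2 ≤ b) (hb' : b ≤ 2 / 3) (t u : ℝ)
    (hN : 4 ≤ N) (hδ : δ * 2 ^ N = 2) :
    |boundaryKernel b t (u + δ) - boundaryKernel b t u| ≤
      δ * (4 * Real.exp (b * u) * (∑ j ∈ Finset.range N, dyadicKernel b j t) +
        3 * dyadicKernel b 0 t) := by
  have hb0 : 0 < b := by linarith
  have hδ0 := pos_of_mul_two_pow_eq_two hδ
  have hexp : exp ((b + t * I) * ((u + δ : ℝ) : ℂ)) / (b + t * I) ^ 2 -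
      exp ((b + t * I) * u) / (b + t * I) ^ 2 =
      exp ((b + t * I) * u) * ((exp ((b + t * I) * δ) - 1) / (b + t * I) ^ 2) := by
    rw [ofReal_add, mul_add, exp_add]
    ring
  have hnorm : ‖exp ((b + t * I) * u) * ((exp ((b + t * I) * δ) - 1) / (b + t * I) ^ 2)‖ ≤
      Real.exp (b * u) * (4 * δ * ∑ j ∈ Finset.range N, dyadicKernel b j t) := by
    rw [norm_mul, norm_div, norm_pow, norm_ofReal_add_ofReal_mul_I_sq, norm_exp_ofReal_add_mul]
    refine mul_le_mul_of_nonneg_left ((div_le_iff₀ (by positivity)).2 ?_) (Real.exp_nonneg _)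
    exact norm_exp_sub_one_le_sum_dyadicKernel hb hb' t hN hδ
  have hre := (abs_re_le_norm _).trans hnorm
  rw [← hexp, sub_re] at hre
  have hlinear := mul_le_mul_of_nonneg_left (div_sq_add_sq_le_dyadicKernel_zero hb hb' t) hδ0.le
  have hlinear' : |δ * (b / (b ^ 2 + t ^ 2))| ≤ δ * (3 * dyadicKernel b 0 t) := by
    rwa [abs_of_nonneg (by positivity)]
  rw [boundaryKernel_eq hb0, boundaryKernel_eq hb0]
  calc _ = |((exp ((b + t * I) * ((u + δ : ℝ) : ℂ)) / (b + t * I) ^ 2).re -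
        (exp ((b + t * I) * u) / (b + t * I) ^ 2).re) - δ * (b / (b ^ 2 + t ^ 2))| := by
        congr 1
        ring
    _ ≤ _ := (abs_sub _ _).trans (add_le_add hre hlinear')
    _ = _ := by ring

end DyadicKernel

section ShortIntervals

variable {b δ : ℝ} {N : ℕ}

lemma integrable_boundaryDensity_mul_dyadicKernel_of_RH (h : RH) (hb : 1 / 2 < b)
    (hb' : b ≤ 2 / 3) (j : ℕ) : Integrable fun t ↦ boundaryDensity b t * dyadicKernel b j t :=
  integrable_boundaryDensity_mul_div_of_RH h hb
    (by linarith [four_thirds_le_dyadicDistance hb' j])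

lemma integral_boundaryDensity_mul_dyadicKernel_le_of_RH (h : RH) (hb : 1 / 2 < b)
    (hb' : b ≤ 2 / 3) (j : ℕ) :
    ∫ t, boundaryDensity b t * dyadicKernel b j t ≤ Real.pi * ((1 / 2) ^ j + j / 2) := by
  have hz : 0 < dyadicDistance b j := by linarith [four_thirds_le_dyadicDistance hb' j]
  refine (integral_boundaryDensity_mul_div_of_RH h hb hz).trans_le ?_
  rw [dyadicDistance, add_sub_cancel]
  exact mul_le_mul_of_nonneg_left (re_logDeriv_xi_two_pow_le j) Real.pi_nonneg

lemma sum_one_half_pow_add_half_le (N : ℕ) :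
    ∑ j ∈ Finset.range N, ((1 / 2) ^ j + (j : ℝ) / 2) ≤ 2 + (N : ℝ) ^ 2 / 4 := by
  have hlinear : ∑ j ∈ Finset.range N, (j : ℝ) / 2 ≤ (N : ℝ) ^ 2 / 4 := by
    induction N with
    | zero => simp
    | succ N ih =>
      rw [Finset.sum_range_succ]
      push_cast
      linarith
  rw [Finset.sum_add_distrib]
  exact add_le_add (sum_geometric_two_le N) hlinear

lemma integral_boundaryDensity_mul_sum_dyadicKernel_le_of_RH (h : RH) (hb : 1 / 2 < b)
    (hb' : b ≤ 2 / 3) (N : ℕ) :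
    ∫ t, boundaryDensity b t * ∑ j ∈ Finset.range N, dyadicKernel b j t ≤
      Real.pi * (2 + (N : ℝ) ^ 2 / 4) := by
  simp only [Finset.mul_sum]
  rw [integral_finsetSum _
    fun j _ ↦ integrable_boundaryDensity_mul_dyadicKernel_of_RH h hb hb' j]
  refine (Finset.sum_le_sum
    fun j _ ↦ integral_boundaryDensity_mul_dyadicKernel_le_of_RH h hb hb' j).trans ?_
  rw [← Finset.mul_sum]
  exact mul_le_mul_of_nonneg_left (sum_one_half_pow_add_half_le N) Real.pi_nonneg

lemma integrable_boundaryDensity_mul_sum_dyadicKernel_of_RH (h : RH) (hb : 1 / 2 < b)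
    (hb' : b ≤ 2 / 3) (N : ℕ) :
    Integrable fun t ↦ boundaryDensity b t * ∑ j ∈ Finset.range N, dyadicKernel b j t := by
  simp only [Finset.mul_sum]
  exact integrable_finsetSum _
    fun j _ ↦ integrable_boundaryDensity_mul_dyadicKernel_of_RH h hb hb' j

lemma abs_integral_boundaryKernel_add_sub_le_of_RH (h : RH) (hb : 1 / 2 < b) (hb' : b ≤ 2 / 3)
    (u : ℝ) (hN : 4 ≤ N) (hδ : δ * 2 ^ N = 2) :
    |∫ t, boundaryDensity b t * boundaryKernel b t (u + δ) -
        boundaryDensity b t * boundaryKernel b t u| ≤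
      Real.pi * (δ * (4 * Real.exp (b * u) * (2 + (N : ℝ) ^ 2 / 4) + 3)) := by
  have hδ0 := pos_of_mul_two_pow_eq_two hδ
  have hsum := integrable_boundaryDensity_mul_sum_dyadicKernel_of_RH h hb hb' N
  have hzero := integrable_boundaryDensity_mul_dyadicKernel_of_RH h hb hb' 0
  have hpointwise (t : ℝ) : ‖boundaryDensity b t * boundaryKernel b t (u + δ) -
        boundaryDensity b t * boundaryKernel b t u‖ ≤
      δ * (4 * Real.exp (b * u) *
          (boundaryDensity b t * ∑ j ∈ Finset.range N, dyadicKernel b j t) +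
        3 * (boundaryDensity b t * dyadicKernel b 0 t)) := by
    have hg := boundaryDensity_nonneg_of_RH h hb t
    rw [← mul_sub, norm_mul, Real.norm_of_nonneg hg, Real.norm_eq_abs]
    refine (mul_le_mul_of_nonneg_left
      (abs_boundaryKernel_add_sub_le hb.le hb' t u hN hδ) hg).trans_eq ?_
    ring
  refine (norm_integral_le_of_norm_le (((hsum.const_mul _).add (hzero.const_mul 3)).const_mul δ)
    (.of_forall hpointwise)).trans ?_
  simp only [Pi.add_apply]
  rw [integral_const_mul, integral_add (hsum.const_mul _) (hzero.const_mul 3),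
    integral_const_mul, integral_const_mul]
  have hsum' := integral_boundaryDensity_mul_sum_dyadicKernel_le_of_RH h hb hb' N
  have hzero' := integral_boundaryDensity_mul_dyadicKernel_le_of_RH h hb hb' 0
  rw [pow_zero, Nat.cast_zero, zero_div, add_zero, mul_one] at hzero'
  calc _ ≤ δ * (4 * Real.exp (b * u) * (Real.pi * (2 + (N : ℝ) ^ 2 / 4)) + 3 * Real.pi) := by
        gcongr
    _ = _ := by ring

lemma abs_smoothedPsi_add_sub_le_mul_exp_of_RH (h : RH) (hb : 1 / 2 < b) (hb' : b ≤ 2 / 3) {u : ℝ}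
    (hu : 1 ≤ u) (hN : 4 ≤ N) (hδ : δ * 2 ^ N = 2) :
    |smoothedPsi (u + δ) - smoothedPsi u - Real.exp u * (Real.exp δ - 1)| ≤
      δ * (4 * Real.exp (b * u) * (2 + (N : ℝ) ^ 2 / 4) + 6) := by
  have hδ0 := pos_of_mul_two_pow_eq_two hδ
  have hu0 : 0 ≤ u := by linarith
  have huδ : 0 ≤ u + δ := by linarith
  have hboundary : |1 / Real.pi * (∫ t, boundaryDensity b t * boundaryKernel b t (u + δ)) -
      1 / Real.pi * ∫ t, boundaryDensity b t * boundaryKernel b t u| ≤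
      δ * (4 * Real.exp (b * u) * (2 + (N : ℝ) ^ 2 / 4) + 3) := by
    rw [← mul_sub, ← integral_sub
      (integrable_boundaryDensity_mul_boundaryKernel_of_RH h hb huδ)
      (integrable_boundaryDensity_mul_boundaryKernel_of_RH h hb hu0), abs_mul,
      abs_of_pos (by positivity), one_div_mul_eq_div, div_le_iff₀' Real.pi_pos]
    exact abs_integral_boundaryKernel_add_sub_le_of_RH h hb hb' u hN hδ
  obtain ⟨htrivial, htrivial'⟩ := trivialZeroCorrection_sub_mem_Icc hu hδ0.le
  obtain ⟨hconst, hconst'⟩ := xiLogDerivConst_mem_Icc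
  have hconstδ := mul_le_mul_of_nonneg_right hconst hδ0.le
  have hconstδ' := mul_le_mul_of_nonneg_right hconst' hδ0.le
  rw [smoothedPsi_eq_of_RH h hb hu0, smoothedPsi_eq_of_RH h hb huδ, Real.exp_add]
  rw [abs_le] at hboundary ⊢
  constructor <;> linarith [hboundary.1, hboundary.2]

lemma abs_smoothedPsi_add_sub_le_of_RH (h : RH) {u : ℝ} (hu : 1 ≤ u) (hN : 4 ≤ N)
    (hδ : δ * 2 ^ N = 2) :
    |smoothedPsi (u + δ) - smoothedPsi u - Real.exp u * (Real.exp δ - 1)| ≤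
      δ * (4 * Real.exp (u / 2) * (2 + (N : ℝ) ^ 2 / 4) + 6) := by
  have hcont : Continuous fun b ↦ δ * (4 * Real.exp (b * u) * (2 + (N : ℝ) ^ 2 / 4) + 6) := by
    fun_prop
  have hlim := (hcont.tendsto (1 / 2)).mono_left (nhdsWithin_le_nhds (s := Set.Ioi (1 / 2)))
  rw [one_div_mul_eq_div] at hlim
  refine ge_of_tendsto hlim ?_
  filter_upwards [Ioc_mem_nhdsGT (by norm_num : (1 / 2 : ℝ) < 2 / 3)] with b hb
  exact abs_smoothedPsi_add_sub_le_mul_exp_of_RH h hb.1 hb.2 hu hN hδ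

/-- The smoothed estimate is used on both sides of `L`: monotonicity of `ψ` bounds `ψ (exp L)`
above by the increment over `[L, L + δ]` and below by the one over `[L - δ, L]`. -/
lemma abs_psi_exp_sub_exp_le {L δ B : ℝ} (hδ : 0 < δ) (hδ' : δ ≤ 1)
    (hleft : |smoothedPsi L - smoothedPsi (L - δ) - Real.exp L * (1 - Real.exp (-δ))| ≤ δ * B)
    (hright : |smoothedPsi (L + δ) - smoothedPsi L - Real.exp L * (Real.exp δ - 1)| ≤ δ * B) :
    |Chebyshev.psi (Real.exp L) - Real.exp L| ≤ B + δ * Real.exp L := by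
  have hexp := (abs_le.1 (Real.abs_exp_sub_one_sub_id_le (x := δ) (by rwa [abs_of_pos hδ]))).2
  have hexp' := (abs_le.1 (Real.abs_exp_sub_one_sub_id_le (x := -δ)
    (by rwa [abs_neg, abs_of_pos hδ]))).2
  have hupper := mul_psi_exp_le_smoothedPsi_sub L hδ.le
  have hlower := smoothedPsi_sub_le_mul_psi_exp (L - δ) hδ.le
  rw [sub_add_cancel] at hlower
  have hx := Real.exp_nonneg L
  rw [abs_le] at hleft hright ⊢
  constructor <;> refine le_of_mul_le_mul_left ?_ hδ
  · nlinarith [mul_le_mul_of_nonneg_left hexp' hx]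
  · nlinarith [mul_le_mul_of_nonneg_left hexp hx]

end ShortIntervals

lemma six_le_log {x : ℝ} (hx : 600 ≤ x) : 6 ≤ Real.log x := by
  rw [Real.le_log_iff_exp_le (by linarith)]
  calc Real.exp 6 = Real.exp 1 ^ 6 := by rw [← Real.exp_nat_mul]; norm_num
    _ ≤ 2.7182818286 ^ 6 := by gcongr; exact Real.exp_one_lt_d9.le
    _ ≤ x := by linarith

lemma twenty_four_le_sqrt {x : ℝ} (hx : 600 ≤ x) : 24 ≤ √x := Real.le_sqrt_of_sq_le (by linarith)

lemma natCast_sq_le_log_sq {x : ℝ} (hx : 1 ≤ x) {N : ℕ} (hN : 2 ^ N ≤ √x) :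
    (N : ℝ) ^ 2 ≤ 0.521 * Real.log x ^ 2 := by
  have hlog := Real.log_le_log (by positivity) hN
  rw [Real.log_pow, Real.log_sqrt (by linarith)] at hlog
  have hle : (N : ℝ) * 0.693 ≤ Real.log x / 2 :=
    (mul_le_mul_of_nonneg_left (by linarith [Real.log_two_gt_d9]) N.cast_nonneg).trans hlog
  nlinarith [mul_self_le_mul_self (by positivity) hle]

lemma exists_dyadic_scale {x : ℝ} (hx : 600 ≤ x) :
    ∃ N : ℕ, 4 ≤ N ∧ 2 ^ N ≤ √x ∧ √x < 2 ^ (N + 1) := by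
  have hsqrt := twenty_four_le_sqrt hx
  obtain ⟨N, hle, hlt⟩ := exists_nat_pow_near (by linarith : 1 ≤ √x) one_lt_two
  refine ⟨N, ?_, hle, hlt⟩
  by_contra! hN
  have hpow : (2 : ℝ) ^ (N + 1) ≤ 2 ^ 4 := pow_le_pow_right₀ one_le_two hN
  linarith

theorem abs_psi_sub_self_lt_of_RH (h : RH) {x : ℝ} (hx : 600 ≤ x) :
    |Chebyshev.psi x - x| < √x * Real.log x ^ 2 := by
  obtain ⟨N, hN, hle, hlt⟩ := exists_dyadic_scale hx
  have hNlog := natCast_sq_le_log_sq (by linarith) hle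
  have hlog := six_le_log hx
  have hsqrt := twenty_four_le_sqrt hx
  have hx0 : 0 < x := by linarith
  set L := Real.log x
  have hexpL : Real.exp L = x := Real.exp_log hx0
  have hexpL' : Real.exp (L / 2) = √x := by rw [Real.exp_half, hexpL]
  set δ : ℝ := 2 / 2 ^ N with hδdef
  have hδ : δ * 2 ^ N = 2 := div_mul_cancel₀ _ (by positivity)
  have hδ0 := pos_of_mul_two_pow_eq_two hδ
  have hδ8 := le_one_eighth_of_mul_two_pow_eq_two hN hδ
  set B := 4 * √x * (2 + (N : ℝ) ^ 2 / 4) + 6 with hB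
  have hright := abs_smoothedPsi_add_sub_le_of_RH h (by linarith : 1 ≤ L) hN hδ
  have hleft := abs_smoothedPsi_add_sub_le_of_RH h (by linarith : 1 ≤ L - δ) hN hδ
  have hshift : Real.exp (L - δ) * (Real.exp δ - 1) = Real.exp L * (1 - Real.exp (-δ)) := by
    rw [mul_sub, ← Real.exp_add, sub_add_cancel, mul_sub, ← Real.exp_add, mul_one, mul_one,
      sub_eq_add_neg L]
  have hmono : Real.exp ((L - δ) / 2) ≤ √x := hexpL' ▸ Real.exp_le_exp.2 (by linarith)
  rw [sub_add_cancel, hshift] at hleft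
  rw [hexpL'] at hright
  have hpsi := abs_psi_exp_sub_exp_le (B := B) hδ0 (by linarith)
    (hleft.trans (by rw [hB]; gcongr)) hright
  rw [hexpL] at hpsi
  have hδx : δ * x ≤ 4 * √x := by
    rw [pow_succ] at hlt
    have hδsqrt : δ * √x ≤ 4 := by
      rw [hδdef, div_mul_eq_mul_div, div_le_iff₀ (by positivity)]
      linarith
    calc δ * x = δ * √x * √x := by rw [mul_assoc, Real.mul_self_sqrt hx0.le]
      _ ≤ 4 * √x := by gcongr
  have hconst : 4 * (2 + (N : ℝ) ^ 2 / 4) + 5 ≤ L ^ 2 := by nlinarith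
  calc |Chebyshev.psi x - x| ≤ B + δ * x := hpsi
    _ < √x * (4 * (2 + (N : ℝ) ^ 2 / 4) + 5) := by rw [hB]; linarith
    _ ≤ √x * L ^ 2 := by gcongr

/-! ### From the error term in the prime number theorem to the Riemann hypothesis -/

lemma ne_zero_of_deriv_eventuallyEq_mul {f K : ℂ → ℂ} {U : Set ℂ} {a z : ℂ} (hU : IsOpen U)
    (hU' : IsPreconnected U) (hf : DifferentiableOn ℂ f U) (hK : DifferentiableOn ℂ K U)
    (ha : a ∈ U) (hderiv : deriv f =ᶠ[𝓝 a] fun s ↦ K s * f s) (hfa : f a ≠ 0) (hz : z ∈ U) :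
    f z ≠ 0 := by
  intro hfz
  have hf' := hf.analyticOnNhd hU
  have heq : Set.EqOn (deriv f) (fun s ↦ K s * f s) U :=
    hf'.deriv.eqOn_of_preconnected_of_eventuallyEq ((hK.mul hf).analyticOnNhd hU) hU' ha hderiv
  have horder : analyticOrderAt f z + 1 ≤ analyticOrderAt f z := by
    calc analyticOrderAt f z + 1
        ≤ analyticOrderAt K z + analyticOrderAt f z + 1 := by gcongr; exact le_add_self
      _ = analyticOrderAt (deriv f) z + 1 := by
        rw [← analyticOrderAt_mul (hK.analyticAt (hU.mem_nhds hz)) (hf' z hz)]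
        exact congrArg (· + 1) (analyticOrderAt_congr (heq.symm.eventuallyEq_of_mem
          (hU.mem_nhds hz)))
      _ = analyticOrderAt f z := by
        simpa only [hfz, sub_zero] using (hf' z hz).analyticOrderAt_deriv_add_one
  have htop : analyticOrderAt f z = ⊤ := by
    by_contra hne
    exact absurd (ENat.add_one_le_iff hne |>.1 horder) (lt_irrefl _)
  exact hfa (hf'.eqOn_zero_of_preconnected_of_eventuallyEq_zero hU' hz
    (analyticOrderAt_eq_top.1 htop) ha)

lemma RH_of_xi_ne_zero (h : ∀ s : ℂ, 1 / 2 < s.re → xi s ≠ 0) : RH := by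
  intro s hζ h0 h1
  have hs1 : s ≠ 1 := by
    rintro rfl
    simp at h1
  have hxi : xi s = 0 := by
    rw [xi_eq_mul_Gammaℝ_mul_riemannZeta h0 hs1, hζ]
    ring
  rcases lt_trichotomy s.re (1 / 2) with hs | hs | hs
  · refine absurd ((xi_one_sub s).trans hxi) (h (1 - s) ?_)
    rw [sub_re, one_re]
    linarith
  · exact hs
  · exact absurd hxi (h s hs)

/-- The error term `ψ(t) - t` of the prime number theorem, cut off to `t > 1` so that its Mellin
transform converges at the origin. -/
noncomputable def psiError : ℝ → ℂ :=
  Set.indicator (Set.Ioi 1) fun t ↦ ((Chebyshev.psi t - t : ℝ) : ℂ)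

/-- The integral of `ψ(t) - t` against `t ^ (-s - 1)` over `t > 1`. -/
noncomputable def psiErrorMellin (s : ℂ) : ℂ := mellin psiError (-s)

lemma locallyIntegrable_psiError : LocallyIntegrable psiError := by
  have hreal : LocallyIntegrable fun t : ℝ ↦ Chebyshev.psi t - t :=
    Chebyshev.psi_mono.locallyIntegrable.sub continuous_id.locallyIntegrable
  refine LocallyIntegrable.indicator (fun x ↦ ?_) measurableSet_Ioi
  obtain ⟨u, hu, hint⟩ := hreal x
  exact ⟨u, hu, hint.ofReal⟩

lemma psiError_isBigO_nhdsGT_zero (b : ℝ) : psiError =O[𝓝[>] 0] fun t : ℝ ↦ t ^ b := by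
  have hzero : psiError =ᶠ[𝓝[>] 0] 0 := by
    filter_upwards [mem_nhdsWithin_of_mem_nhds (Iio_mem_nhds one_pos)] with t ht
    exact Set.indicator_of_notMem (Set.notMem_Ioi.2 (le_of_lt ht)) _
  exact hzero.trans_isBigO (Asymptotics.isBigO_zero _ _)

section MellinTransform

variable {θ : ℝ} {s : ℂ} (hψ : (fun t ↦ Chebyshev.psi t - t) =O[atTop] fun t ↦ t ^ θ)

include hψ

lemma psiError_isBigO_atTop : psiError =O[atTop] fun t : ℝ ↦ t ^ (-(-θ)) := by
  rw [neg_neg]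
  refine (EventuallyEq.isBigO ?_).trans (isBigO_ofReal_left.2 hψ)
  filter_upwards [eventually_gt_atTop 1] with t ht
  exact Set.indicator_of_mem ht _

lemma mellinConvergent_psiError (hs : θ < s.re) : MellinConvergent psiError (-s) :=
  mellinConvergent_of_isBigO_rpow (locallyIntegrable_psiError.locallyIntegrableOn _)
    (psiError_isBigO_atTop hψ) (neg_lt_neg hs) (psiError_isBigO_nhdsGT_zero _) (sub_one_lt _)

lemma differentiableAt_psiErrorMellin (hs : θ < s.re) : DifferentiableAt ℂ psiErrorMellin s :=
  (mellin_differentiableAt_of_isBigO_rpow (locallyIntegrable_psiError.locallyIntegrableOn _)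
    (psiError_isBigO_atTop hψ) (neg_lt_neg hs) (psiError_isBigO_nhdsGT_zero _)
    (sub_one_lt _)).comp s differentiableAt_id.neg

lemma integral_psi_mul_cpow (hs : 1 < s.re) (hs' : θ < s.re) :
    ∫ t in Set.Ioi (1 : ℝ), (Chebyshev.psi t : ℂ) * (t : ℂ) ^ (-(s + 1)) =
      psiErrorMellin s + 1 / (s - 1) := by
  have hre : (-s).re < -1 := neg_lt_neg hs
  have herror : psiErrorMellin s = ∫ t in Set.Ioi (1 : ℝ), (t : ℂ) ^ (-s - 1) • psiError t := by
    refine setIntegral_eq_of_subset_of_forall_sdiff_eq_zero measurableSet_Ioi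
      (Set.Ioi_subset_Ioi zero_le_one) fun t ht ↦ ?_
    rw [psiError, Set.indicator_of_notMem ht.2, smul_zero]
  have hmain : 1 / (s - 1) = ∫ t in Set.Ioi (1 : ℝ), (t : ℂ) ^ (-s) := by
    rw [integral_Ioi_cpow_of_lt hre one_pos, ofReal_one, one_cpow, neg_div, ← div_neg, neg_add,
      neg_neg, ← sub_eq_add_neg]
  rw [herror, hmain, ← integral_add
    ((mellinConvergent_psiError hψ hs').mono_set (Set.Ioi_subset_Ioi zero_le_one))
    (integrableOn_Ioi_cpow_of_lt hre one_pos)]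
  refine setIntegral_congr_fun measurableSet_Ioi fun t ht ↦ ?_
  have ht0 : (t : ℂ) ≠ 0 := ofReal_ne_zero.2 (one_pos.trans ht).ne'
  have hpow : (t : ℂ) ^ (-s) = (t : ℂ) ^ (-s - 1) * t := by
    rw [cpow_sub _ _ ht0, cpow_one, div_mul_cancel₀ _ ht0]
  simp only [psiError, Set.indicator_of_mem ht, smul_eq_mul, hpow, neg_add', ofReal_sub]
  ring

lemma deriv_riemannZeta_div_eq_psiErrorMellin (hs : 1 < s.re) (hs' : θ < s.re) :
    deriv riemannZeta s / riemannZeta s = -(s * psiErrorMellin s + s / (s - 1)) := by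
  have hpsi (t : ℝ) : ∑ k ∈ Finset.Icc 1 ⌊t⌋₊, (ArithmeticFunction.vonMangoldt k : ℂ) =
      Chebyshev.psi t := by
    rw [Chebyshev.psi, ofReal_sum]
    rfl
  have hbound : (fun n : ℕ ↦ ∑ k ∈ Finset.Icc 1 n, ArithmeticFunction.vonMangoldt k) =O[atTop]
      fun n : ℕ ↦ (n : ℝ) ^ (1 : ℝ) := by
    refine .of_bound (Real.log 4 + 4) (.of_forall fun n ↦ ?_)
    have hle := Chebyshev.psi_le_const_mul_self (x := (n : ℝ)) n.cast_nonneg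
    rwa [← Real.norm_of_nonneg (Chebyshev.psi_nonneg _), Chebyshev.psi, Nat.floor_natCast,
      ← Real.norm_of_nonneg (n.cast_nonneg : (0 : ℝ) ≤ n), ← Real.rpow_one (n : ℝ)] at hle
  have hintegral := LSeries_eq_mul_integral_of_nonneg
    (fun n ↦ ArithmeticFunction.vonMangoldt n) zero_le_one hs hbound
    (fun n ↦ ArithmeticFunction.vonMangoldt_nonneg)
  rw [ArithmeticFunction.LSeries_vonMangoldt_eq_deriv_riemannZeta_div hs] at hintegral
  simp only [hpsi, integral_psi_mul_cpow hψ hs hs'] at hintegral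
  linear_combination -hintegral

theorem xi_ne_zero_of_psi_sub_self_isBigO (hθ : 0 ≤ θ) (hs : θ < s.re) : xi s ≠ 0 := by
  let K : ℂ → ℂ := fun w ↦ xiLogDerivConst + trivialZeroSum w - w * psiErrorMellin w - 1
  have hK : DifferentiableOn ℂ K {w | θ < w.re} := fun w hw ↦
    (((differentiableAt_trivialZeroSum (hθ.trans_lt hw)).const_add _).sub (differentiableAt_id.mul
      (differentiableAt_psiErrorMellin hψ hw)) |>.sub_const 1).differentiableWithinAt
  have hderiv (w : ℂ) (hw : 1 < w.re) (hw' : θ < w.re) : deriv xi w = K w * xi w := by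
    have hw1 : w - 1 ≠ 0 := ne_zero_of_re_pos (by rw [sub_re, one_re]; linarith)
    rw [(hasDerivAt_xi (xi_ne_zero_of_one_lt_re hw)).deriv, logDeriv_xi_eq hw,
      deriv_riemannZeta_div_eq_psiErrorMellin hψ hw hw']
    simp only [K]
    field_simp
    ring
  have hbase : θ + 1 < ((θ + 2 : ℝ) : ℂ).re := by rw [ofReal_re]; linarith
  refine ne_zero_of_deriv_eventuallyEq_mul (a := (θ + 2 : ℝ))
    (isOpen_lt continuous_const continuous_re) (convex_halfSpace_re_gt θ).isPreconnected
    differentiable_xi.differentiableOn hK ((lt_add_one θ).trans hbase) ?_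
    (xi_ne_zero_of_one_lt_re (by linarith)) hs
  filter_upwards [(isOpen_lt continuous_const continuous_re).mem_nhds hbase] with w hw
  change θ + 1 < w.re at hw
  exact hderiv w (by linarith) (by linarith)

end MellinTransform

lemma abs_psi_sub_self_le_of_natCast {t : ℝ} (ht : 1 ≤ t)
    (h : |Chebyshev.psi ⌊t⌋₊ - ⌊t⌋₊| ≤ 1 + 2 * √⌊t⌋₊ * Real.log ⌊t⌋₊ ^ 2) :
    |Chebyshev.psi t - t| ≤ 2 + 2 * √t * Real.log t ^ 2 := by
  have hfloor : (⌊t⌋₊ : ℝ) ≤ t := Nat.floor_le (by linarith)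
  have hfloor' : t < ⌊t⌋₊ + 1 := Nat.lt_floor_add_one t
  have hone : (1 : ℝ) ≤ ⌊t⌋₊ := by exact_mod_cast Nat.le_floor (by exact_mod_cast ht)
  have hmono : 2 * √⌊t⌋₊ * Real.log ⌊t⌋₊ ^ 2 ≤ 2 * √t * Real.log t ^ 2 := by
    have := Real.log_nonneg hone
    gcongr
  rw [← Chebyshev.psi_eq_psi_coe_floor] at h
  rw [abs_le] at h ⊢
  constructor <;> linarith

lemma sqrt_mul_log_sq_le_mul_rpow {t ε : ℝ} (ht : 1 ≤ t) (hε : 0 < ε) :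
    √t * Real.log t ^ 2 ≤ 1 / ε ^ 2 * t ^ (1 / 2 + 2 * ε) := by
  have hlog := Real.log_le_rpow_div (by linarith : 0 ≤ t) hε
  have hlog0 := Real.log_nonneg ht
  calc √t * Real.log t ^ 2 ≤ √t * (t ^ ε / ε) ^ 2 := by gcongr
    _ = 1 / ε ^ 2 * (t ^ (1 / 2 : ℝ) * t ^ (ε * 2)) := by
      rw [Real.sqrt_eq_rpow, Real.rpow_mul (by linarith), Real.rpow_two]
      ring
    _ = 1 / ε ^ 2 * t ^ (1 / 2 + 2 * ε) := by rw [← Real.rpow_add (by linarith), mul_comm ε]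

theorem RH_of_abs_psi_natCast_sub_le (h : ∀ᶠ n : ℕ in atTop,
    |Chebyshev.psi n - n| ≤ 1 + 2 * √n * Real.log n ^ 2) : RH := by
  refine RH_of_xi_ne_zero fun s hs ↦ ?_
  obtain ⟨θ, hθ, hθs⟩ := exists_between hs
  refine xi_ne_zero_of_psi_sub_self_isBigO ?_ (by linarith) hθs
  have hε : 0 < (θ - 1 / 2) / 2 := by linarith
  refine .of_bound (2 + 2 * (1 / ((θ - 1 / 2) / 2) ^ 2)) ?_
  filter_upwards [tendsto_nat_floor_atTop.eventually h, eventually_ge_atTop 1] with t hfloor ht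
  have hpow := sqrt_mul_log_sq_le_mul_rpow ht hε
  rw [mul_div_cancel₀ _ two_ne_zero, add_sub_cancel] at hpow
  have hone : 1 ≤ t ^ θ := Real.one_le_rpow ht (by linarith)
  rw [Real.norm_eq_abs, Real.norm_of_nonneg (by positivity)]
  linarith [abs_psi_sub_self_le_of_natCast ht hfloor]

/-! ### The exponential condition -/

lemma explog_iff_log_mem_Ico {a b : ℕ} :
    explog a b ↔ ∃ x : ℕ, b + 1 < x ∧ Real.log (a + 1) ∈
      Set.Ico (b * (x * Real.log (1 + 1 / x))) (Real.log 4 + b * (x * Real.log (1 + 1 / x))) := by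
  refine exists_congr fun x ↦ and_congr_right fun _ ↦ ?_
  have hpow : (1 + 1 / (x : ℝ)) ^ (x * b) = Real.exp (b * (x * Real.log (1 + 1 / x))) := by
    rw [← mul_assoc, mul_comm (b : ℝ), ← Nat.cast_mul, Real.exp_nat_mul,
      Real.exp_log (by positivity)]
  have ha : (0 : ℝ) < a + 1 := a.cast_add_one_pos
  rw [Set.mem_Ico, hpow, Real.le_log_iff_exp_le ha, Real.log_lt_iff_lt_exp ha, Real.exp_add,
    Real.exp_log four_pos]

lemma mul_log_one_add_one_div_le {x : ℝ} (hx : 0 < x) : x * Real.log (1 + 1 / x) ≤ 1 := by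
  rw [← le_div_iff₀' hx]
  linarith [Real.log_le_sub_one_of_pos (by positivity : 0 < 1 + 1 / x)]

lemma div_add_one_le_mul_log_one_add_one_div {x : ℝ} (hx : 0 < x) :
    x / (x + 1) ≤ x * Real.log (1 + 1 / x) := by
  have hinv : 1 - (1 + 1 / x)⁻¹ = 1 / (x + 1) := by
    field_simp
    ring
  rw [div_eq_mul_one_div, ← hinv]
  exact mul_le_mul_of_nonneg_left (Real.one_sub_inv_le_log_of_pos (by positivity)) hx.le

lemma log_add_one_mem_Ioo_of_explog {a b : ℕ} (h : explog a b) :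
    Real.log (a + 1) ∈ Set.Ioo (b - 1 : ℝ) (b + Real.log 4) := by
  obtain ⟨x, hx, hlower, hupper⟩ := explog_iff_log_mem_Ico.1 h
  have hb : (0 : ℝ) ≤ b := b.cast_nonneg
  have hbx : (b : ℝ) + 1 < x := by exact_mod_cast hx
  have hx0 : (0 : ℝ) < x := by linarith
  have hle := mul_le_mul_of_nonneg_left (mul_log_one_add_one_div_le hx0) hb
  have hge := mul_le_mul_of_nonneg_left (div_add_one_le_mul_log_one_add_one_div hx0) hb
  have hdiv : (b - 1 : ℝ) < b * (x / (x + 1)) := by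
    rw [← mul_div_assoc, lt_div_iff₀ (by linarith)]
    linarith
  constructor <;> linarith

lemma log_four_mem_Ioo : Real.log 4 ∈ Set.Ioo (1.386 : ℝ) 1.387 := by
  rw [Real.log_four_eq]
  constructor <;> linarith [Real.log_two_gt_d9, Real.log_two_lt_d9]

lemma explog_floor_log (a : ℕ) : explog a ⌊Real.log (a + 1)⌋₊ := by
  have hlog : 0 ≤ Real.log (a + 1) := Real.log_nonneg (by linarith [a.cast_nonneg (α := ℝ)])
  have hfloor := Nat.floor_le hlog
  have hfloor' := Nat.lt_floor_add_one (Real.log (a + 1))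
  set b := ⌊Real.log (a + 1)⌋₊
  have hb : (0 : ℝ) ≤ b := b.cast_nonneg
  -- `x = 3b + 2` makes `b * (x / (x + 1))` at least `b - 1 / 3`, and `4 / 3 < log 4`.
  refine explog_iff_log_mem_Ico.2 ⟨3 * b + 2, by lia, ?_⟩
  have hx0 : (0 : ℝ) < (3 * b + 2 : ℕ) := by positivity
  have hle := mul_le_mul_of_nonneg_left (mul_log_one_add_one_div_le hx0) hb
  have hge := mul_le_mul_of_nonneg_left (div_add_one_le_mul_log_one_add_one_div hx0) hb
  have hdiv : (b - 1 / 3 : ℝ) ≤ b * ((3 * b + 2 : ℕ) / ((3 * b + 2 : ℕ) + 1)) := by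
    rw [← mul_div_assoc, le_div_iff₀ (by linarith)]
    push_cast
    linarith
  constructor <;> linarith [log_four_mem_Ioo.1]

lemma log_mem_Ioo_of_explog_pred {m b : ℕ} (hm : 0 < m) (h : explog (m - 1) b) :
    Real.log m ∈ Set.Ioo (b - 1 : ℝ) (b + Real.log 4) := by
  simpa only [Nat.cast_pred hm, sub_add_cancel] using log_add_one_mem_Ioo_of_explog h

lemma explog_pred_floor_log {m : ℕ} (hm : 0 < m) : explog (m - 1) ⌊Real.log m⌋₊ := by
  simpa only [Nat.cast_pred hm, sub_add_cancel] using explog_floor_log (m - 1)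

/-! ### The least common multiple condition -/

lemma forall_add_one_dvd_iff_lcmUpto_dvd {m n : ℕ} :
    (∀ y < n, y + 1 ∣ m) ↔ Nat.lcmUpto n ∣ m := by
  refine ⟨fun h ↦ Finset.lcm_dvd fun y hy ↦ ?_, fun h y hy ↦ ?_⟩
  · obtain ⟨hy1, hyn⟩ := Finset.mem_Icc.1 hy
    have hdvd := h (y - 1) (by lia)
    rwa [Nat.sub_add_cancel hy1] at hdvd
  · exact (Finset.dvd_lcm (f := id) (Finset.mem_Icc.2 ⟨by lia, by lia⟩)).trans h

lemma eq_lcmUpto_iff {m n : ℕ} (hm : 0 < m) : m = Nat.lcmUpto n ↔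
    (∀ y < n, y + 1 ∣ m) ∧ ∀ y < m, y = 0 ∨ ∃ x < n, ¬(x + 1) ∣ y := by
  have hmin (y : ℕ) : (y = 0 ∨ ∃ x < n, ¬(x + 1) ∣ y) ↔ ¬(0 < y ∧ Nat.lcmUpto n ∣ y) := by
    rw [← forall_add_one_dvd_iff_lcmUpto_dvd]
    push Not
    rw [Nat.pos_iff_ne_zero, ← or_iff_not_imp_left]
  simp only [hmin, forall_add_one_dvd_iff_lcmUpto_dvd]
  constructor
  · rintro rfl
    exact ⟨dvd_rfl, fun y hy hdvd ↦ (Nat.le_of_dvd hdvd.1 hdvd.2).not_gt hy⟩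
  · rintro ⟨hdvd, hleast⟩
    exact ((Nat.le_of_dvd hm hdvd).eq_of_not_lt
      fun hlt ↦ hleast _ hlt ⟨Nat.lcmUpto_pos n, dvd_rfl⟩).symm

lemma le_lcmUpto (n : ℕ) : n ≤ Nat.lcmUpto n := by
  rcases Nat.eq_zero_or_pos n with rfl | hn
  · exact Nat.zero_le _
  · exact Nat.le_of_dvd (Nat.lcmUpto_pos n)
      (Finset.dvd_lcm (f := id) (Finset.mem_Icc.2 ⟨hn, le_rfl⟩))

lemma log_natCast_le_psi (n : ℕ) : Real.log n ≤ Chebyshev.psi n := by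
  rcases Nat.eq_zero_or_pos n with rfl | hn
  · simp
  · rw [Chebyshev.psi_eq_log_lcmUpto]
    exact Real.log_le_log (Nat.cast_pos.2 hn) (Nat.cast_le.2 (le_lcmUpto n))

/-! ### The integer inequality -/

lemma sub_sq_le_iff_abs_sub_le {k l n : ℕ} :
    ((l : ℤ) - n) ^ 2 ≤ 4 * n * k ^ 4 ↔ |(l : ℝ) - n| ≤ 2 * √n * (k : ℝ) ^ 2 := by
  rw [← abs_of_nonneg (by positivity : (0 : ℝ) ≤ 2 * √n * (k : ℝ) ^ 2), ← sq_le_sq, mul_pow,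
    mul_pow, Real.sq_sqrt n.cast_nonneg, ← pow_mul,
    (by norm_num : (2 : ℝ) ^ 2 = 4)]
  exact_mod_cast Iff.rfl

lemma abs_psi_sub_self_le_of_floor {n : ℕ} (h : ((⌊Chebyshev.psi n⌋₊ : ℤ) - n) ^ 2 ≤
    4 * n * (⌊Real.log n⌋₊ : ℤ) ^ 4) :
    |Chebyshev.psi n - n| ≤ 1 + 2 * √n * Real.log n ^ 2 := by
  have hk := Nat.floor_le (Real.log_natCast_nonneg n)
  have hl := Nat.floor_le (Chebyshev.psi_nonneg n)
  have hl' := Nat.lt_floor_add_one (Chebyshev.psi n)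
  have hle : |(⌊Chebyshev.psi n⌋₊ : ℝ) - n| ≤ 2 * √n * Real.log n ^ 2 :=
    (sub_sq_le_iff_abs_sub_le.1 h).trans (by gcongr)
  rw [abs_le] at hle ⊢
  constructor <;> linarith

lemma sub_sq_le_of_RH (h : RH) {k l n : ℕ} (hn : 600 ≤ n)
    (hk : Real.log n < k + Real.log 4)
    (hl : Chebyshev.psi n ∈ Set.Ioo (l - 1 : ℝ) (l + Real.log 4)) :
    ((l : ℤ) - n) ^ 2 ≤ 4 * n * k ^ 4 := by
  have hn' : (600 : ℝ) ≤ n := by exact_mod_cast hn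
  have hlog := six_le_log hn'
  have hpsi := abs_psi_sub_self_lt_of_RH h hn'
  obtain ⟨-, hlog4⟩ := log_four_mem_Ioo
  obtain ⟨hl, hl'⟩ := hl
  have hksq : (Real.log n - 1.387) ^ 2 ≤ (k : ℝ) ^ 2 :=
    pow_le_pow_left₀ (by linarith) (by linarith) 2
  have hgap : Real.log n ^ 2 + 1 / 10 ≤ 2 * (k : ℝ) ^ 2 := by nlinarith
  have hsqrt : √n * Real.log n ^ 2 + 1.387 ≤ 2 * √n * (k : ℝ) ^ 2 := by
    have := mul_le_mul_of_nonneg_left hgap (Real.sqrt_nonneg n)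
    linarith [twenty_four_le_sqrt hn']
  rw [sub_sq_le_iff_abs_sub_le]
  rw [abs_lt] at hpsi
  rw [abs_le]
  constructor <;> linarith

theorem not_rh_iff_diophantine_conditions :
    ¬RH ↔ ∃ k l m n : ℕ,
      0 < k ∧ 0 < l ∧ 0 < m ∧ 0 < n ∧
      600 ≤ n ∧
      (∀ y < n, (y + 1) ∣ m) ∧
      (0 < m ∧ ∀ y < m, y = 0 ∨ ∃ x < n, ¬(x + 1) ∣ y) ∧
      explog (m - 1) l ∧
      explog (n - 1) k ∧
      ((l : ℤ) - (n : ℤ)) ^ 2 > 4 * (n : ℤ) * (k : ℤ) ^ 4 := by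
  constructor
  · intro hRH
    by_contra hnone
    refine hRH (RH_of_abs_psi_natCast_sub_le (eventually_atTop.2 ⟨600, fun n hn ↦
      abs_psi_sub_self_le_of_floor (not_lt.1 fun hlarge ↦ hnone ?_)⟩))
    have hm := Nat.lcmUpto_pos n
    obtain ⟨hdvd, hleast⟩ := (eq_lcmUpto_iff hm).1 rfl
    have hlog : 1 ≤ Real.log n := by linarith [six_le_log (x := n) (by exact_mod_cast hn)]
    have hl := explog_pred_floor_log hm
    rw [← Chebyshev.psi_eq_log_lcmUpto] at hl
    exact ⟨_, _, Nat.lcmUpto n, n, Nat.floor_pos.2 hlog,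
      Nat.floor_pos.2 (hlog.trans (log_natCast_le_psi n)), hm, by lia, hn, hdvd, ⟨hm, hleast⟩,
      hl, explog_pred_floor_log (by lia), hlarge⟩
  · rintro ⟨k, l, m, n, -, -, hm, hn, hn600, hdvd, ⟨-, hleast⟩, hl, hk, hlarge⟩ hRH
    obtain rfl := (eq_lcmUpto_iff hm).2 ⟨hdvd, hleast⟩
    have hl := log_mem_Ioo_of_explog_pred hm hl
    rw [← Chebyshev.psi_eq_log_lcmUpto] at hl
    exact hlarge.not_ge (sub_sq_le_of_RH hRH hn600 (log_mem_Ioo_of_explog_pred hn hk).2 hl)
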